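/- Let X ⊆ (ℂ^n,0) be a germ of an analytic variety and let f ∈ m^3 be a holomorphic function germ with μ_X(f) < ∞. If μ_X(f) = τ_X(f), then the pair (f, X) is relatively quasihomogeneous with respect to a system of weights w ∈ ((0, 1/2) ∩ ℚ)^n. -/

import Mathlib

open Filter Topology Polynomial

set_option maxHeartbeats 1000000
set_option synthInstance.maxHeartbeats 1000000

noncomputable section

/-- The algebra structure on germs of complex valued functions. -/
instance Filter.Germ.instAlgebraComplex {α : Type*} (l : Filter α) :
    Algebra ℂ (Filter.Germ l ℂ) where
  algebraMap := (Filter.Germ.coeRingHom l).comp (algebraMap ℂ (α → ℂ))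
  commutes' := fun c g => mul_comm _ _
  smul_def' := fun c g => Filter.Germ.inductionOn g fun f => rfl

/-- The local algebra `𝒪ₙ` of germs at `0 ∈ ℂⁿ` of holomorphic functions,
realized as the subalgebra of germs at `0` admitting an analytic representative. -/
def On (n : ℕ) : Subalgebra ℂ (Filter.Germ (𝓝 (0 : Fin n → ℂ)) ℂ) where
  carrier := {g | ∃ f : (Fin n → ℂ) → ℂ,
    AnalyticAt ℂ f 0 ∧ (f : Filter.Germ (𝓝 (0 : Fin n → ℂ)) ℂ) = g}
  mul_mem' := by
    rintro a b ⟨f, hf, rfl⟩ ⟨g, hg, rfl⟩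
    exact ⟨f * g, hf.mul hg, rfl⟩
  add_mem' := by
    rintro a b ⟨f, hf, rfl⟩ ⟨g, hg, rfl⟩
    exact ⟨f + g, hf.add hg, rfl⟩
  algebraMap_mem' := fun c => ⟨fun _ => c, analyticAt_const, rfl⟩

variable {n : ℕ}

/-- Existence of an analytic representative for an element of `𝒪ₙ`. -/
lemma On.exists_rep (g : On n) : ∃ f : (Fin n → ℂ) → ℂ,
    AnalyticAt ℂ f 0 ∧ (f : Filter.Germ (𝓝 (0 : Fin n → ℂ)) ℂ) = (g : Filter.Germ _ ℂ) :=
  g.2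

/-- A chosen analytic representative of a germ in `𝒪ₙ`. -/
def On.rep (g : On n) : (Fin n → ℂ) → ℂ := (On.exists_rep g).choose

lemma On.rep_analyticAt (g : On n) : AnalyticAt ℂ (On.rep g) 0 :=
  (On.exists_rep g).choose_spec.1

lemma On.rep_spec (g : On n) :
    (On.rep g : Filter.Germ (𝓝 (0 : Fin n → ℂ)) ℂ) = (g : Filter.Germ _ ℂ) :=
  (On.exists_rep g).choose_spec.2

/-- Build an element of `𝒪ₙ` from an analytic function. -/
def mkOn {n : ℕ} (f : (Fin n → ℂ) → ℂ) (hf : AnalyticAt ℂ f 0) : On n :=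
  ⟨(f : Filter.Germ (𝓝 (0 : Fin n → ℂ)) ℂ), ⟨f, hf, rfl⟩⟩

/-- The `i`-th partial derivative, as an operation on `𝒪ₙ`. -/
def pd (i : Fin n) (g : On n) : On n :=
  mkOn (fun x => fderiv ℂ (On.rep g) x (Pi.single i 1)) (by
    have h := ((ContinuousLinearMap.apply ℂ ℂ (Pi.single i 1)).analyticAt
      (fderiv ℂ (On.rep g) 0)).comp (On.rep_analyticAt g).fderiv
    exact h)

/-- Restriction of germs at `0` to germs along a finer filter. -/
def restrictGerm {l : Filter (Fin n → ℂ)} (hl : l ≤ 𝓝 (0 : Fin n → ℂ)) :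
    Filter.Germ (𝓝 (0 : Fin n → ℂ)) ℂ →+* Filter.Germ l ℂ where
  toFun g := g.compTendsto id (Filter.tendsto_id'.2 hl)
  map_one' := rfl
  map_mul' a b := Filter.Germ.inductionOn₂ a b fun f g => rfl
  map_zero' := rfl
  map_add' a b := Filter.Germ.inductionOn₂ a b fun f g => rfl

/-- Evaluation of germs restricted along `l ≤ 𝓝 0`, as a ring homomorphism on `𝒪ₙ`. -/
def restrictOn (n : ℕ) {l : Filter (Fin n → ℂ)} (hl : l ≤ 𝓝 (0 : Fin n → ℂ)) :
    On n →+* Filter.Germ l ℂ :=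
  (restrictGerm hl).comp (On n).val.toRingHom

/-- The ideal `I_X ⊆ 𝒪ₙ` of germs vanishing on a set `X` near `0`. -/
def IX (n : ℕ) (X : Set (Fin n → ℂ)) : Ideal (On n) :=
  RingHom.ker (restrictOn n (nhdsWithin_le_nhds (s := X)))

/-- The maximal ideal `𝔪 ⊂ 𝒪ₙ` of germs vanishing at the origin. -/
def mId (n : ℕ) : Ideal (On n) :=
  RingHom.ker (restrictOn n (pure_le_nhds (0 : Fin n → ℂ)))

/-- `X` is the germ at `0` of an analytic variety: `0 ∈ X` and, near `0`, `X` coincides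
with the common zero locus of finitely many holomorphic functions. -/
def IsAnalyticGermAt0 (n : ℕ) (X : Set (Fin n → ℂ)) : Prop :=
  (0 : Fin n → ℂ) ∈ X ∧
    ∃ (m : ℕ) (g : Fin m → (Fin n → ℂ) → ℂ),
      (∀ j, AnalyticAt ℂ (g j) 0) ∧
      ∀ᶠ x in 𝓝 (0 : Fin n → ℂ), (x ∈ X ↔ ∀ j, g j x = 0)

/-- The action `δ(g) = Σ δᵢ ∂g/∂xᵢ` of a vector field `δ ∈ Θ ≅ 𝒪ₙⁿ` on `g ∈ 𝒪ₙ`. -/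
def applyVF (δ : Fin n → On n) (g : On n) : On n := ∑ i, δ i * pd i g

lemma applyVF_add (a b : Fin n → On n) (g : On n) :
    applyVF (a + b) g = applyVF a g + applyVF b g := by
  simp [applyVF, add_mul, Finset.sum_add_distrib]

lemma applyVF_smul (c : On n) (a : Fin n → On n) (g : On n) :
    applyVF (c • a) g = c * applyVF a g := by
  simp [applyVF, Finset.mul_sum, smul_eq_mul, mul_assoc]

/-- For fixed `f`, the map `δ ↦ δ(f)` as an `𝒪ₙ`-linear map `Θ → 𝒪ₙ`. -/
def gradMap (n : ℕ) (f : On n) : (Fin n → On n) →ₗ[On n] On n where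
  toFun δ := applyVF δ f
  map_add' a b := applyVF_add a b f
  map_smul' c a := applyVF_smul c a f

/-- The module `Θ_X` of logarithmic vector fields of `X`, i.e. vector fields
preserving the ideal `I_X`. -/
def ThetaX (n : ℕ) (X : Set (Fin n → ℂ)) : Submodule (On n) (Fin n → On n) where
  carrier := {δ | ∀ g ∈ IX n X, applyVF δ g ∈ IX n X}
  add_mem' := by
    intro a b ha hb g hg
    rw [applyVF_add]
    exact Ideal.add_mem _ (ha g hg) (hb g hg)
  zero_mem' := by
    intro g hg
    have h0 : applyVF (0 : Fin n → On n) g = 0 := by simp [applyVF]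
    rw [h0]; exact Ideal.zero_mem _
  smul_mem' := by
    intro c a ha g hg
    rw [applyVF_smul]
    exact Ideal.mul_mem_left _ _ (ha g hg)

/-- The module `Θ_Y` of vector fields tangent to the hypersurface `Y = f⁻¹(0)`,
i.e. `δ(f) ∈ ⟨f⟩`. -/
def ThetaF (n : ℕ) (f : On n) : Submodule (On n) (Fin n → On n) :=
  Submodule.comap (gradMap n f) (Ideal.span {f})

/-- The module `H_Y` of Hamiltonian vector fields of `f`, i.e. `δ(f) = 0`. -/
def HamF (n : ℕ) (f : On n) : Submodule (On n) (Fin n → On n) :=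
  LinearMap.ker (gradMap n f)

/-- The Bruce–Roberts ideal `df(Θ_X) ⊆ 𝒪ₙ`. -/
def BRIdeal (n : ℕ) (X : Set (Fin n → ℂ)) (f : On n) : Ideal (On n) :=
  Submodule.map (gradMap n f) (ThetaX n X)

/-- The Jacobian ideal `J(f) = ⟨∂f/∂x₁, …, ∂f/∂xₙ⟩`. -/
def Jac (n : ℕ) (f : On n) : Ideal (On n) :=
  Ideal.span (Set.range fun i => pd i f)

/-- The ideal `J(f,h)` generated by the `2×2` minors of the Jacobian matrix of `(f,h)`. -/
def Jmin (n : ℕ) (f h : On n) : Ideal (On n) :=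
  Ideal.span (Set.range fun p : Fin n × Fin n => pd p.1 f * pd p.2 h - pd p.2 f * pd p.1 h)

/-- The Milnor number `μ(f)`. -/
def mu (n : ℕ) (f : On n) : ℕ := Module.finrank ℂ (On n ⧸ Jac n f)

/-- The Tjurina number `τ(f)`. -/
def tau (n : ℕ) (f : On n) : ℕ :=
  Module.finrank ℂ (On n ⧸ (Jac n f + Ideal.span {f}))

/-- The Bruce–Roberts Milnor number `μ_X(f)`. -/
def muX (n : ℕ) (X : Set (Fin n → ℂ)) (f : On n) : ℕ :=
  Module.finrank ℂ (On n ⧸ BRIdeal n X f)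

/-- The Bruce–Roberts Tjurina number `τ_X(f)`. -/
def tauX (n : ℕ) (X : Set (Fin n → ℂ)) (f : On n) : ℕ :=
  Module.finrank ℂ (On n ⧸ (BRIdeal n X f + Ideal.span {f}))

/-- The value at the origin of a germ in `𝒪ₙ`. -/
def ev0 (g : On n) : ℂ := On.rep g 0

/-- The linear part `j¹δ` of a vector field `δ`, as the matrix `(∂δⱼ/∂xᵢ)(0)`. -/
def linPart (δ : Fin n → On n) : Matrix (Fin n) (Fin n) ℂ :=
  Matrix.of fun i j => ev0 (pd i (δ j))

/-- The eigenvalues (with multiplicities) of the linear part of `δ` are given by `w`. -/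
def EigsEq (δ : Fin n → On n) (w : Fin n → ℚ) : Prop :=
  (linPart δ).charpoly = ∏ i, (Polynomial.X - Polynomial.C ((w i : ℂ)))

/-- The germ at `0` of the coordinate function `xᵢ`. -/
def coordG (i : Fin n) : On n :=
  mkOn (fun x : Fin n → ℂ => x i)
    ((ContinuousLinearMap.proj (R := ℂ) (φ := fun _ : Fin n => ℂ) i).analyticAt _)

/-- `g` is quasihomogeneous of degree `d` with respect to the weights `w` (in the given
coordinates): the Euler identity `Σ wᵢ xᵢ ∂g/∂xᵢ = d g` holds. -/
def IsQH (n : ℕ) (w : Fin n → ℚ) (d : ℚ) (g : On n) : Prop :=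
  ∑ i, (w i : ℂ) • (coordG i * pd i g) = (d : ℂ) • g

/-- A germ of a biholomorphic change of coordinates at `0 ∈ ℂⁿ`. -/
structure CoordChange (n : ℕ) where
  toFun : (Fin n → ℂ) → (Fin n → ℂ)
  invFun : (Fin n → ℂ) → (Fin n → ℂ)
  analyticAt : AnalyticAt ℂ toFun 0
  inv_analyticAt : AnalyticAt ℂ invFun 0
  map_zero : toFun 0 = 0
  inv_map_zero : invFun 0 = 0
  left_inv : ∀ᶠ x in 𝓝 (0 : Fin n → ℂ), invFun (toFun x) = x
  right_inv : ∀ᶠ x in 𝓝 (0 : Fin n → ℂ), toFun (invFun x) = x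

lemma CoordChange.tendsto (φ : CoordChange n) :
    Filter.Tendsto φ.toFun (𝓝 (0 : Fin n → ℂ)) (𝓝 (0 : Fin n → ℂ)) := by
  have h := φ.analyticAt.continuousAt
  rwa [ContinuousAt, φ.map_zero] at h

/-- The pullback (composition) of a germ `g ∈ 𝒪ₙ` under a change of coordinates. -/
def pullback (φ : CoordChange n) (g : On n) : On n :=
  ⟨(g : Filter.Germ (𝓝 (0 : Fin n → ℂ)) ℂ).compTendsto φ.toFun φ.tendsto, by
    refine ⟨On.rep g ∘ φ.toFun, ?_, ?_⟩
    · have h := On.rep_analyticAt g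
      rw [← φ.map_zero] at h
      exact h.comp φ.analyticAt
    · rw [← On.rep_spec g]
      exact (Filter.Germ.coe_compTendsto _ φ.tendsto).symm⟩

/-- Definition 1.1: the pair `(f, X)` is relatively quasihomogeneous with respect to the
weights `w`: in suitable coordinates, `f` is quasihomogeneous of degree `1` and `I_X` admits
a system of quasihomogeneous generators of positive degrees, all with respect to `w`. -/
def RelQH (n : ℕ) (X : Set (Fin n → ℂ)) (f : On n) (w : Fin n → ℚ) : Prop :=
  ∃ φ : CoordChange n,
    IsQH n w 1 (pullback φ f) ∧
    ∃ (m : ℕ) (h : Fin m → On n) (d : Fin m → ℚ),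
      Ideal.span (Set.range h) = IX n X ∧ (∀ j, 0 < d j) ∧
      ∀ j, IsQH n w (d j) (pullback φ (h j))

/-- The variety `X` is quasihomogeneous with respect to the weights `w`: in suitable
coordinates, `I_X` admits a system of quasihomogeneous generators of positive degrees. -/
def VarQH (n : ℕ) (X : Set (Fin n → ℂ)) (w : Fin n → ℚ) : Prop :=
  ∃ φ : CoordChange n,
    ∃ (m : ℕ) (h : Fin m → On n) (d : Fin m → ℚ),
      Ideal.span (Set.range h) = IX n X ∧ (∀ j, 0 < d j) ∧
      ∀ j, IsQH n w (d j) (pullback φ (h j))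

instance (f : On n) : HasQuotient (↥(ThetaF n f)) (Submodule ↥(On n) ↥(ThetaF n f)) :=
  Submodule.hasQuotient (R := On n) (M := ThetaF n f)


set_option synthInstance.maxHeartbeats 1000000
set_option linter.all false

/-! ### Power series expansions of analytic germs -/

/-- The monomial `x^α`. -/
def mon {R : Type*} [CommMonoid R] (x : Fin n → R) (α : Fin n →₀ ℕ) : R := ∏ i, x i ^ α i

lemma mon_add {R : Type*} [CommMonoid R] (x : Fin n → R) (α β : Fin n →₀ ℕ) :
    mon x (α + β) = mon x α * mon x β := by
  simp [mon, pow_add, Finset.prod_mul_distrib]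

lemma mon_zero {R : Type*} [CommMonoid R] (x : Fin n → R) : mon x 0 = 1 := by
  simp [mon]

lemma mon_single {R : Type*} [CommMonoid R] (x : Fin n → R) (i : Fin n) (k : ℕ) :
    mon x (Finsupp.single i k) = x i ^ k := by
  classical
  unfold mon
  rw [Finset.prod_eq_single i]
  · simp
  · intro b _ hb; simp [Finsupp.single_apply, hb.symm]
  · simp

lemma mon_const {R : Type*} [CommMonoid R] (t : R) (α : Fin n →₀ ℕ) :
    mon (fun _ => t) α = t ^ α.degree := by
  simp [mon, Finset.prod_pow_eq_pow_sum, Finsupp.degree_eq_sum]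

lemma mon_nonneg {r : Fin n → ℝ} (hr : ∀ i, 0 ≤ r i) (α : Fin n →₀ ℕ) : 0 ≤ mon r α :=
  Finset.prod_nonneg fun i _ => pow_nonneg (hr i) _

lemma mon_pos {r : Fin n → ℝ} (hr : ∀ i, 0 < r i) (α : Fin n →₀ ℕ) : 0 < mon r α :=
  Finset.prod_pos fun i _ => pow_pos (hr i) _

lemma mon_mono {r s : Fin n → ℝ} (hs : ∀ i, 0 ≤ s i) (h : ∀ i, s i ≤ r i) (α : Fin n →₀ ℕ) :
    mon s α ≤ mon r α :=
  Finset.prod_le_prod (fun i _ => pow_nonneg (hs i) _) fun i _ => pow_le_pow_left₀ (hs i) (h i) _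

lemma norm_mon (x : Fin n → ℂ) (α : Fin n →₀ ℕ) : ‖mon x α‖ = mon (fun i => ‖x i‖) α := by
  simp [mon, norm_prod, norm_pow]

/-- Weighted absolute summability of a power series. -/
def SW (r : Fin n → ℝ) (a : MvPowerSeries (Fin n) ℂ) : Prop :=
  Summable fun α => ‖MvPowerSeries.coeff α a‖ * mon r α

lemma SW.mono {r s : Fin n → ℝ} {a : MvPowerSeries (Fin n) ℂ} (h : SW r a) (hs : ∀ i, 0 ≤ s i)
    (hsr : ∀ i, s i ≤ r i) : SW s a :=
  Summable.of_nonneg_of_le (fun α => mul_nonneg (norm_nonneg _) (mon_nonneg hs α))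
    (fun α => mul_le_mul_of_nonneg_left (mon_mono hs hsr α) (norm_nonneg _)) h

lemma SW.add {r : Fin n → ℝ} (hr : ∀ i, 0 ≤ r i) {a b : MvPowerSeries (Fin n) ℂ}
    (ha : SW r a) (hb : SW r b) : SW r (a + b) :=
  Summable.of_nonneg_of_le (fun α => mul_nonneg (norm_nonneg _) (mon_nonneg hr α))
    (fun α => by
      rw [map_add, ← add_mul]
      exact mul_le_mul_of_nonneg_right (norm_add_le _ _) (mon_nonneg hr α))
    (Summable.add ha hb)

lemma SW.mul {r : Fin n → ℝ} (hr : ∀ i, 0 ≤ r i) {a b : MvPowerSeries (Fin n) ℂ}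
    (ha : SW r a) (hb : SW r b) : SW r (a * b) := by
  classical
  have h1 := summable_sum_mul_antidiagonal_of_summable_mul (A := Fin n →₀ ℕ)
    (Summable.mul_of_nonneg ha hb (fun α => mul_nonneg (norm_nonneg _) (mon_nonneg hr α))
    (fun α => mul_nonneg (norm_nonneg _) (mon_nonneg hr α)))
  refine Summable.of_nonneg_of_le (fun α => mul_nonneg (norm_nonneg _) (mon_nonneg hr α))
    (fun α => ?_) h1
  rw [MvPowerSeries.coeff_mul]
  calc _ ≤ (∑ p ∈ Finset.HasAntidiagonal.antidiagonal α, ‖MvPowerSeries.coeff p.1 a *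
        MvPowerSeries.coeff p.2 b‖) * mon r α :=
        mul_le_mul_of_nonneg_right (norm_sum_le _ _) (mon_nonneg hr α)
    _ = _ := by
        rw [Finset.sum_mul]
        refine Finset.sum_congr rfl fun p hp => ?_
        rw [← Finset.HasAntidiagonal.mem_antidiagonal.1 hp, mon_add, norm_mul]; ring

lemma SW.summable {r : Fin n → ℝ} {a : MvPowerSeries (Fin n) ℂ}
    (ha : SW r a) {x : Fin n → ℂ} (hx : ∀ i, ‖x i‖ ≤ r i) :
    Summable fun α => ‖MvPowerSeries.coeff α a * mon x α‖ := by
  have := ha.mono (s := fun i => ‖x i‖) (fun i => norm_nonneg _) hx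
  unfold SW at this
  simpa only [norm_mul, norm_mon] using this

/-- `f` has the convergent power series expansion `a` near `0`. -/
def HasExp (f : (Fin n → ℂ) → ℂ) (a : MvPowerSeries (Fin n) ℂ) : Prop :=
  ∃ t : ℝ, 0 < t ∧ SW (fun _ => t) a ∧ ∀ x : Fin n → ℂ, (∀ i, ‖x i‖ ≤ t) →
    HasSum (fun α => MvPowerSeries.coeff α a * mon x α) (f x)

lemma HasExp.add {f g : (Fin n → ℂ) → ℂ} {a b : MvPowerSeries (Fin n) ℂ}
    (hf : HasExp f a) (hg : HasExp g b) : HasExp (f + g) (a + b) := by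
  obtain ⟨t, ht, h1, h2⟩ := hf
  obtain ⟨s, hs, h3, h4⟩ := hg
  have h0 : 0 < min t s := lt_min ht hs
  refine ⟨min t s, h0, (h1.mono (fun _ => h0.le) fun _ => min_le_left _ _).add (fun _ => h0.le)
    (h3.mono (fun _ => h0.le) fun _ => min_le_right _ _), fun x hx => ?_⟩
  have := (h2 x fun i => (hx i).trans (min_le_left _ _)).add
    (h4 x fun i => (hx i).trans (min_le_right _ _))
  simpa [add_mul] using this

lemma gen_cauchy {ι : Type*} [AddCommMonoid ι] [Finset.HasAntidiagonal ι] {u v : ι → ℂ}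
    (hu : Summable fun i => ‖u i‖) (hv : Summable fun i => ‖v i‖) :
    (∑' i, u i) * ∑' i, v i =
      ∑' i, ∑ kl ∈ Finset.HasAntidiagonal.antidiagonal i, u kl.1 * v kl.2 :=
  Summable.tsum_mul_tsum_eq_tsum_sum_antidiagonal (f := u) (g := v) hu.of_norm hv.of_norm
    (summable_mul_of_summable_norm (f := u) (g := v) hu hv)

lemma coeff_mul_mon [DecidableEq (Fin n)] (a b : MvPowerSeries (Fin n) ℂ) (x : Fin n → ℂ) (α : Fin n →₀ ℕ) :
    ∑ kl ∈ Finset.HasAntidiagonal.antidiagonal α, (MvPowerSeries.coeff kl.1 a * mon x kl.1) *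
      (MvPowerSeries.coeff kl.2 b * mon x kl.2) = MvPowerSeries.coeff α (a * b) * mon x α := by
  classical
  rw [MvPowerSeries.coeff_mul, Finset.sum_mul]
  refine Finset.sum_congr rfl fun p hp => ?_
  rw [← Finset.HasAntidiagonal.mem_antidiagonal.1 hp, mon_add, mul_mul_mul_comm]

lemma HasExp.mul_aux {r : Fin n → ℝ} {a b : MvPowerSeries (Fin n) ℂ}
    (ha : SW r a) (hb : SW r b) (hab : SW r (a * b)) {x : Fin n → ℂ} (hx : ∀ i, ‖x i‖ ≤ r i)
    {A B : ℂ} (e1 : HasSum (fun α => MvPowerSeries.coeff α a * mon x α) A)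
    (e2 : HasSum (fun α => MvPowerSeries.coeff α b * mon x α) B) :
    HasSum (fun α => MvPowerSeries.coeff α (a * b) * mon x α) (A * B) := by
  classical
  have sa := ha.summable (x := x) hx
  have sb := hb.summable (x := x) hx
  have h5 := gen_cauchy sa sb
  rw [e1.tsum_eq, e2.tsum_eq] at h5
  rw [h5]
  have h6 := (hab.summable (x := x) hx).of_norm.hasSum
  have h7 : ∑' α, MvPowerSeries.coeff α (a * b) * mon x α = ∑' α,
    ∑ kl ∈ Finset.HasAntidiagonal.antidiagonal α, (MvPowerSeries.coeff kl.1 a * mon x kl.1) *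
      (MvPowerSeries.coeff kl.2 b * mon x kl.2) :=
    tsum_congr fun α => (coeff_mul_mon a b x α).symm
  rw [← h7]
  exact h6

lemma HasExp.mul {f g : (Fin n → ℂ) → ℂ} {a b : MvPowerSeries (Fin n) ℂ}
    (hf : HasExp f a) (hg : HasExp g b) : HasExp (f * g) (a * b) := by
  obtain ⟨t, ht, h1, h2⟩ := hf
  obtain ⟨s, hs, h3, h4⟩ := hg
  have h0 : 0 < min t s := lt_min ht hs
  have ha := (h1.mono (s := fun _ => min t s) (fun _ => h0.le) fun _ => min_le_left _ _)
  have hb := (h3.mono (s := fun _ => min t s) (fun _ => h0.le) fun _ => min_le_right _ _)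
  have hab := ha.mul (fun _ => h0.le) hb
  refine ⟨min t s, h0, hab, fun x hx => ?_⟩
  have e1 := h2 x fun i => (hx i).trans (min_le_left _ _)
  have e2 := h4 x fun i => (hx i).trans (min_le_right _ _)
  exact HasExp.mul_aux ha hb hab hx e1 e2

lemma HasExp.congr {f g : (Fin n → ℂ) → ℂ} {a : MvPowerSeries (Fin n) ℂ}
    (hf : HasExp f a) (h : f =ᶠ[𝓝 0] g) : HasExp g a := by
  obtain ⟨t, ht, h1, h2⟩ := hf
  obtain ⟨s, hs, h3⟩ := Metric.eventually_nhds_iff_ball.1 h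
  have h0 : 0 < min t (s / 2) := lt_min ht (half_pos hs)
  refine ⟨min t (s/2), h0, h1.mono (fun _ => h0.le) fun _ => min_le_left _ _, fun x hx => ?_⟩
  rw [← h3 x]
  · exact h2 x fun i => (hx i).trans (min_le_left _ _)
  · rw [mem_ball_zero_iff]
    refine lt_of_le_of_lt ((pi_norm_le_iff_of_nonneg h0.le).2 hx) ?_
    exact lt_of_le_of_lt (min_le_right _ _) (half_lt_self hs)

/-- The content of a sequence of indices. -/
def idxContent (b : Σ k : ℕ, (Fin k → Fin n)) : Fin n →₀ ℕ := ∑ j, Finsupp.single (b.2 j) 1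

lemma mon_content {R : Type*} [CommMonoid R] (x : Fin n → R) (b : Σ k : ℕ, (Fin k → Fin n)) :
    mon x (idxContent b) = ∏ j, x (b.2 j) := by
  have : ∀ s : Finset (Fin b.1), mon x (∑ j ∈ s, Finsupp.single (b.2 j) 1) = ∏ j ∈ s, x (b.2 j) := by
    classical
    intro s
    induction s using Finset.induction_on with
    | empty => simp [mon_zero]
    | insert a s ha ih => rw [Finset.sum_insert ha, Finset.prod_insert ha, mon_add, ih, mon_single,
        pow_one]
  exact this _

lemma exists_idxSeq (k : ℕ) : ∀ (α : Fin n →₀ ℕ), α.degree = k →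
    ∃ s : Fin k → Fin n, idxContent ⟨k, s⟩ = α := by
  induction k with
  | zero =>
    intro α h
    refine ⟨Fin.elim0, ?_⟩
    rw [Finsupp.degree_eq_zero_iff] at h
    simp [idxContent, h]
  | succ k ih =>
    intro α h
    have hne : α ≠ 0 := by
      rintro rfl
      simp at h
    obtain ⟨i, hi⟩ := Finsupp.ne_iff.1 hne
    have hle : Finsupp.single i 1 ≤ α := by
      rw [Finsupp.single_le_iff]
      exact Nat.one_le_iff_ne_zero.2 hi
    have e : Finsupp.single i 1 + (α - Finsupp.single i 1) = α := add_tsub_cancel_of_le hle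
    obtain ⟨s, hs⟩ := ih (α - Finsupp.single i 1) (by
      have := congrArg Finsupp.degree e
      rw [map_add, Finsupp.degree_single, h] at this
      omega)
    refine ⟨Fin.cons i s, ?_⟩
    simp only [idxContent] at hs ⊢
    rw [Fin.sum_univ_succ]
    simp only [Fin.cons_zero, Fin.cons_succ]
    rw [hs, e]

/-- A sequence of indices with content `α`. -/
def idxSeq (α : Fin n →₀ ℕ) (k : ℕ) (h : α.degree = k) : Fin k → Fin n :=
  (exists_idxSeq k α h).choose

lemma prod_idxSeq (α : Fin n →₀ ℕ) (k : ℕ) (h : α.degree = k) (x : Fin n → ℂ) :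
    ∏ j, x (idxSeq α k h j) = mon x α := by
  have := (exists_idxSeq k α h).choose_spec
  conv_rhs => rw [← this, mon_content]
  rfl

/-- The monomial multilinear map. -/
def monMM (α : Fin n →₀ ℕ) (k : ℕ) (h : α.degree = k) :
    ContinuousMultilinearMap ℂ (fun _ : Fin k => (Fin n → ℂ)) ℂ :=
  (ContinuousMultilinearMap.mkPiAlgebra ℂ (Fin k) ℂ).compContinuousLinearMap
    fun j => ContinuousLinearMap.proj (R := ℂ) (φ := fun _ : Fin n => ℂ) (idxSeq α k h j)

lemma monMM_apply (α : Fin n →₀ ℕ) (k : ℕ) (h : α.degree = k) (x : Fin n → ℂ) :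
    monMM α k h (fun _ => x) = mon x α := by
  simp [monMM, prod_idxSeq]

lemma norm_monMM_le (α : Fin n →₀ ℕ) (k : ℕ) (h : α.degree = k) : ‖monMM α k h‖ ≤ 1 := by
  refine ContinuousMultilinearMap.opNorm_le_bound zero_le_one fun v => ?_
  simp only [monMM, ContinuousMultilinearMap.compContinuousLinearMap_apply,
    ContinuousMultilinearMap.mkPiAlgebra_apply, ContinuousLinearMap.proj_apply, one_mul, norm_prod]
  exact Finset.prod_le_prod (fun _ _ => norm_nonneg _) fun j _ => norm_le_pi_norm (v j) _

/-- The exponents of given degree. -/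
def degFin (n k : ℕ) : Finset (Fin n →₀ ℕ) := Finset.finsuppAntidiag Finset.univ k

lemma mem_degFin {k : ℕ} {α : Fin n →₀ ℕ} : α ∈ degFin n k ↔ α.degree = k := by
  simp [degFin, Finset.mem_finsuppAntidiag, Finsupp.degree_eq_sum]

/-- The formal multilinear series attached to a power series. -/
def toFMS (a : MvPowerSeries (Fin n) ℂ) : FormalMultilinearSeries ℂ (Fin n → ℂ) ℂ := fun k =>
  ∑ α ∈ (degFin n k).attach, MvPowerSeries.coeff α.1 a • monMM α.1 k (mem_degFin.1 α.2)

lemma toFMS_apply (a : MvPowerSeries (Fin n) ℂ) (k : ℕ) (x : Fin n → ℂ) :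
    toFMS a k (fun _ => x) = ∑ α ∈ degFin n k, MvPowerSeries.coeff α a * mon x α := by
  rw [toFMS, ContinuousMultilinearMap.sum_apply]
  simp only [ContinuousMultilinearMap.smul_apply, monMM_apply, smul_eq_mul]
  exact Finset.sum_attach (degFin n k) (fun α => MvPowerSeries.coeff α a * mon x α)

lemma HasExp.hasFPowerSeriesAt {f : (Fin n → ℂ) → ℂ} {a : MvPowerSeries (Fin n) ℂ}
    (hf : HasExp f a) : HasFPowerSeriesAt f (toFMS a) 0 := by
  obtain ⟨t, ht, h1, h2⟩ := hf
  refine ⟨ENNReal.ofReal t, ?_, by simpa using ht, ?_⟩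
  · have : ENNReal.ofReal t = ENNReal.ofNNReal (⟨t, ht.le⟩ : NNReal) :=
      ENNReal.ofReal_eq_coe_nnreal ht.le
    rw [this]
    refine FormalMultilinearSeries.le_radius_of_bound _
      (∑' α, ‖MvPowerSeries.coeff α a‖ * mon (fun _ => t) α) fun k => ?_
    calc ‖toFMS a k‖ * t ^ k ≤ (∑ α ∈ (degFin n k).attach, ‖MvPowerSeries.coeff α.1 a‖) * t ^ k := by
          refine mul_le_mul_of_nonneg_right ((norm_sum_le _ _).trans
            (Finset.sum_le_sum fun α _ => ?_)) (by positivity)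
          rw [norm_smul]
          exact mul_le_of_le_one_right (norm_nonneg _) (norm_monMM_le _ _ _)
      _ = ∑ α ∈ degFin n k, ‖MvPowerSeries.coeff α a‖ * mon (fun _ => t) α := by
          rw [Finset.sum_attach (degFin n k) (fun α => ‖MvPowerSeries.coeff α a‖), Finset.sum_mul]
          refine Finset.sum_congr rfl fun α hα => ?_
          rw [mon_const, mem_degFin.1 hα]
      _ ≤ _ := h1.sum_le_tsum _ fun α _ => mul_nonneg (norm_nonneg _) (mon_nonneg (fun _ => ht.le) _)
  · intro y hy
    have hy' : ∀ i, ‖y i‖ ≤ t := by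
      intro i
      rw [Metric.eball_ofReal, mem_ball_zero_iff] at hy
      exact (norm_le_pi_norm y i).trans hy.le
    have := (h2 y hy').tsum_fiberwise (fun α => α.degree)
    rw [zero_add]
    convert this using 2 with k
    rw [toFMS_apply]
    have e : ((fun α : Fin n →₀ ℕ => α.degree) ⁻¹' {k}) = (↑(degFin n k) : Set (Fin n →₀ ℕ)) := by
      ext α; simp [mem_degFin]
    rw [e]
    exact (Finset.tsum_subtype (degFin n k) (fun α => MvPowerSeries.coeff α a * mon y α)).symm

lemma HasExp.analyticAt {f : (Fin n → ℂ) → ℂ} {a : MvPowerSeries (Fin n) ℂ}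
    (hf : HasExp f a) : AnalyticAt ℂ f 0 := hf.hasFPowerSeriesAt.analyticAt

lemma HasExp.eq_zero {a : MvPowerSeries (Fin n) ℂ} (hf : HasExp 0 a) : a = 0 := by
  have h := hf.hasFPowerSeriesAt
  have h1 : ∀ k (y : Fin n → ℂ), ∑ α ∈ degFin n k, MvPowerSeries.coeff α a * mon y α = 0 := by
    intro k y
    rw [← toFMS_apply]
    exact h.apply_eq_zero k y
  ext α
  have h2 : (∑ β ∈ degFin n α.degree, MvPolynomial.monomial β (MvPowerSeries.coeff β a)) = 0 := by
    refine MvPolynomial.funext fun y => ?_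
    rw [map_sum, map_zero, ← h1 α.degree y]
    refine Finset.sum_congr rfl fun β _ => ?_
    rw [MvPolynomial.eval_monomial, Finsupp.prod_fintype _ _ (by simp)]
    rfl
  have h3 := congrArg (MvPolynomial.coeff α) h2
  rw [MvPolynomial.coeff_sum, Finset.sum_eq_single α] at h3
  · simpa using h3
  · intro b _ hb; simp [MvPolynomial.coeff_monomial, hb]
  · intro h; exact absurd (mem_degFin.2 rfl) h

lemma HasExp.smul {f : (Fin n → ℂ) → ℂ} {a : MvPowerSeries (Fin n) ℂ} (c : ℂ)
    (hf : HasExp f a) : HasExp (c • f) (c • a) := by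
  obtain ⟨t, ht, h1, h2⟩ := hf
  refine ⟨t, ht, ?_, fun x hx => ?_⟩
  · have := Summable.mul_left ‖c‖ h1
    unfold SW
    refine this.congr fun α => ?_
    rw [MvPowerSeries.coeff_smul, norm_mul, mul_assoc]
  · have := (h2 x hx).mul_left c
    simpa [mul_assoc] using this

lemma HasExp.unique {f : (Fin n → ℂ) → ℂ} {a b : MvPowerSeries (Fin n) ℂ} (ha : HasExp f a)
    (hb : HasExp f b) : a = b := by
  have := ha.add (hb.smul (-1))
  have h0 : f + (-1 : ℂ) • f = 0 := by ext; simp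
  rw [h0] at this
  have := this.eq_zero
  simpa [← sub_eq_add_neg, sub_eq_zero] using this

lemma exists_hasExp {f : (Fin n → ℂ) → ℂ} (hf : AnalyticAt ℂ f 0) : ∃ a, HasExp f a := by
  obtain ⟨p, R, hp⟩ := hf
  obtain ⟨R', hR'0, hR'⟩ := ENNReal.lt_iff_exists_nnreal_btwn.1 hp.r_pos
  have hR'0 : (0 : ℝ) < R' := by exact_mod_cast hR'0
  set t : ℝ := R' / (n + 1) with ht
  have ht0 : 0 < t := by positivity
  have htR : t ≤ R' := div_le_self hR'0.le (by linarith [Nat.cast_nonneg (α := ℝ) n])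
  have hnt : n * t ≤ R' := by
    rw [ht, ← mul_div_assoc, div_le_iff₀ (by positivity)]; nlinarith
  have hsum : Summable fun k => ‖p k‖ * (R' : ℝ) ^ k :=
    p.summable_norm_mul_pow (lt_of_lt_of_le hR' hp.r_le)
  let c : (Σ k : ℕ, (Fin k → Fin n)) → ℂ := fun b => p b.1 fun j => Pi.single (b.2 j) 1
  have hc : ∀ b, ‖c b‖ ≤ ‖p b.1‖ := by
    intro b
    refine ((p b.1).le_opNorm _).trans ?_
    refine mul_le_of_le_one_right (norm_nonneg _) (Finset.prod_le_one (fun _ _ => norm_nonneg _) ?_)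
    intro j _
    simp [Pi.norm_single]
  have hS : Summable fun b => ‖c b‖ * mon (fun _ => t) (idxContent b) := by
    refine Summable.of_nonneg_of_le (fun b => mul_nonneg (norm_nonneg _) (mon_nonneg (fun _ => ht0.le) _))
      (f := fun b : (Σ k : ℕ, (Fin k → Fin n)) => ‖p b.1‖ * t ^ b.1) (fun b => ?_) ?_
    · rw [mon_content]; simp only [Finset.prod_const, Finset.card_univ, Fintype.card_fin]
      exact mul_le_mul_of_nonneg_right (hc b) (by positivity)
    · rw [summable_sigma_of_nonneg (fun b => by positivity)]
      refine ⟨fun k => (hasSum_fintype _).summable, ?_⟩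
      refine Summable.of_nonneg_of_le (fun k => tsum_nonneg fun b => by positivity) (fun k => ?_) hsum
      rw [tsum_fintype]
      change ∑ b : Fin k → Fin n, ‖p k‖ * t ^ k ≤ _
      rw [Finset.sum_const, Finset.card_univ, Fintype.card_fun, Fintype.card_fin,
        Fintype.card_fin, nsmul_eq_mul]
      calc _ = ‖p k‖ * (n * t) ^ k := by push_cast; ring
        _ ≤ _ := mul_le_mul_of_nonneg_left (pow_le_pow_left₀ (by positivity) hnt _) (norm_nonneg _)
  have hcS : ∀ α, Summable fun b : idxContent (n := n) ⁻¹' {α} => ‖c b‖ := by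
    intro α
    have := hS.subtype (idxContent (n := n) ⁻¹' {α})
    have h2 := this.mul_right (mon (fun _ => t) α)⁻¹
    refine h2.congr fun b => ?_
    have hb : idxContent b.1 = α := b.2
    have := (mon_pos (n := n) (r := fun _ => t) (fun _ => ht0) α).ne'
    simp only [Function.comp, hb]
    field_simp
  let a : MvPowerSeries (Fin n) ℂ := fun α => ∑' b : idxContent (n := n) ⁻¹' {α}, c b
  have ha : ∀ α, MvPowerSeries.coeff α a = ∑' b : idxContent (n := n) ⁻¹' {α}, c b := fun α => rfl
  refine ⟨a, t, ht0, ?_, ?_⟩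
  · have := (hS.hasSum.tsum_fiberwise idxContent).summable
    refine Summable.of_nonneg_of_le (fun α => mul_nonneg (norm_nonneg _)
      (mon_nonneg (fun _ => ht0.le) α)) (fun α => ?_) this
    rw [ha]
    calc _ ≤ (∑' b : idxContent (n := n) ⁻¹' {α}, ‖c b‖) * mon (fun _ => t) α :=
          mul_le_mul_of_nonneg_right (norm_tsum_le_tsum_norm (hcS α)) (mon_nonneg (fun _ => ht0.le) α)
      _ = _ := by
          rw [← tsum_mul_right]
          refine tsum_congr fun b => ?_
          have hb : idxContent b.1 = α := b.2
          rw [hb]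
  · intro x hx
    have hsx : Summable fun b => c b * mon x (idxContent b) := by
      refine Summable.of_norm_bounded hS fun b => ?_
      rw [norm_mul, norm_mon]
      exact mul_le_mul_of_nonneg_left (mon_mono (fun _ => norm_nonneg _) hx _) (norm_nonneg _)
    have hx' : x ∈ Metric.eball (0 : Fin n → ℂ) R := by
      rw [Metric.mem_eball, edist_zero_right]
      refine lt_of_le_of_lt ?_ hR'
      rw [enorm_eq_nnnorm, ENNReal.coe_le_coe, ← NNReal.coe_le_coe]
      exact (pi_norm_le_iff_of_nonneg ht0.le).2 hx |>.trans htR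
    have h1 := hp.hasSum hx'
    rw [zero_add] at h1
    have h2 : HasSum (fun b => c b * mon x (idxContent b)) (f x) := by
      refine HasSum.sigma_of_hasSum h1 (fun k => ?_) hsx
      convert hasSum_fintype _ using 1
      have hxe : x = ∑ i, x i • (Pi.single i 1 : Fin n → ℂ) := by
        ext j; simp [Finset.sum_apply, Pi.single_apply]
      have h3 : (p k) (fun _ => x) = (p k) (fun _ => ∑ i, x i • (Pi.single i 1 : Fin n → ℂ)) := by
        rw [← hxe]
      rw [h3, ContinuousMultilinearMap.map_sum]
      refine Finset.sum_congr rfl fun s _ => ?_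
      rw [ContinuousMultilinearMap.map_smul_univ, mon_content, smul_eq_mul, mul_comm]
    have h4 := h2.tsum_fiberwise idxContent
    have h8 : (fun α => MvPowerSeries.coeff α a * mon x α) =
        fun α => ∑' b : idxContent (n := n) ⁻¹' {α}, c b * mon x (idxContent b.1) := by
      funext α
      rw [ha, ← tsum_mul_right]
      refine tsum_congr fun b => ?_
      have hb : idxContent b.1 = α := b.2
      rw [hb]
    rw [h8]
    exact h4

/-! ### The ring `On n` inside formal power series -/

lemma On.coe_ext {g h : On n} (e : On.rep g =ᶠ[𝓝 0] On.rep h) : g = h := by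
  apply Subtype.ext
  rw [← On.rep_spec g, ← On.rep_spec h]
  exact Filter.Germ.coe_eq.2 e

lemma rep_mkOn {f : (Fin n → ℂ) → ℂ} (hf : AnalyticAt ℂ f 0) : On.rep (mkOn f hf) =ᶠ[𝓝 0] f :=
  Filter.Germ.coe_eq.1 (On.rep_spec (mkOn f hf))

lemma mkOn_rep (g : On n) : mkOn (On.rep g) (On.rep_analyticAt g) = g :=
  Subtype.ext (On.rep_spec g)

lemma rep_add (g h : On n) : On.rep (g + h) =ᶠ[𝓝 0] On.rep g + On.rep h := by
  rw [← Filter.Germ.coe_eq, On.rep_spec, Filter.Germ.coe_add, On.rep_spec, On.rep_spec]; rfl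

lemma rep_mul (g h : On n) : On.rep (g * h) =ᶠ[𝓝 0] On.rep g * On.rep h := by
  rw [← Filter.Germ.coe_eq, On.rep_spec, Filter.Germ.coe_mul, On.rep_spec, On.rep_spec]; rfl

lemma rep_algebraMap (c : ℂ) : On.rep (algebraMap ℂ (On n) c) =ᶠ[𝓝 0] fun _ => c := by
  rw [← Filter.Germ.coe_eq, On.rep_spec]; rfl

/-- The power series expansion of a germ. -/
def expn (g : On n) : MvPowerSeries (Fin n) ℂ := (exists_hasExp (On.rep_analyticAt g)).choose

lemma expn_spec (g : On n) : HasExp (On.rep g) (expn g) :=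
  (exists_hasExp (On.rep_analyticAt g)).choose_spec

lemma expn_eq {g : On n} {f : (Fin n → ℂ) → ℂ} {a : MvPowerSeries (Fin n) ℂ}
    (h : On.rep g =ᶠ[𝓝 0] f) (hf : HasExp f a) : expn g = a :=
  ((expn_spec g).congr h).unique hf

lemma hasExp_monomial (β : Fin n →₀ ℕ) (c : ℂ) :
    HasExp (fun x : Fin n → ℂ => c * mon x β) (MvPowerSeries.monomial β c) := by
  classical
  refine ⟨1, one_pos, ?_, fun x hx => ?_⟩
  · refine summable_of_ne_finset_zero (s := {β}) fun α hα => ?_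
    rw [MvPowerSeries.coeff_monomial, if_neg (by simpa using hα)]; simp
  · have := hasSum_single (f := fun α => MvPowerSeries.coeff α (MvPowerSeries.monomial β c) * mon x α) β
      (fun α hα => by rw [MvPowerSeries.coeff_monomial, if_neg hα]; simp)
    simpa [MvPowerSeries.coeff_monomial] using this

lemma hasExp_const (c : ℂ) : HasExp (fun _ : Fin n → ℂ => c) (algebraMap ℂ _ c) := by
  have := hasExp_monomial (n := n) 0 c
  simp only [mon_zero, mul_one] at this
  rwa [MvPowerSeries.monomial_zero_eq_C_apply] at this

/-- The expansion as an algebra homomorphism. -/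
def TT (n : ℕ) : On n →ₐ[ℂ] MvPowerSeries (Fin n) ℂ where
  toFun := expn
  map_one' := by
    rw [← map_one (algebraMap ℂ (On n)), expn_eq (rep_algebraMap _) (hasExp_const _), map_one]
  map_zero' := by
    rw [← map_zero (algebraMap ℂ (On n)), expn_eq (rep_algebraMap _) (hasExp_const _), map_zero]
  map_add' g h := expn_eq (rep_add g h) ((expn_spec g).add (expn_spec h))
  map_mul' g h := expn_eq (rep_mul g h) ((expn_spec g).mul (expn_spec h))
  commutes' c := expn_eq (rep_algebraMap _) (hasExp_const _)

lemma TT_eq {g : On n} {f : (Fin n → ℂ) → ℂ} {a : MvPowerSeries (Fin n) ℂ}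
    (h : On.rep g =ᶠ[𝓝 0] f) (hf : HasExp f a) : TT n g = a := expn_eq h hf

lemma HasExp.eventuallyEq {f g : (Fin n → ℂ) → ℂ} {a : MvPowerSeries (Fin n) ℂ}
    (hf : HasExp f a) (hg : HasExp g a) : f =ᶠ[𝓝 0] g := by
  obtain ⟨t, ht, h1, h2⟩ := hf
  obtain ⟨s, hs, h3, h4⟩ := hg
  have h0 : 0 < min t s := lt_min ht hs
  filter_upwards [Metric.ball_mem_nhds 0 h0] with x hx
  rw [mem_ball_zero_iff] at hx
  have hx' : ∀ i, ‖x i‖ ≤ min t s := fun i => (norm_le_pi_norm x i).trans hx.le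
  exact (h2 x fun i => (hx' i).trans (min_le_left _ _)).unique
    (h4 x fun i => (hx' i).trans (min_le_right _ _))

lemma TT_injective : Function.Injective (TT n) := by
  intro g h e
  refine On.coe_ext ((expn_spec g).eventuallyEq ?_)
  change expn g = expn h at e
  rw [e]; exact expn_spec h

lemma TT_SW (g : On n) : ∃ t : ℝ, 0 < t ∧ SW (fun _ => t) (TT n g) := by
  obtain ⟨t, ht, h, _⟩ := expn_spec g
  exact ⟨t, ht, h⟩

lemma exists_TT_of_SW {a : MvPowerSeries (Fin n) ℂ} {t : ℝ} (ht : 0 < t) (h : SW (fun _ => t) a) :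
    ∃ g : On n, TT n g = a := by
  have : HasExp (fun x => ∑' α, MvPowerSeries.coeff α a * mon x α) a :=
    ⟨t, ht, h, fun x hx => (h.summable hx).of_norm.hasSum⟩
  exact ⟨mkOn _ this.analyticAt, TT_eq (rep_mkOn _) this⟩

lemma exists_TT_of_SW' {a : MvPowerSeries (Fin n) ℂ} {r : Fin n → ℝ} (hr : ∀ i, 0 < r i)
    (h : SW r a) : ∃ g : On n, TT n g = a := by
  by_cases hn : Nonempty (Fin n)
  · obtain ⟨i, hi⟩ := Finite.exists_min r
    exact exists_TT_of_SW (hr i) (h.mono (fun _ => (hr i).le) hi)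
  · refine exists_TT_of_SW one_pos (h.mono (fun _ => zero_le_one) fun i => (hn ⟨i⟩).elim)

instance : IsDomain (On n) := by
  haveI : IsDomain (MvPowerSeries (Fin n) ℂ) := NoZeroDivisors.to_isDomain _
  exact (TT_injective (n := n)).isDomain (TT n).toRingHom

/-- Coefficient functional. -/
def co (α : Fin n →₀ ℕ) : On n →ₗ[ℂ] ℂ := (MvPowerSeries.coeff α) ∘ₗ (TT n).toLinearMap

lemma co_def (α : Fin n →₀ ℕ) (g : On n) : co α g = MvPowerSeries.coeff α (TT n g) := rfl

lemma co_ext {g h : On n} (e : ∀ α, co α g = co α h) : g = h :=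
  TT_injective (MvPowerSeries.ext e)

lemma TT_coordG (i : Fin n) : TT n (coordG i) = MvPowerSeries.X i := by
  refine TT_eq (rep_mkOn _) ?_
  have := hasExp_monomial (Finsupp.single i 1) (1 : ℂ)
  simp only [mon_single, one_mul, pow_one] at this
  exact this

lemma HasExp.at_zero {f : (Fin n → ℂ) → ℂ} {a : MvPowerSeries (Fin n) ℂ} (hf : HasExp f a) :
    f 0 = MvPowerSeries.coeff 0 a := by
  obtain ⟨t, ht, h1, h2⟩ := hf
  have h := h2 0 (by simp [ht.le])
  have := hasSum_single (f := fun α => MvPowerSeries.coeff α a * mon (0 : Fin n → ℂ) α) 0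
      (fun α hα => by
        obtain ⟨i, hi⟩ := Finsupp.ne_iff.1 hα
        have : mon (0 : Fin n → ℂ) α = 0 := by
          unfold mon
          exact Finset.prod_eq_zero (Finset.mem_univ i) (by simpa using hi)
        simp [this])
  have := h.unique this
  simpa [mon_zero] using this

lemma rep_zero_eq (g : On n) : On.rep g 0 = co 0 g := (expn_spec g).at_zero

lemma mem_mId_iff {g : On n} : g ∈ mId n ↔ co 0 g = 0 := by
  rw [← rep_zero_eq, mId, RingHom.mem_ker]
  have : restrictOn n (pure_le_nhds (0 : Fin n → ℂ)) g = (↑(On.rep g) : Filter.Germ (pure (0 : Fin n → ℂ)) ℂ) := by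
    change restrictGerm (pure_le_nhds (0 : Fin n → ℂ)) (g : Filter.Germ (𝓝 (0 : Fin n → ℂ)) ℂ) = _
    rw [← On.rep_spec g]; rfl
  rw [this]
  change (↑(On.rep g) : Filter.Germ (pure (0 : Fin n → ℂ)) ℂ) = ↑(fun _ : Fin n → ℂ => (0:ℂ)) ↔ _
  rw [Filter.Germ.coe_eq]
  simp [Filter.EventuallyEq]

lemma mem_IX_iff {X : Set (Fin n → ℂ)} {g : On n} :
    g ∈ IX n X ↔ ∀ᶠ x in 𝓝[X] 0, On.rep g x = 0 := by
  rw [IX, RingHom.mem_ker]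
  have : restrictOn n (nhdsWithin_le_nhds (s := X)) g = (↑(On.rep g) : Filter.Germ (𝓝[X] (0 : Fin n → ℂ)) ℂ) := by
    change restrictGerm (nhdsWithin_le_nhds (s := X)) (g : Filter.Germ (𝓝 (0 : Fin n → ℂ)) ℂ) = _
    rw [← On.rep_spec g]; rfl
  rw [this]
  change (↑(On.rep g) : Filter.Germ (𝓝[X] (0 : Fin n → ℂ)) ℂ) = ↑(fun _ : Fin n → ℂ => (0:ℂ)) ↔ _
  rw [Filter.Germ.coe_eq]; rfl

lemma IX_le_mId {X : Set (Fin n → ℂ)} (h0 : (0 : Fin n → ℂ) ∈ X) : IX n X ≤ mId n := by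
  intro g hg
  rw [mem_IX_iff] at hg
  rw [mem_mId_iff, ← rep_zero_eq]
  exact hg.self_of_nhdsWithin h0

lemma isUnit_of_co {g : On n} (h : co 0 g ≠ 0) : IsUnit g := by
  rw [← rep_zero_eq] at h
  have hinv := (On.rep_analyticAt g).inv h
  refine IsUnit.of_mul_eq_one (mkOn _ hinv) (On.coe_ext ?_)
  have h1 : On.rep (1 : On n) =ᶠ[𝓝 0] fun _ => 1 := by
    rw [← map_one (algebraMap ℂ (On n))]; exact rep_algebraMap 1
  have h2 := (On.rep_analyticAt g).continuousAt.eventually_ne h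
  filter_upwards [rep_mul g (mkOn _ hinv), h1, h2, rep_mkOn hinv] with x e1 e2 e3 e4
  rw [e1, e2, Pi.mul_apply, e4, Pi.inv_apply, mul_inv_cancel₀ e3]

lemma co_zero_mul (g h : On n) : co 0 (g * h) = co 0 g * co 0 h := by
  classical
  simp [co_def, MvPowerSeries.coeff_mul]

lemma co_zero_one : co 0 (1 : On n) = 1 := by
  simp [co_def]

lemma isUnit_iff_co {g : On n} : IsUnit g ↔ co 0 g ≠ 0 := by
  refine ⟨fun h => ?_, isUnit_of_co⟩
  obtain ⟨u, hu⟩ := h.exists_right_inv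
  intro h0
  have := congrArg (co 0) hu
  rw [co_zero_mul, h0, co_zero_one] at this
  simp at this

instance : IsLocalRing (On n) := IsLocalRing.of_nonunits_add fun a b ha hb => by
  rw [mem_nonunits_iff, isUnit_iff_co, not_not] at *
  rw [map_add, ha, hb, add_zero]

lemma maximalIdeal_eq : IsLocalRing.maximalIdeal (On n) = mId n := by
  ext g
  rw [IsLocalRing.mem_maximalIdeal, mem_nonunits_iff, isUnit_iff_co, not_not, mem_mId_iff]

instance : (mId n).IsMaximal := maximalIdeal_eq (n := n) ▸ inferInstance

lemma coordG_mem (i : Fin n) : coordG i ∈ mId n := by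
  classical
  rw [mem_mId_iff, co_def, TT_coordG, MvPowerSeries.coeff_X, if_neg]
  intro h
  have := congrArg Finsupp.degree h
  simp at this

lemma coeff_X_mul' (i : Fin n) (a : MvPowerSeries (Fin n) ℂ) (α : Fin n →₀ ℕ) :
    MvPowerSeries.coeff α (MvPowerSeries.X i * a) =
      if α i = 0 then 0 else MvPowerSeries.coeff (α - Finsupp.single i 1) a := by
  classical
  rw [MvPowerSeries.X_def, MvPowerSeries.coeff_monomial_mul]
  by_cases h : α i = 0
  · rw [if_pos h, if_neg]
    rw [Finsupp.single_le_iff, h]; simp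
  · rw [if_neg h, if_pos]; simp
    rw [Finsupp.single_le_iff]; omega

lemma SW.of_le {r : Fin n → ℝ} (hr : ∀ i, 0 ≤ r i) {a : MvPowerSeries (Fin n) ℂ}
    {u : (Fin n →₀ ℕ) → ℝ} (hu : Summable u) (h : ∀ α, ‖MvPowerSeries.coeff α a‖ * mon r α ≤ u α) :
    SW r a := by
  have h3 : ∀ β, 0 ≤ ‖MvPowerSeries.coeff β a‖ * mon r β := fun α =>
      mul_nonneg (norm_nonneg _) (mon_nonneg hr α)
  unfold SW
  exact Summable.of_nonneg_of_le h3 h hu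

lemma hadamard (g : On n) : ∃ h : Fin n → On n,
    g = algebraMap ℂ (On n) (co 0 g) + ∑ j, coordG j * h j ∧
    ∀ j β, co β (h j) = co (β + Finsupp.single j 1) g ∨ co β (h j) = 0 := by
  classical
  obtain ⟨t, ht, hs⟩ := TT_SW g
  let b : Fin n → MvPowerSeries (Fin n) ℂ := fun j β =>
    if ∀ i < j, β i = 0 then co (β + Finsupp.single j 1) g else 0
  have hb : ∀ j β, MvPowerSeries.coeff β (b j) =
    if ∀ i < j, β i = 0 then co (β + Finsupp.single j 1) g else 0 := fun j β => rfl
  have hS : ∀ j, SW (fun _ => t) (b j) := by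
    intro j
    have h1 : Summable fun β : Fin n →₀ ℕ => ‖MvPowerSeries.coeff (β + Finsupp.single j 1) (TT n g)‖
        * mon (fun _ => t) (β + Finsupp.single j 1) :=
      Summable.comp_injective (f := fun β : Fin n →₀ ℕ => ‖MvPowerSeries.coeff β (TT n g)‖
        * mon (fun _ => t) β) hs (i := fun β => β + Finsupp.single j 1) (add_left_injective _)
    have h2 : Summable fun β : Fin n →₀ ℕ => ‖MvPowerSeries.coeff (β + Finsupp.single j 1) (TT n g)‖
        * mon (fun _ => t) (β + Finsupp.single j 1) * t⁻¹ := h1.mul_right t⁻¹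
    refine SW.of_le (fun _ => ht.le) h2 (fun β => ?_)
    rw [mon_add, mon_single, pow_one, mul_assoc, mul_assoc, mul_inv_cancel₀ ht.ne', mul_one]
    refine mul_le_mul_of_nonneg_right ?_ (mon_nonneg (fun _ => ht.le) _)
    rw [hb]
    split_ifs
    · rfl
    · simp
  choose h hh using fun j => exists_TT_of_SW ht (hS j)
  refine ⟨h, co_ext fun α => ?_, fun j β => ?_⟩
  · rw [map_add, map_sum]
    have e1 : ∀ j, co α (coordG j * h j) = if α j ≠ 0 ∧ ∀ i < j, α i = 0 then co α g else 0 := by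
      intro j
      rw [co_def, map_mul, TT_coordG, coeff_X_mul', hh, hb]
      by_cases h0 : α j = 0
      · simp [h0]
      · rw [if_neg h0]
        have e : α - Finsupp.single j 1 + Finsupp.single j 1 = α :=
          tsub_add_cancel_of_le (by rw [Finsupp.single_le_iff]; omega)
        rw [e]
        have : (∀ i < j, (α - Finsupp.single j 1 : Fin n →₀ ℕ) i = 0) ↔ (α j ≠ 0 ∧ ∀ i < j, α i = 0) := by
          simp only [ne_eq, h0, not_false_eq_true, true_and]
          refine forall_congr' fun i => forall_congr' fun hi => ?_
          rw [Finsupp.tsub_apply, Finsupp.single_apply, if_neg hi.ne']; simp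
        simp only [this]
    simp only [e1]
    have e2 : co α (algebraMap ℂ (On n) (co 0 g)) = if α = 0 then co 0 g else 0 := by
      rw [co_def, AlgHom.commutes]
      exact MvPowerSeries.coeff_C α _
    rw [e2]
    by_cases h0 : α = 0
    · subst h0; simp
    · rw [if_neg h0, zero_add]
      have hne : ∃ i, α i ≠ 0 := by simpa using Finsupp.ne_iff.1 h0
      have hne' : (Finset.univ.filter fun i => α i ≠ 0).Nonempty := by
        obtain ⟨i, hi⟩ := hne
        exact ⟨i, by simp [hi]⟩
      set j := (Finset.univ.filter fun i => α i ≠ 0).min' hne' with hj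
      have hj1 : α j ≠ 0 := by
        have := Finset.min'_mem _ hne'
        simpa using this
      have hj2 : ∀ i < j, α i = 0 := by
        intro i hi
        by_contra hc
        have := Finset.min'_le (Finset.univ.filter fun i => α i ≠ 0) i (by simp [hc])
        exact absurd hi (not_lt.2 this)
      rw [Finset.sum_eq_single j, if_pos ⟨hj1, hj2⟩]
      · intro i _ hi
        rw [if_neg]
        rintro ⟨h1, h2⟩
        rcases lt_or_gt_of_ne hi with h3 | h3
        · exact h1 (hj2 i h3)
        · exact hj1 (h2 j h3)
      · simp
  · rw [co_def, hh, hb]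
    split_ifs
    · exact Or.inl rfl
    · exact Or.inr rfl

lemma co_mul_eq_zero {g h : On n} {a b : ℕ} (hg : ∀ α : Fin n →₀ ℕ, α.degree < a → co α g = 0)
    (hh : ∀ α : Fin n →₀ ℕ, α.degree < b → co α h = 0) :
    ∀ α : Fin n →₀ ℕ, α.degree < a + b → co α (g * h) = 0 := by
  classical
  intro α hα
  rw [co_def, map_mul, MvPowerSeries.coeff_mul]
  refine Finset.sum_eq_zero fun p hp => ?_
  rw [Finset.HasAntidiagonal.mem_antidiagonal] at hp
  rw [← hp, map_add] at hα
  by_cases h1 : p.1.degree < a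
  · have := hg _ h1
    rw [co_def] at this; rw [this, zero_mul]
  · have := hh p.2 (by omega)
    rw [co_def] at this; rw [this, mul_zero]

lemma mem_pow_iff {k : ℕ} {g : On n} :
    g ∈ mId n ^ k ↔ ∀ α : Fin n →₀ ℕ, α.degree < k → co α g = 0 := by
  induction k generalizing g with
  | zero => simp
  | succ k ih =>
    constructor
    · intro h
      rw [pow_succ] at h
      refine Submodule.mul_induction_on h (fun a ha b hb => ?_) (fun a b ha hb α hα => ?_)
      · refine co_mul_eq_zero (ih.1 ha) fun α hα => ?_
        have : α = 0 := by
          rw [← Finsupp.degree_eq_zero_iff]; omega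
        rw [this]; exact mem_mId_iff.1 hb
      · rw [map_add, ha α hα, hb α hα, add_zero]
    · intro h
      obtain ⟨u, hu, hu2⟩ := hadamard g
      rw [h 0 (by simp), map_zero, zero_add] at hu
      rw [hu]
      refine Ideal.sum_mem _ fun j _ => ?_
      rw [pow_succ']
      refine Ideal.mul_mem_mul (coordG_mem j) (ih.2 fun α hα => ?_)
      rcases hu2 j α with h1 | h1
      · rw [h1]; exact h _ (by rw [map_add, Finsupp.degree_single]; omega)
      · exact h1

lemma mId_eq_span : mId n = Ideal.span (Set.range (coordG (n := n))) := by
  refine le_antisymm (fun g hg => ?_) (Ideal.span_le.2 ?_)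
  · obtain ⟨u, hu, -⟩ := hadamard g
    rw [mem_mId_iff.1 hg, map_zero, zero_add] at hu
    rw [hu]
    exact Ideal.sum_mem _ fun j _ => Ideal.mul_mem_right _ _ (Ideal.subset_span ⟨j, rfl⟩)
  · rintro _ ⟨i, rfl⟩
    exact coordG_mem i

lemma eq_zero_of_mem_pow {g : On n} (h : ∀ k, g ∈ mId n ^ k) : g = 0 :=
  co_ext fun α => by rw [map_zero]; exact mem_pow_iff.1 (h (α.degree + 1)) α (Nat.lt_succ_self _)

lemma finite_degree_lt (k : ℕ) : Finite {α : Fin n →₀ ℕ // α.degree < k} := by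
  have : {α : Fin n →₀ ℕ | α.degree < k} = ↑((Finset.range k).biUnion (degFin n)) := by
    ext α; simp [mem_degFin]
  have h2 : {α : Fin n →₀ ℕ | α.degree < k}.Finite := by rw [this]; exact Finset.finite_toSet _
  exact h2.to_subtype

instance finite_quot_pow (k : ℕ) : FiniteDimensional ℂ (On n ⧸ mId n ^ k) := by
  have := finite_degree_lt (n := n) k
  let L : On n →ₗ[ℂ] ({α : Fin n →₀ ℕ // α.degree < k} → ℂ) := LinearMap.pi fun α => co α.1
  have hL : (mId n ^ k).restrictScalars ℂ = LinearMap.ker L := by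
    ext g
    simp only [Submodule.restrictScalars_mem, mem_pow_iff, LinearMap.mem_ker, L, funext_iff,
      LinearMap.pi_apply, Subtype.forall, Pi.zero_apply]
  let L' : (On n ⧸ (mId n ^ k).restrictScalars ℂ) →ₗ[ℂ] ({α : Fin n →₀ ℕ // α.degree < k} → ℂ) :=
    Submodule.liftQ _ L hL.le
  have hinj : Function.Injective L' := by
    rw [← LinearMap.ker_eq_bot]
    exact Submodule.ker_liftQ_eq_bot _ _ _ hL.ge
  exact FiniteDimensional.of_injective L' hinj

/-! ### Derivations -/

lemma rep_pd {g : On n} {f : (Fin n → ℂ) → ℂ} (h : On.rep g =ᶠ[𝓝 0] f) (i : Fin n) :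
    On.rep (pd i g) =ᶠ[𝓝 0] fun x => fderiv ℂ f x (Pi.single i 1) := by
  refine (rep_mkOn _).trans ?_
  filter_upwards [h.fderiv (𝕜 := ℂ)] with x hx
  rw [hx]

lemma pd_add (i : Fin n) (g h : On n) : pd i (g + h) = pd i g + pd i h := by
  refine On.coe_ext ((rep_pd (rep_add g h) i).trans (EventuallyEq.trans ?_ (rep_add _ _).symm))
  filter_upwards [rep_pd (EventuallyEq.refl _ (On.rep g)) i, rep_pd (EventuallyEq.refl _ (On.rep h)) i,
    (On.rep_analyticAt g).eventually_analyticAt, (On.rep_analyticAt h).eventually_analyticAt]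
    with x h1 h2 h3 h4
  rw [fderiv_add h3.differentiableAt h4.differentiableAt, Pi.add_apply, h1, h2]
  rfl

lemma pd_mul (i : Fin n) (g h : On n) : pd i (g * h) = g * pd i h + h * pd i g := by
  refine On.coe_ext ((rep_pd (rep_mul g h) i).trans (EventuallyEq.trans ?_ (rep_add _ _).symm))
  filter_upwards [rep_pd (EventuallyEq.refl _ (On.rep g)) i, rep_pd (EventuallyEq.refl _ (On.rep h)) i,
    (On.rep_analyticAt g).eventually_analyticAt, (On.rep_analyticAt h).eventually_analyticAt,
    rep_mul g (pd i h), rep_mul h (pd i g)]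
    with x h1 h2 h3 h4 h5 h6
  rw [fderiv_mul h3.differentiableAt h4.differentiableAt, Pi.add_apply, h5, h6, Pi.mul_apply,
    Pi.mul_apply, h1, h2]
  rfl

lemma pd_algebraMap (i : Fin n) (c : ℂ) : pd i (algebraMap ℂ (On n) c) = 0 := by
  have h0 : On.rep (0 : On n) =ᶠ[𝓝 0] fun _ => 0 := by
    rw [← map_zero (algebraMap ℂ (On n))]; exact rep_algebraMap 0
  refine On.coe_ext ((rep_pd (rep_algebraMap c) i).trans (EventuallyEq.trans ?_ h0.symm))
  filter_upwards with x
  simp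

lemma pd_smul (i : Fin n) (c : ℂ) (g : On n) : pd i (c • g) = c • pd i g := by
  rw [Algebra.smul_def, pd_mul, pd_algebraMap, mul_zero, add_zero, Algebra.smul_def]

lemma pd_coordG (i j : Fin n) : pd i (coordG j) = if i = j then 1 else 0 := by
  have e : (if i = j then (1 : On n) else 0) = algebraMap ℂ (On n) (if i = j then 1 else 0) := by
    split_ifs <;> simp
  rw [e]
  refine On.coe_ext ((rep_pd (rep_mkOn _) i).trans (EventuallyEq.trans ?_ (rep_algebraMap _).symm))
  filter_upwards with x
  have : (fun x : Fin n → ℂ => x j) =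
    (ContinuousLinearMap.proj (R := ℂ) (φ := fun _ : Fin n => ℂ) j) := rfl
  rw [this, ContinuousLinearMap.fderiv, ContinuousLinearMap.proj_apply, Pi.single_apply]
  simp [eq_comm]

/-- The partial derivative as a derivation. -/
def pdD (i : Fin n) : Derivation ℂ (On n) (On n) :=
  Derivation.mk' { toFun := pd i, map_add' := pd_add i, map_smul' := pd_smul i } (pd_mul i)

lemma pdD_apply (i : Fin n) (g : On n) : pdD i g = pd i g := rfl

/-- A vector field as a derivation. -/
def VD (δ : Fin n → On n) : Derivation ℂ (On n) (On n) := ∑ i, δ i • pdD i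

lemma VD_apply (δ : Fin n → On n) (g : On n) : VD δ g = applyVF δ g := by
  have : ∀ s : Finset (Fin n), (∑ i ∈ s, δ i • pdD i : Derivation ℂ (On n) (On n)) g =
      ∑ i ∈ s, δ i * pd i g := by
    classical
    intro s
    induction s using Finset.induction_on with
    | empty => simp
    | insert a s ha ih => rw [Finset.sum_insert ha, Finset.sum_insert ha, Derivation.add_apply, ih]; rfl
  exact this _

lemma VD_coordG (δ : Fin n → On n) (j : Fin n) : VD δ (coordG j) = δ j := by
  rw [VD_apply, applyVF]
  simp [pd_coordG]

lemma TT_der_zero (D : On n →ₗ[ℂ] MvPowerSeries (Fin n) ℂ)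
    (hm : ∀ g h, D (g * h) = TT n g * D h + TT n h * D g)
    (hx : ∀ j, D (coordG j) = 0) (g : On n) : D g = 0 := by
  have h1 : D 1 = 0 := by
    have := hm 1 1
    rw [mul_one, map_one (TT n), one_mul] at this
    simpa using this
  have hc : ∀ c, D (algebraMap ℂ (On n) c) = 0 := by
    intro c; rw [Algebra.algebraMap_eq_smul_one, map_smul, h1, smul_zero]
  have : ∀ k : ℕ, ∀ g, ∀ α : Fin n →₀ ℕ, α.degree < k → MvPowerSeries.coeff α (D g) = 0 := by
    intro k
    induction k with
    | zero => intro g α h; exact absurd h (Nat.not_lt_zero _)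
    | succ k ih =>
      intro g α hα
      obtain ⟨u, hu, -⟩ := hadamard g
      rw [hu, map_add, hc, zero_add, map_sum, map_sum]
      refine Finset.sum_eq_zero fun j _ => ?_
      rw [hm, hx, mul_zero, add_zero, TT_coordG, coeff_X_mul']
      split_ifs with h0
      · rfl
      · refine ih _ _ ?_
        have e : α - Finsupp.single j 1 + Finsupp.single j 1 = α :=
          tsub_add_cancel_of_le (by rw [Finsupp.single_le_iff]; omega)
        have := congrArg Finsupp.degree e
        rw [map_add, Finsupp.degree_single] at this
        omega
  ext α
  exact this _ g α (Nat.lt_succ_self _)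

lemma der_ext {D E : Derivation ℂ (On n) (On n)} (h : ∀ j, D (coordG j) = E (coordG j)) : D = E := by
  ext g
  apply congrArg
  rw [← sub_eq_zero]
  apply TT_injective
  rw [map_zero]
  refine TT_der_zero ((TT n).toLinearMap ∘ₗ (D - E).toLinearMap) (fun g h => ?_) (fun j => ?_) g
  · simp [Derivation.leibniz]
    ring
  · simp [h]

lemma der_eq_VD (D : Derivation ℂ (On n) (On n)) : D = VD fun j => D (coordG j) :=
  der_ext fun j => by rw [VD_coordG]

lemma TT_pd (i : Fin n) (g : On n) : TT n (pd i g) = MvPowerSeries.pderiv ℂ i (TT n g) := by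
  rw [← sub_eq_zero]
  refine TT_der_zero ((TT n).toLinearMap ∘ₗ (pdD i).toLinearMap -
    (MvPowerSeries.pderiv ℂ i).toLinearMap ∘ₗ (TT n).toLinearMap) (fun g h => ?_) (fun j => ?_) g
  · simp [Derivation.leibniz]
    ring
  · simp only [LinearMap.sub_apply, LinearMap.comp_apply, AlgHom.toLinearMap_apply,
      Derivation.coeFn_coe, pdD_apply, pd_coordG, TT_coordG]
    by_cases h : i = j
    · subst h; simp [MvPowerSeries.pderiv_X_self]
    · rw [if_neg h, map_zero, MvPowerSeries.pderiv_X_of_ne (Ne.symm h)]; simp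

lemma co_pd (i : Fin n) (g : On n) (α : Fin n →₀ ℕ) :
    co α (pd i g) = co (α + Finsupp.single i 1) g * (α i + 1) := by
  rw [co_def, TT_pd, MvPowerSeries.coeff_pderiv, co_def]

lemma der_mem_pow (D : Derivation ℂ (On n) (On n)) {k : ℕ} {g : On n} (h : g ∈ mId n ^ (k + 1)) :
    D g ∈ mId n ^ k := by
  rw [der_eq_VD D, VD_apply]
  refine Ideal.sum_mem _ fun i _ => Ideal.mul_mem_left _ _ (mem_pow_iff.2 fun α hα => ?_)
  rw [co_pd, mem_pow_iff.1 h _ (by rw [map_add, Finsupp.degree_single]; omega), zero_mul]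

lemma der_mem_pow' {D : Derivation ℂ (On n) (On n)} (hD : ∀ g ∈ mId n, D g ∈ mId n) {k : ℕ}
    {g : On n} (h : g ∈ mId n ^ k) : D g ∈ mId n ^ k := by
  cases k with
  | zero => simp
  | succ k =>
    rw [der_eq_VD D, VD_apply]
    refine Ideal.sum_mem _ fun i _ => ?_
    rw [pow_succ']
    refine Ideal.mul_mem_mul (hD _ (coordG_mem i)) ?_
    rw [← pdD_apply]
    exact der_mem_pow _ h

/-! ### Perturbation lemma in weighted `ℓ¹` -/

lemma l1_summable {ι : Type*} (v : lp (fun _ : ι => ℂ) 1) : Summable fun i => ‖v i‖ := by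
  have := (memℓp_gen_iff (p := 1) (by norm_num)).1 (lp.memℓp v)
  simpa using this

lemma l1_norm {ι : Type*} (v : lp (fun _ : ι => ℂ) 1) : ‖v‖ = ∑' i, ‖v i‖ := by
  have := lp.norm_rpow_eq_tsum (p := 1) (by norm_num) v
  simpa using this

/-- Build an element of `ℓ¹`. -/
def l1mk {ι : Type*} (u : ι → ℂ) (h : Summable fun i => ‖u i‖) : lp (fun _ : ι => ℂ) 1 :=
  ⟨u, (memℓp_gen (p := 1) (by simpa using h))⟩

lemma l1_solve {ι : Type*} (p : ι → lp (fun _ : ι => ℂ) 1) (hp : ∀ β, ‖p β‖ ≤ 1 / 2)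
    (g : lp (fun _ : ι => ℂ) 1) :
    ∃ v : lp (fun _ : ι => ℂ) 1, HasSum (fun β => v β • p β) (g - v) := by
  have hle : ∀ (v : lp (fun _ : ι => ℂ) 1) β, ‖v β • p β‖ ≤ ‖v β‖ * (1 / 2) := by
    intro v β
    rw [norm_smul]
    exact mul_le_mul_of_nonneg_left (hp β) (norm_nonneg _)
  have hs : ∀ v : lp (fun _ : ι => ℂ) 1, Summable fun β => v β • p β := fun v =>
    Summable.of_norm_bounded ((l1_summable v).mul_right (1/2)) (hle v)
  let M0 : lp (fun _ : ι => ℂ) 1 →ₗ[ℂ] lp (fun _ : ι => ℂ) 1 :=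
    { toFun := fun v => ∑' β, v β • p β
      map_add' := by
        intro v w
        rw [← (hs v).tsum_add (hs w)]
        exact tsum_congr fun β => by rw [lp.coeFn_add, Pi.add_apply, add_smul]
      map_smul' := by
        intro c v
        rw [RingHom.id_apply, ← (hs v).tsum_const_smul c]
        exact tsum_congr fun β => by rw [lp.coeFn_smul, Pi.smul_apply, smul_assoc] }
  have hM : ∀ v, ‖M0 v‖ ≤ (1 / 2) * ‖v‖ := by
    intro v
    change ‖∑' β, v β • p β‖ ≤ _
    rw [l1_norm v, mul_comm, ← tsum_mul_right]
    exact tsum_of_norm_bounded ((l1_summable v).mul_right (1/2)).hasSum (hle v)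
  let M : lp (fun _ : ι => ℂ) 1 →L[ℂ] lp (fun _ : ι => ℂ) 1 := M0.mkContinuous (1/2) hM
  have hMn : ‖-M‖ < 1 := by
    rw [norm_neg]
    exact lt_of_le_of_lt (M0.mkContinuous_norm_le (by norm_num) hM) (by norm_num)
  obtain ⟨u, hu⟩ := (isUnit_one_sub_of_norm_lt_one hMn).exists_right_inv
  refine ⟨u g, ?_⟩
  have h1 := congrArg (fun L : lp (fun _ : ι => ℂ) 1 →L[ℂ] lp (fun _ : ι => ℂ) 1 => L g) hu
  have h2 : u g + M (u g) = g := by simpa using h1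
  have h3 : g - u g = M (u g) := sub_eq_of_eq_add' h2.symm
  rw [h3]
  exact (hs (u g)).hasSum

lemma pertK {ι : Type*} (ρ : ι → ℝ) (hρ : ∀ i, 0 < ρ i) (P : ι → ι → ℂ)
    (hP : ∀ β, Summable fun γ => ‖P β γ‖ * ρ γ)
    (hP2 : ∀ β, ∑' γ, ‖P β γ‖ * ρ γ ≤ 1 / 2 * ρ β)
    (g : ι → ℂ) (hg : Summable fun γ => ‖g γ‖ * ρ γ) :
    ∃ v : ι → ℂ, (Summable fun γ => ‖v γ‖ * ρ γ) ∧
      ∀ γ, HasSum (fun β => v β * P β γ) (g γ - v γ) := by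
  have hn : ∀ i, ‖(ρ i : ℂ)‖ = ρ i := fun i => by
    rw [Complex.norm_real, Real.norm_of_nonneg (hρ i).le]
  have hne : ∀ i, (ρ i : ℂ) ≠ 0 := fun i => by exact_mod_cast (hρ i).ne'
  have hpn : ∀ β γ, ‖P β γ * ρ γ / ρ β‖ = ‖P β γ‖ * ρ γ * (ρ β)⁻¹ := by
    intro β γ; rw [norm_div, norm_mul, hn, hn, div_eq_mul_inv]
  have hps : ∀ β, Summable fun γ => ‖P β γ * ρ γ / ρ β‖ := by
    intro β
    simp only [hpn]
    exact (hP β).mul_right _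
  let p : ι → lp (fun _ : ι => ℂ) 1 := fun β => l1mk (fun γ => P β γ * ρ γ / ρ β) (hps β)
  have hpv : ∀ β γ, p β γ = P β γ * ρ γ / ρ β := fun _ _ => rfl
  have hp : ∀ β, ‖p β‖ ≤ 1 / 2 := by
    intro β
    rw [l1_norm]
    simp only [hpv, hpn]
    rw [tsum_mul_right, ← div_eq_mul_inv, div_le_iff₀ (hρ β)]
    exact hP2 β
  have hgs : Summable fun γ => ‖g γ * ρ γ‖ := by
    simp only [norm_mul, hn]; exact hg
  obtain ⟨v, hv⟩ := l1_solve p hp (l1mk _ hgs)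
  refine ⟨fun γ => v γ / ρ γ, ?_, fun γ => ?_⟩
  · refine (l1_summable v).congr fun γ => ?_
    rw [norm_div, hn, div_mul_cancel₀ _ (hρ γ).ne']
  · have h1 := (lp.evalCLM ℂ (fun _ : ι => ℂ) 1 γ).hasSum hv
    have h2 : HasSum (fun β => v β * (P β γ * ρ γ / ρ β)) (g γ * ρ γ - v γ) := h1
    have h3 := h2.mul_right (ρ γ : ℂ)⁻¹
    have e1 : (fun β => v β * (P β γ * ρ γ / ρ β) * (ρ γ : ℂ)⁻¹) = fun β => v β / ρ β * P β γ := by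
      funext β
      have := hne β
      have := hne γ
      field_simp
    have e2 : (g γ * ρ γ - v γ) * (ρ γ : ℂ)⁻¹ = g γ - v γ / ρ γ := by
      have := hne γ
      field_simp
    rw [e1, e2] at h3
    exact h3

/-! ### Weighted norms -/

lemma dickson (E : Set (Fin n →₀ ℕ)) : ∃ (S : Finset (Fin n →₀ ℕ)) (a : (Fin n →₀ ℕ) → (Fin n →₀ ℕ)),
    (∀ α ∈ S, α ∈ E) ∧ ∀ β ∈ E, a β ∈ S ∧ a β ≤ β := by
  classical
  have hf : {x | Minimal (· ∈ E) x}.Finite :=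
    (setOfPred_minimal_antichain (· ∈ E)).finite_of_wellQuasiOrdered wellQuasiOrdered_le
  have h : ∀ β, ∃ a, β ∈ E → a ∈ hf.toFinset ∧ a ≤ β := by
    intro β
    by_cases hβ : β ∈ E
    · obtain ⟨a, h1, h2⟩ := exists_minimal_le_of_wellFoundedLT (· ∈ E) β hβ
      exact ⟨a, fun _ => ⟨by simpa using h2, h1⟩⟩
    · exact ⟨0, fun h => absurd h hβ⟩
  choose a ha using h
  refine ⟨hf.toFinset, a, fun α hα => ?_, ha⟩
  have : Minimal (· ∈ E) α := by simpa using hα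
  exact this.prop

/-- Weighted `ℓ¹` norm of a power series. -/
def nrm (r : Fin n → ℝ) (a : MvPowerSeries (Fin n) ℂ) : ℝ :=
  ∑' α, ‖MvPowerSeries.coeff α a‖ * mon r α

lemma nrm_nonneg {r : Fin n → ℝ} (hr : ∀ i, 0 ≤ r i) (a : MvPowerSeries (Fin n) ℂ) : 0 ≤ nrm r a :=
  tsum_nonneg fun α => mul_nonneg (norm_nonneg _) (mon_nonneg hr α)

lemma gen_cauchy_real {ι : Type*} [AddCommMonoid ι] [Finset.HasAntidiagonal ι] {u v : ι → ℝ}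
    (hu : Summable u) (hv : Summable v) (hu0 : ∀ i, 0 ≤ u i) (hv0 : ∀ i, 0 ≤ v i) :
    HasSum (fun i => ∑ kl ∈ Finset.HasAntidiagonal.antidiagonal i, u kl.1 * v kl.2)
      ((∑' i, u i) * ∑' i, v i) := by
  have h : Summable fun x : ι × ι => u x.1 * v x.2 := hu.mul_of_nonneg hv hu0 hv0
  rw [Summable.tsum_mul_tsum_eq_tsum_sum_antidiagonal (f := u) (g := v) hu hv h]
  exact (summable_sum_mul_antidiagonal_of_summable_mul (f := u) (g := v) h).hasSum

lemma nrm_mul_le {r : Fin n → ℝ} (hr : ∀ i, 0 ≤ r i) {a b : MvPowerSeries (Fin n) ℂ}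
    (ha : SW r a) (hb : SW r b) : nrm r (a * b) ≤ nrm r a * nrm r b := by
  classical
  have h0 : ∀ (a : MvPowerSeries (Fin n) ℂ) α, 0 ≤ ‖MvPowerSeries.coeff α a‖ * mon r α := fun a α =>
    mul_nonneg (norm_nonneg _) (mon_nonneg hr α)
  have h1 := gen_cauchy_real (u := fun α => ‖MvPowerSeries.coeff α a‖ * mon r α)
    (v := fun α => ‖MvPowerSeries.coeff α b‖ * mon r α) ha hb (h0 a) (h0 b)
  unfold nrm
  rw [← h1.tsum_eq]
  have h2 : Summable fun α => ‖MvPowerSeries.coeff α (a * b)‖ * mon r α := ha.mul hr hb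
  refine h2.tsum_le_tsum (fun α => ?_) h1.summable
  rw [MvPowerSeries.coeff_mul]
  calc _ ≤ (∑ p ∈ Finset.HasAntidiagonal.antidiagonal α, ‖MvPowerSeries.coeff p.1 a *
        MvPowerSeries.coeff p.2 b‖) * mon r α :=
        mul_le_mul_of_nonneg_right (norm_sum_le _ _) (mon_nonneg hr α)
    _ = _ := by
        rw [Finset.sum_mul]
        refine Finset.sum_congr rfl fun p hp => ?_
        rw [← Finset.HasAntidiagonal.mem_antidiagonal.1 hp, mon_add, norm_mul]; ring

lemma nrm_add_le {r : Fin n → ℝ} (hr : ∀ i, 0 ≤ r i) {a b : MvPowerSeries (Fin n) ℂ}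
    (ha : SW r a) (hb : SW r b) : nrm r (a + b) ≤ nrm r a + nrm r b := by
  have ha' : Summable fun α => ‖MvPowerSeries.coeff α a‖ * mon r α := ha
  have hb' : Summable fun α => ‖MvPowerSeries.coeff α b‖ * mon r α := hb
  have hab' : Summable fun α => ‖MvPowerSeries.coeff α (a + b)‖ * mon r α := ha.add hr hb
  unfold nrm
  rw [← ha'.tsum_add hb']
  refine hab'.tsum_le_tsum (fun α => ?_) (ha'.add hb')
  rw [map_add, ← add_mul]
  exact mul_le_mul_of_nonneg_right (norm_add_le _ _) (mon_nonneg hr α)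

lemma SW_zero (r : Fin n → ℝ) : SW r 0 := by
  unfold SW
  simp only [map_zero, norm_zero, zero_mul]
  exact summable_zero

lemma nrm_zero (r : Fin n → ℝ) : nrm r 0 = 0 := by
  unfold nrm
  simp

lemma SW_sum {ι : Type*} {r : Fin n → ℝ} (hr : ∀ i, 0 ≤ r i) (s : Finset ι)
    (a : ι → MvPowerSeries (Fin n) ℂ) (h : ∀ i ∈ s, SW r (a i)) : SW r (∑ i ∈ s, a i) := by
  classical
  induction s using Finset.induction_on with
  | empty => rw [Finset.sum_empty]; exact SW_zero r
  | insert i s hi ih =>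
    rw [Finset.sum_insert hi]
    exact (h i (by simp)).add hr (ih fun j hj => h j (by simp [hj]))

lemma nrm_sum_le {ι : Type*} {r : Fin n → ℝ} (hr : ∀ i, 0 ≤ r i) (s : Finset ι)
    (a : ι → MvPowerSeries (Fin n) ℂ) (h : ∀ i ∈ s, SW r (a i)) :
    nrm r (∑ i ∈ s, a i) ≤ ∑ i ∈ s, nrm r (a i) := by
  classical
  induction s using Finset.induction_on with
  | empty => simp [nrm_zero]
  | insert i s hi ih =>
    rw [Finset.sum_insert hi, Finset.sum_insert hi]
    refine (nrm_add_le hr (h i (by simp)) (SW_sum hr s a fun j hj => h j (by simp [hj]))).trans ?_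
    exact add_le_add le_rfl (ih fun j hj => h j (by simp [hj]))

lemma monomial_hasSum (r : Fin n → ℝ) (β : Fin n →₀ ℕ) (c : ℂ) :
    HasSum (fun α => ‖MvPowerSeries.coeff α (MvPowerSeries.monomial β c)‖ * mon r α)
      (‖c‖ * mon r β) := by
  classical
  have := hasSum_single (f := fun α => ‖MvPowerSeries.coeff α (MvPowerSeries.monomial β c)‖ * mon r α) β
      (fun α hα => by rw [MvPowerSeries.coeff_monomial, if_neg hα]; simp)
  simpa [MvPowerSeries.coeff_monomial] using this

lemma SW_monomial (r : Fin n → ℝ) (β : Fin n →₀ ℕ) (c : ℂ) : SW r (MvPowerSeries.monomial β c) :=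
  (monomial_hasSum r β c).summable

lemma nrm_monomial (r : Fin n → ℝ) (β : Fin n →₀ ℕ) (c : ℂ) :
    nrm r (MvPowerSeries.monomial β c) = ‖c‖ * mon r β :=
  (monomial_hasSum r β c).tsum_eq

lemma hasSum_coeff_mul (a b : MvPowerSeries (Fin n) ℂ) (γ : Fin n →₀ ℕ) :
    HasSum (fun δ => MvPowerSeries.coeff δ a * MvPowerSeries.coeff γ (MvPowerSeries.monomial δ 1 * b))
      (MvPowerSeries.coeff γ (a * b)) := by
  classical
  rw [MvPowerSeries.coeff_mul]
  have h1 : ∑ p ∈ Finset.HasAntidiagonal.antidiagonal γ, MvPowerSeries.coeff p.1 a *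
      MvPowerSeries.coeff p.2 b = ∑ δ ∈ (Finset.HasAntidiagonal.antidiagonal γ).image Prod.fst,
      MvPowerSeries.coeff δ a * MvPowerSeries.coeff γ (MvPowerSeries.monomial δ 1 * b) := by
    rw [Finset.sum_image]
    · refine Finset.sum_congr rfl fun p hp => ?_
      rw [Finset.HasAntidiagonal.mem_antidiagonal] at hp
      rw [← hp, MvPowerSeries.coeff_add_monomial_mul, one_mul]
    · intro p hp q hq h
      have hp' := Finset.HasAntidiagonal.mem_antidiagonal.1 hp
      have hq' := Finset.HasAntidiagonal.mem_antidiagonal.1 hq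
      refine Prod.ext h ?_
      rw [← hq', ← h] at hp'
      exact add_left_cancel hp'
  rw [h1]
  refine hasSum_sum_of_ne_finset_zero fun δ hδ => ?_
  rw [MvPowerSeries.coeff_monomial_mul, if_neg, mul_zero]
  intro hle
  apply hδ
  rw [Finset.mem_image]
  exact ⟨(δ, γ - δ), Finset.HasAntidiagonal.mem_antidiagonal.2 (add_tsub_cancel_of_le hle), rfl⟩

/-! ### Noetherianity -/

/-- Primes used as weights. -/
def pw (i : Fin n) : ℕ := Nat.nth Nat.Prime i

lemma pw_prime (i : Fin n) : (pw i).Prime := Nat.prime_nth_prime i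

lemma pw_inj : Function.Injective (pw (n := n)) := by
  intro i j h
  exact Fin.ext (Nat.nth_injective Nat.infinite_setOfPred_prime h)

/-- Multiplicative weight. -/
def NN (α : Fin n →₀ ℕ) : ℕ := mon pw α

lemma NN_pos (α : Fin n →₀ ℕ) : 0 < NN α := by
  unfold NN mon
  exact Finset.prod_pos fun i _ => pow_pos (pw_prime i).pos _

lemma NN_inj : Function.Injective (NN (n := n)) := by
  have key : ∀ (α : Fin n →₀ ℕ) (j : Fin n), (NN α).factorization (pw j) = α j := by
    intro α j
    unfold NN mon
    rw [Nat.factorization_prod fun i _ => pow_ne_zero _ (pw_prime i).ne_zero, Finsupp.finset_sum_apply,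
      Finset.sum_eq_single j]
    · rw [(pw_prime j).factorization_pow, Finsupp.single_eq_same]
    · intro i _ hi
      rw [(pw_prime i).factorization_pow, Finsupp.single_apply, if_neg]
      exact fun h => hi (pw_inj h)
    · simp
  intro α β h
  ext j
  rw [← key α j, ← key β j, h]

lemma NN_add (α β : Fin n →₀ ℕ) : NN (α + β) = NN α * NN β := mon_add _ _ _

/-- The polyradius attached to the weights. -/
def rs (s : ℕ) (i : Fin n) : ℝ := ((pw i : ℝ) ^ s)⁻¹

lemma rs_pos (s : ℕ) (i : Fin n) : 0 < rs s i := by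
  have := (pw_prime i).pos
  unfold rs; positivity

lemma mon_rs (s : ℕ) (α : Fin n →₀ ℕ) : mon (rs s) α = ((NN α : ℝ) ^ s)⁻¹ := by
  unfold mon rs NN mon
  push_cast
  rw [← Finset.prod_pow, ← Finset.prod_inv_distrib]
  refine Finset.prod_congr rfl fun i _ => ?_
  rw [inv_pow, ← pow_mul, ← pow_mul, mul_comm]

lemma rs_anti {s t : ℕ} (h : s ≤ t) (i : Fin n) : rs t i ≤ rs s i := by
  have h1 : (1 : ℝ) ≤ pw i := by exact_mod_cast (pw_prime i).one_lt.le
  unfold rs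
  exact inv_anti₀ (by positivity) (pow_le_pow_right₀ h1 h)

lemma exists_rs_SW (g : On n) : ∃ s0, ∀ s ≥ s0, SW (rs s) (TT n g) := by
  obtain ⟨t, ht, h⟩ := TT_SW g
  obtain ⟨s, hs⟩ := exists_pow_lt_of_lt_one ht (by norm_num : (1/2 : ℝ) < 1)
  refine ⟨s, fun s' hs' => h.mono (fun i => (rs_pos _ i).le) fun i => (rs_anti hs' i).trans ?_⟩
  refine le_trans ?_ hs.le
  unfold rs
  rw [one_div, inv_pow]
  have h1 : (2 : ℝ) ≤ pw i := by exact_mod_cast (pw_prime i).two_le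
  exact inv_anti₀ (by positivity) (pow_le_pow_left₀ (by norm_num) h1 s)

lemma exists_rs_dom (g : On n) (α : Fin n →₀ ℕ) (h : ∀ β, co β g ≠ 0 → NN α ≤ NN β)
    (h1 : co α g = 1) : ∃ s0, ∀ s ≥ s0, SW (rs s) (TT n g - MvPowerSeries.monomial α 1) ∧
      nrm (rs s) (TT n g - MvPowerSeries.monomial α 1) ≤ 1 / 2 * mon (rs s) α := by
  classical
  obtain ⟨s0, hs0⟩ := exists_rs_SW g
  set a := TT n g - MvPowerSeries.monomial α 1 with ha
  have hSW : ∀ s ≥ s0, SW (rs s) a := by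
    intro s hs
    rw [ha, sub_eq_add_neg, ← map_neg]
    exact (hs0 s hs).add (fun i => (rs_pos s i).le) (SW_monomial _ _ _)
  have hsupp : ∀ γ, MvPowerSeries.coeff γ a ≠ 0 → NN α + 1 ≤ NN γ := by
    intro γ hγ
    by_cases hc : γ = α
    · subst hc
      rw [ha, map_sub, ← co_def, h1, MvPowerSeries.coeff_monomial, if_pos rfl] at hγ
      simp at hγ
    · rw [ha, map_sub, MvPowerSeries.coeff_monomial, if_neg hc, sub_zero, ← co_def] at hγ
      refine lt_of_le_of_ne (h γ hγ) fun e => hc (NN_inj e.symm)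
  have hA : (0 : ℝ) < NN α := by exact_mod_cast NN_pos α
  set q : ℝ := NN α / (NN α + 1) with hq
  have hq0 : 0 < q := by positivity
  have hq1 : q < 1 := by rw [hq, div_lt_one (by positivity)]; linarith
  set C := nrm (rs s0) a with hC
  have hC0 : 0 ≤ C := nrm_nonneg (fun i => (rs_pos _ i).le) _
  obtain ⟨e, he⟩ := exists_pow_lt_of_lt_one (show 0 < (1 / 2 * mon (rs s0) α) / (C + 1) by
    have := mon_pos (rs_pos (n := n) s0) α
    positivity) hq1
  refine ⟨s0 + e, fun s hs => ⟨hSW s (by omega), ?_⟩⟩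
  obtain ⟨d, rfl⟩ := Nat.exists_eq_add_of_le (show s0 ≤ s by omega)
  have hd : e ≤ d := by omega
  have hsplit : ∀ γ : Fin n →₀ ℕ, mon (rs (s0 + d)) γ = mon (rs s0) γ * ((NN γ : ℝ) ^ d)⁻¹ := by
    intro γ; rw [mon_rs, mon_rs, pow_add, mul_inv]
  have hle : ∀ γ, ‖MvPowerSeries.coeff γ a‖ * mon (rs (s0 + d)) γ ≤
      ‖MvPowerSeries.coeff γ a‖ * mon (rs s0) γ * (((NN α : ℝ) ^ d)⁻¹ * q ^ d) := by
    intro γ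
    by_cases h0 : MvPowerSeries.coeff γ a = 0
    · simp [h0]
    · have h2 : (NN α : ℝ) + 1 ≤ NN γ := by exact_mod_cast hsupp γ h0
      rw [hsplit, mul_assoc]
      refine mul_le_mul_of_nonneg_left (mul_le_mul_of_nonneg_left ?_
        (mon_nonneg (fun i => (rs_pos _ i).le) _)) (norm_nonneg _)
      rw [← inv_pow, ← inv_pow, ← mul_pow]
      refine pow_le_pow_left₀ (by positivity) ?_ _
      rw [hq]
      have : (NN α : ℝ)⁻¹ * (NN α / (NN α + 1)) = (NN α + 1 : ℝ)⁻¹ := by field_simp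
      rw [this]
      exact inv_anti₀ (by positivity) h2
  have hsum0 : Summable fun γ => ‖MvPowerSeries.coeff γ a‖ * mon (rs s0) γ := hSW s0 le_rfl
  have hsum1 : Summable fun γ => ‖MvPowerSeries.coeff γ a‖ * mon (rs (s0 + d)) γ :=
    hSW _ (by omega)
  have h3 : nrm (rs (s0 + d)) a ≤ C * (((NN α : ℝ) ^ d)⁻¹ * q ^ d) := by
    rw [hC]; unfold nrm
    rw [← tsum_mul_right]
    exact hsum1.tsum_le_tsum hle (hsum0.mul_right _)
  refine h3.trans ?_
  have h4 : q ^ d ≤ q ^ e := pow_le_pow_of_le_one hq0.le hq1.le hd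
  have h5 : C * q ^ d ≤ 1 / 2 * mon (rs s0) α := by
    have h6 : q ^ e * (C + 1) < 1 / 2 * mon (rs s0) α := by
      rwa [lt_div_iff₀ (by positivity)] at he
    have : 0 ≤ q ^ e := by positivity
    nlinarith
  rw [hsplit α]
  calc _ = C * q ^ d * ((NN α : ℝ) ^ d)⁻¹ := by ring
    _ ≤ (1 / 2 * mon (rs s0) α) * ((NN α : ℝ) ^ d)⁻¹ :=
      mul_le_mul_of_nonneg_right h5 (by positivity)
    _ = _ := by ring

lemma TT_mon (β : Fin n →₀ ℕ) : TT n (mon coordG β) = MvPowerSeries.monomial β 1 := by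
  unfold mon
  rw [map_prod]
  simp only [map_pow, TT_coordG]
  rw [MvPowerSeries.monomial_one_eq]
  rw [Finsupp.prod_fintype _ _ (by simp)]


/-- Division by a finite family with dominating leading terms. -/
lemma division (E : Set (Fin n →₀ ℕ)) (S : Finset (Fin n →₀ ℕ)) (a : (Fin n →₀ ℕ) → (Fin n →₀ ℕ))
    (ha : ∀ β ∈ E, a β ∈ S ∧ a β ≤ β) (G : (Fin n →₀ ℕ) → On n) (r : Fin n → ℝ)
    (hr : ∀ i, 0 < r i)
    (hG : ∀ α ∈ S, SW r (TT n (G α) - MvPowerSeries.monomial α 1) ∧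
      nrm r (TT n (G α) - MvPowerSeries.monomial α 1) ≤ 1 / 2 * mon r α)
    (g : On n) (hg : SW r (TT n g)) :
    ∃ (q : (Fin n →₀ ℕ) → On n) (u : On n), g = u + ∑ α ∈ S, q α * G α ∧ ∀ β ∈ E, co β u = 0 := by
  classical
  have hr' : ∀ i, 0 ≤ r i := fun i => (hr i).le
  set P : (Fin n →₀ ℕ) → MvPowerSeries (Fin n) ℂ := fun β => if β ∈ E then
    MvPowerSeries.monomial (β - a β) 1 * (TT n (G (a β)) - MvPowerSeries.monomial (a β) 1) else 0
    with hPdef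
  have hP1 : ∀ β, SW r (P β) := by
    intro β
    simp only [hPdef]
    split_ifs with h
    · exact (SW_monomial _ _ _).mul hr' (hG _ (ha β h).1).1
    · exact SW_zero r
  have hP2 : ∀ β, nrm r (P β) ≤ 1 / 2 * mon r β := by
    intro β
    simp only [hPdef]
    split_ifs with h
    · refine (nrm_mul_le hr' (SW_monomial _ _ _) (hG _ (ha β h).1).1).trans ?_
      rw [nrm_monomial, norm_one, one_mul]
      refine (mul_le_mul_of_nonneg_left (hG _ (ha β h).1).2 (mon_nonneg hr' _)).trans ?_
      have e : mon r β = mon r (β - a β) * mon r (a β) := by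
        rw [← mon_add, tsub_add_cancel_of_le (ha β h).2]
      rw [e]
      exact le_of_eq (by ring)
    · rw [nrm_zero]
      have := mon_nonneg hr' β
      positivity
  obtain ⟨v, hv, hv2⟩ := pertK (mon r) (mon_pos hr) (fun β γ => MvPowerSeries.coeff γ (P β)) hP1 hP2
    (fun γ => co γ g) hg
  let Q : (Fin n →₀ ℕ) → MvPowerSeries (Fin n) ℂ := fun α δ =>
    if δ + α ∈ E ∧ a (δ + α) = α then v (δ + α) else 0
  have hQ : ∀ α δ, MvPowerSeries.coeff δ (Q α) =
    if δ + α ∈ E ∧ a (δ + α) = α then v (δ + α) else 0 := fun _ _ => rfl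
  have hQS : ∀ α, SW r (Q α) := by
    intro α
    have h1 : Summable fun δ : Fin n →₀ ℕ => ‖v (δ + α)‖ * mon r (δ + α) :=
      Summable.comp_injective (f := fun δ : Fin n →₀ ℕ => ‖v δ‖ * mon r δ) hv (i := fun δ => δ + α)
        (add_left_injective _)
    refine SW.of_le hr' (h1.mul_right (mon r α)⁻¹) fun δ => ?_
    have h2 := mon_pos hr α
    rw [mon_add, mul_assoc, mul_assoc, mul_inv_cancel₀ h2.ne', mul_one]
    refine mul_le_mul_of_nonneg_right ?_ (mon_nonneg hr' _)
    rw [hQ]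
    split_ifs
    · rfl
    · simp
  choose q hq using fun α => exists_TT_of_SW' hr (hQS α)
  have hmain : ∀ γ, co γ g = (if γ ∈ E then 0 else v γ) + ∑ α ∈ S, co γ (q α * G α) := by
    intro γ
    have h1 : ∀ α ∈ S, HasSum (fun β => if β ∈ E ∧ a β = α then
        v β * MvPowerSeries.coeff γ (MvPowerSeries.monomial (β - α) 1 * TT n (G α)) else 0)
        (co γ (q α * G α)) := by
      intro α hα
      have h2 := hasSum_coeff_mul (Q α) (TT n (G α)) γ
      rw [← hq α, ← map_mul, ← co_def] at h2
      rw [← Function.Injective.hasSum_iff (g := fun δ => δ + α) (add_left_injective α)]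
      · convert h2 using 2 with δ
        simp only [Function.comp, add_tsub_cancel_right, hq, hQ]
        split_ifs <;> simp
      · intro β hβ
        rw [if_neg]
        rintro ⟨h3, h4⟩
        exact hβ ⟨β - α, tsub_add_cancel_of_le (h4 ▸ (ha β h3).2)⟩
    have h2 := hasSum_sum h1
    have h3 : HasSum (fun β => if β ∈ E then 0 else v β * (if γ = β then 1 else 0))
        (if γ ∈ E then 0 else v γ) := by
      have := hasSum_single (f := fun β => if β ∈ E then 0 else v β * (if γ = β then 1 else 0)) γ
        (fun β hβ => by simp [hβ.symm])
      simpa using this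
    have h4 : HasSum (fun β => v β * (if γ = β then 1 else 0)) (v γ) := by
      have := hasSum_single (f := fun β => v β * (if γ = β then (1:ℂ) else 0)) γ
        (fun β hβ => by simp [hβ.symm])
      simpa using this
    have h5 := (hv2 γ).add h4
    rw [sub_add_cancel] at h5
    refine h5.unique ?_
    convert h3.add h2 using 2 with β
    by_cases hβ : β ∈ E
    · rw [if_pos hβ, zero_add, Finset.sum_eq_single (a β)]
      · rw [if_pos (show β ∈ E ∧ a β = a β from ⟨hβ, rfl⟩)]
        simp only [hPdef, if_pos hβ]
        rw [mul_sub, map_sub, MvPowerSeries.monomial_mul_monomial,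
          tsub_add_cancel_of_le (ha β hβ).2, MvPowerSeries.coeff_monomial, one_mul, mul_sub,
          sub_add_cancel]
      · intro b _ hb
        rw [if_neg]
        exact fun h => hb h.2.symm
      · intro h; exact absurd (ha β hβ).1 h
    · simp only [hPdef, if_neg hβ]
      rw [Finset.sum_eq_zero]
      · simp
      · intro α _
        rw [if_neg fun h => hβ h.1]
  refine ⟨q, g - ∑ α ∈ S, q α * G α, by ring, fun β hβ => ?_⟩
  rw [map_sub, map_sum, hmain β, if_pos hβ]
  ring

instance : IsNoetherianRing (On n) := by
  classical
  rw [isNoetherianRing_iff_ideal_fg]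
  intro I
  let E : Set (Fin n →₀ ℕ) := {α | ∃ g ∈ I, co α g = 1 ∧ ∀ β, co β g ≠ 0 → NN α ≤ NN β}
  obtain ⟨S, a, hS, ha⟩ := dickson E
  have : ∀ α, ∃ g : On n, α ∈ S → g ∈ I ∧ co α g = 1 ∧ ∀ β, co β g ≠ 0 → NN α ≤ NN β := by
    intro α
    by_cases h : α ∈ S
    · obtain ⟨g, hg⟩ := hS α h
      exact ⟨g, fun _ => hg⟩
    · exact ⟨0, fun h' => absurd h' h⟩
  choose G hG using this
  have : ∀ α, ∃ s0, α ∈ S → ∀ s ≥ s0, SW (rs s) (TT n (G α) - MvPowerSeries.monomial α 1) ∧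
      nrm (rs s) (TT n (G α) - MvPowerSeries.monomial α 1) ≤ 1 / 2 * mon (rs s) α := by
    intro α
    by_cases h : α ∈ S
    · obtain ⟨s0, h0⟩ := exists_rs_dom (G α) α (hG α h).2.2 (hG α h).2.1
      exact ⟨s0, fun _ => h0⟩
    · exact ⟨0, fun h' => absurd h' h⟩
  choose s0 hs0 using this
  refine ⟨S.image G, le_antisymm (Ideal.span_le.2 ?_) fun g hg => ?_⟩
  · intro x hx
    rw [Finset.coe_image] at hx
    obtain ⟨α, hα, rfl⟩ := hx
    exact (hG α hα).1
  obtain ⟨s1, hs1⟩ := exists_rs_SW g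
  set s := s1 + ∑ α ∈ S, s0 α with hsdef
  obtain ⟨q, u, h1, h2⟩ := division E S a ha G (rs s) (rs_pos s) (fun α hα => hs0 α hα s (by
    have := Finset.single_le_sum (f := s0) (fun _ _ => Nat.zero_le _) hα
    omega)) g (hs1 s (by omega))
  have hsp : ∑ α ∈ S, q α * G α ∈ Ideal.span (↑(S.image G) : Set (On n)) :=
    Ideal.sum_mem _ fun α hα => Ideal.mul_mem_left _ _
      (Ideal.subset_span (by simpa using ⟨α, hα, rfl⟩))
  have hsI : ∑ α ∈ S, q α * G α ∈ I :=
    Ideal.sum_mem _ fun α hα => Ideal.mul_mem_left _ _ (hG α hα).1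
  have hu : u ∈ I := by
    have : u = g - ∑ α ∈ S, q α * G α := by rw [h1]; ring
    rw [this]; exact Ideal.sub_mem _ hg hsI
  have hu0 : u = 0 := by
    by_contra hne
    have hex : ∃ α, co α u ≠ 0 := by
      by_contra hc
      push Not at hc
      exact hne (co_ext fun α => by rw [hc α, map_zero])
    have hex2 : ∃ k, ∃ α, co α u ≠ 0 ∧ NN α = k := by
      obtain ⟨α, hα⟩ := hex
      exact ⟨_, α, hα, rfl⟩
    obtain ⟨α, hα, hk⟩ := Nat.find_spec hex2
    refine hα (h2 α ⟨(co α u)⁻¹ • u, ?_, ?_, ?_⟩)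
    · rw [Algebra.smul_def]; exact Ideal.mul_mem_left _ _ hu
    · rw [map_smul, smul_eq_mul, inv_mul_cancel₀ hα]
    · intro β hβ
      rw [hk]
      refine Nat.find_min' hex2 ⟨β, fun h => hβ ?_, rfl⟩
      rw [map_smul, h, smul_zero]
  rw [h1, hu0, zero_add]
  exact hsp

lemma tends0 {ψ : (Fin n → ℂ) → (Fin n → ℂ)} (hψ : AnalyticAt ℂ ψ 0) (h0 : ψ 0 = 0) :
    Tendsto ψ (𝓝 0) (𝓝 0) := by
  have h := hψ.continuousAt
  rwa [ContinuousAt, h0] at h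

lemma comp_analytic {ψ : (Fin n → ℂ) → (Fin n → ℂ)} (hψ : AnalyticAt ℂ ψ 0) (h0 : ψ 0 = 0)
    {g : (Fin n → ℂ) → ℂ} (hg : AnalyticAt ℂ g 0) : AnalyticAt ℂ (g ∘ ψ) 0 := by
  rw [← h0] at hg
  exact hg.comp hψ

lemma rep_congr_comp {ψ : (Fin n → ℂ) → (Fin n → ℂ)} (hψ : AnalyticAt ℂ ψ 0) (h0 : ψ 0 = 0)
    {g h : (Fin n → ℂ) → ℂ} (e : g =ᶠ[𝓝 0] h) : g ∘ ψ =ᶠ[𝓝 0] h ∘ ψ :=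
  e.comp_tendsto (tends0 hψ h0)

/-- Composition of germs with an analytic map fixing the origin. -/
def pbA (ψ : (Fin n → ℂ) → (Fin n → ℂ)) (hψ : AnalyticAt ℂ ψ 0) (h0 : ψ 0 = 0) :
    On n →ₐ[ℂ] On n :=
  AlgHom.mk' 
    { toFun := fun g => mkOn (On.rep g ∘ ψ) (comp_analytic hψ h0 (On.rep_analyticAt g))
      map_one' := by
        refine On.coe_ext ((rep_mkOn _).trans ?_)
        have h1 : On.rep (1 : On n) =ᶠ[𝓝 0] fun _ => 1 := by
          rw [← map_one (algebraMap ℂ (On n))]; exact rep_algebraMap 1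
        exact (rep_congr_comp hψ h0 h1).trans h1.symm
      map_mul' := fun g h => by
        refine On.coe_ext ((rep_mkOn _).trans ((rep_congr_comp hψ h0 (rep_mul g h)).trans ?_))
        exact ((rep_mul _ _).trans ((rep_mkOn _).mul (rep_mkOn _))).symm
      map_zero' := by
        refine On.coe_ext ((rep_mkOn _).trans ?_)
        have h1 : On.rep (0 : On n) =ᶠ[𝓝 0] fun _ => 0 := by
          rw [← map_zero (algebraMap ℂ (On n))]; exact rep_algebraMap 0
        exact (rep_congr_comp hψ h0 h1).trans h1.symm
      map_add' := fun g h => by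
        refine On.coe_ext ((rep_mkOn _).trans ((rep_congr_comp hψ h0 (rep_add g h)).trans ?_))
        exact ((rep_add _ _).trans ((rep_mkOn _).add (rep_mkOn _))).symm }
    (fun c g => by
      have hs : ∀ g : On n, On.rep (c • g) =ᶠ[𝓝 0] fun x => c * On.rep g x := by
        intro g
        rw [Algebra.smul_def]
        refine (rep_mul _ _).trans ?_
        filter_upwards [rep_algebraMap (n := n) c] with x hx
        rw [Pi.mul_apply, hx]
      refine On.coe_ext ((rep_mkOn (comp_analytic hψ h0 (On.rep_analyticAt (c • g)))).trans ((rep_congr_comp hψ h0 (hs g)).trans ?_))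
      refine ((hs _).trans ?_).symm
      filter_upwards [rep_mkOn (comp_analytic hψ h0 (On.rep_analyticAt g))] with x hx
      exact congrArg (c * ·) hx)

lemma rep_pbA {ψ : (Fin n → ℂ) → (Fin n → ℂ)} (hψ : AnalyticAt ℂ ψ 0) (h0 : ψ 0 = 0) (g : On n) :
    On.rep (pbA ψ hψ h0 g) =ᶠ[𝓝 0] On.rep g ∘ ψ :=
  rep_mkOn (comp_analytic hψ h0 (On.rep_analyticAt g))

lemma pullback_eq (φ : CoordChange n) (g : On n) :
    pullback φ g = pbA φ.toFun φ.analyticAt φ.map_zero g := by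
  apply Subtype.ext
  change (g : Filter.Germ (𝓝 (0 : Fin n → ℂ)) ℂ).compTendsto φ.toFun φ.tendsto =
    ((On.rep g ∘ φ.toFun : (Fin n → ℂ) → ℂ) : Filter.Germ (𝓝 (0 : Fin n → ℂ)) ℂ)
  rw [← On.rep_spec g]
  rfl

lemma rep_coordG (i : Fin n) : On.rep (coordG i) =ᶠ[𝓝 0] fun x => x i := rep_mkOn _

lemma rep_pbA_coordG {ψ : (Fin n → ℂ) → (Fin n → ℂ)} (hψ : AnalyticAt ℂ ψ 0) (h0 : ψ 0 = 0)
    (i : Fin n) : On.rep (pbA ψ hψ h0 (coordG i)) =ᶠ[𝓝 0] fun x => ψ x i :=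
  (rep_pbA hψ h0 _).trans (rep_congr_comp hψ h0 (rep_coordG i))

/-- The pullback by a coordinate change as an algebra automorphism. -/
def pbE (φ : CoordChange n) : On n ≃ₐ[ℂ] On n :=
  AlgEquiv.ofAlgHom (pbA φ.toFun φ.analyticAt φ.map_zero)
    (pbA φ.invFun φ.inv_analyticAt φ.inv_map_zero)
    (by
      ext1 g
      refine On.coe_ext ((rep_pbA φ.analyticAt φ.map_zero _).trans ((rep_congr_comp φ.analyticAt φ.map_zero
        (rep_pbA φ.inv_analyticAt φ.inv_map_zero g)).trans ?_))
      filter_upwards [φ.left_inv] with x hx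
      simp [hx])
    (by
      ext1 g
      refine On.coe_ext ((rep_pbA φ.inv_analyticAt φ.inv_map_zero _).trans ((rep_congr_comp φ.inv_analyticAt φ.inv_map_zero
        (rep_pbA φ.analyticAt φ.map_zero g)).trans ?_))
      filter_upwards [φ.right_inv] with x hx
      simp [hx])

lemma pbE_apply (φ : CoordChange n) (g : On n) : pbE φ g = pullback φ g := (pullback_eq φ g).symm

/-- The projection killing the first `j` coordinates. -/
def prj (n j : ℕ) : (Fin n → ℂ) → (Fin n → ℂ) := fun x i => if i.1 < j then 0 else x i

lemma prj_analytic (j : ℕ) : AnalyticAt ℂ (prj n j) 0 := by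
  rw [analyticAt_pi_iff]
  intro i
  unfold prj
  split_ifs
  · exact analyticAt_const
  · exact (ContinuousLinearMap.proj (R := ℂ) (φ := fun _ : Fin n => ℂ) i).analyticAt _

lemma prj_zero (j : ℕ) : prj n j 0 = 0 := by ext i; simp [prj]

lemma prj_comp (j : ℕ) (x : Fin n → ℂ) : prj n j (prj n (j+1) x) = prj n (j+1) x := by
  ext i; simp only [prj]; split_ifs <;> first | rfl | omega

/-- chain of primes -/
def PP (n j : ℕ) : Ideal (On n) := RingHom.ker (pbA (prj n j) (prj_analytic j) (prj_zero j))

instance (j : ℕ) : (PP n j).IsPrime := RingHom.ker_isPrime _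

lemma PP_lt {j : ℕ} (hj : j < n) : PP n j < PP n (j+1) := by
  refine lt_of_le_of_ne ?_ ?_
  · intro g hg
    rw [PP, RingHom.mem_ker] at hg ⊢
    have : pbA (prj n (j+1)) (prj_analytic _) (prj_zero _)
      (pbA (prj n j) (prj_analytic _) (prj_zero _) g) = pbA (prj n (j+1)) (prj_analytic _) (prj_zero _) g := by
      refine On.coe_ext ((rep_pbA _ _ _).trans ((rep_congr_comp (prj_analytic _) (prj_zero _)
        (rep_pbA _ _ _)).trans ((rep_pbA _ _ _).trans ?_).symm))
      filter_upwards with x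
      simp [prj_comp]
    rw [← this, hg, map_zero]
  · intro h
    have h1 : coordG ⟨j, hj⟩ ∈ PP n (j+1) := by
      rw [PP, RingHom.mem_ker]
      refine On.coe_ext ((rep_pbA_coordG _ _ _).trans ?_)
      have h1 : On.rep (0 : On n) =ᶠ[𝓝 0] fun _ => 0 := by
        rw [← map_zero (algebraMap ℂ (On n))]; exact rep_algebraMap 0
      refine EventuallyEq.trans ?_ h1.symm
      filter_upwards with x
      simp [prj]
    rw [← h, PP, RingHom.mem_ker] at h1
    have h2 : pbA (prj n j) (prj_analytic _) (prj_zero _) (coordG ⟨j, hj⟩) = coordG ⟨j, hj⟩ := by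
      refine On.coe_ext ((rep_pbA_coordG _ _ _).trans (EventuallyEq.trans ?_ (rep_coordG _).symm))
      filter_upwards with x
      simp [prj]
    have h3 := TT_coordG (⟨j, hj⟩ : Fin n)
    rw [← h2, h1, map_zero] at h3
    have h4 := congrArg (MvPowerSeries.coeff (Finsupp.single (⟨j, hj⟩ : Fin n) 1)) h3
    simp [MvPowerSeries.coeff_X] at h4

lemma height_PP : ∀ j : ℕ, j ≤ n → (j : ℕ∞) ≤ (PP n j).height := by
  intro j
  induction j with
  | zero => intro _; simp
  | succ j ih =>
    intro hj
    refine le_trans ?_ (Ideal.height_add_one_le_of_lt_of_isPrime (PP_lt (n := n) (j := j) (by omega)))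
    push_cast
    gcongr
    exact ih (by omega)

lemma height_mId : (n : ℕ∞) ≤ (mId n).height :=
  (height_PP n le_rfl).trans (Ideal.height_mono (by
    rw [← maximalIdeal_eq]; exact IsLocalRing.le_maximalIdeal (Ideal.IsPrime.ne_top inferInstance)))

lemma card_ge {s : Set (On n)} (hs : s.Finite) (h1 : Ideal.span s ≤ mId n) {N : ℕ}
    (h2 : mId n ^ N ≤ Ideal.span s) : n ≤ s.ncard := by
  have h : mId n ∈ (Ideal.span s).minimalPrimes := by
    refine ⟨⟨inferInstance, h1⟩, fun q hq _ => ?_⟩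
    haveI := hq.1
    exact Ideal.IsPrime.le_of_pow_le (h2.trans hq.2)
  exact_mod_cast (height_mId (n := n)).trans (Ideal.height_le_card_of_mem_minimalPrimes_span hs h)

lemma rep_pd_zero (j : Fin n) (g : On n) :
    co 0 (pd j g) = fderiv ℂ (On.rep g) 0 (Pi.single j 1) := by
  rw [← rep_zero_eq]
  exact (rep_pd (EventuallyEq.refl _ (On.rep g)) j).self_of_nhds

lemma fderiv_rep (g : On n) (v : Fin n → ℂ) :
    fderiv ℂ (On.rep g) 0 v = co 0 (VD (fun j => algebraMap ℂ (On n) (v j)) g) := by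
  have hv : v = ∑ j, v j • (Pi.single j (1:ℂ) : Fin n → ℂ) := by
    ext i; simp [Finset.sum_apply, Pi.single_apply]
  rw [VD_apply, applyVF, map_sum]
  conv_lhs => rw [hv]
  rw [map_sum]
  refine Finset.sum_congr rfl fun j _ => ?_
  rw [map_smul, ← rep_pd_zero, ← Algebra.smul_def, map_smul]

/-- Germs in the maximal ideal generating the cotangent space form a coordinate system. -/
theorem exists_coord (y : Fin n → On n) (hy : ∀ i, y i ∈ mId n)
    (h : mId n ≤ Ideal.span (Set.range y) ⊔ mId n ^ 2) :
    ∃ φ : CoordChange n, ∀ i, pullback φ (y i) = coordG i := by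
  set Y : (Fin n → ℂ) → (Fin n → ℂ) := fun x i => On.rep (y i) x with hYdef
  have hY : AnalyticAt ℂ Y 0 := by
    rw [analyticAt_pi_iff]; exact fun i => On.rep_analyticAt (y i)
  have hY0 : Y 0 = 0 := by
    ext i; simp only [hYdef, rep_zero_eq]; exact mem_mId_iff.1 (hy i)
  have hder : ∀ v i, fderiv ℂ Y 0 v i = fderiv ℂ (On.rep (y i)) 0 v := by
    intro v i
    rw [hYdef, fderiv_pi (fun i => (On.rep_analyticAt (y i)).differentiableAt)]
    rfl
  have hinj : Function.Injective (fderiv ℂ Y 0 : (Fin n → ℂ) →ₗ[ℂ] (Fin n → ℂ)) := by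
    rw [← LinearMap.ker_eq_bot, LinearMap.ker_eq_bot']
    intro v hv
    set D := VD (fun j => algebraMap ℂ (On n) (v j)) with hD
    have hyD : ∀ i, D (y i) ∈ mId n := by
      intro i
      rw [mem_mId_iff, hD, ← fderiv_rep, ← hder]
      exact congrFun hv i
    have hspan : ∀ g ∈ Ideal.span (Set.range y), g ∈ mId n ∧ D g ∈ mId n := by
      intro g hg
      induction hg using Submodule.span_induction with
      | mem x hx => obtain ⟨i, rfl⟩ := hx; exact ⟨hy i, hyD i⟩
      | zero => simp
      | add a b _ _ ha hb => rw [map_add]; exact ⟨add_mem ha.1 hb.1, add_mem ha.2 hb.2⟩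
      | smul r a _ ha =>
        rw [smul_eq_mul, Derivation.leibniz]
        exact ⟨Ideal.mul_mem_left _ _ ha.1, add_mem (Ideal.mul_mem_left _ _ ha.2)
          (Ideal.mul_mem_right _ _ ha.1)⟩
    ext j
    have hj := h (coordG_mem j)
    obtain ⟨a, ha, b, hb, hab⟩ := Submodule.mem_sup.1 hj
    have h1 : D (coordG j) ∈ mId n := by
      rw [← hab, map_add]
      refine add_mem (hspan a ha).2 ?_
      have := der_mem_pow D (k := 1) hb
      rwa [pow_one] at this
    rw [hD, VD_coordG, mem_mId_iff, Algebra.algebraMap_eq_smul_one, map_smul, co_zero_one] at h1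
    simpa using h1
  let L : (Fin n → ℂ) ≃L[ℂ] (Fin n → ℂ) :=
    (LinearEquiv.ofInjectiveEndo _ hinj).toContinuousLinearEquiv
  have hL : (L : (Fin n → ℂ) →L[ℂ] (Fin n → ℂ)) = fderiv ℂ Y 0 := by
    ext v i; rfl
  have hs : HasStrictFDerivAt Y (L : (Fin n → ℂ) →L[ℂ] (Fin n → ℂ)) 0 := by
    rw [hL]; exact hY.hasStrictFDerivAt
  have hZ0 : hs.localInverse Y L 0 0 = 0 := by
    have := hs.localInverse_apply_image
    rwa [hY0] at this
  have hZ : AnalyticAt ℂ (hs.localInverse Y L 0) 0 := by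
    have := OpenPartialHomeomorph.analyticAt_symm' (i := L) (hs.toOpenPartialHomeomorph Y) (a := 0)
      hs.mem_toOpenPartialHomeomorph_source hY hL.symm
    rw [hs.toOpenPartialHomeomorph_coe, hY0] at this
    exact this
  let φ : CoordChange n :=
    { toFun := hs.localInverse Y L 0
      invFun := Y
      analyticAt := hZ
      inv_analyticAt := hY
      map_zero := hZ0
      inv_map_zero := hY0
      left_inv := by have := hs.eventually_right_inverse; rwa [hY0] at this
      right_inv := hs.eventually_left_inverse }
  refine ⟨φ, fun i => ?_⟩
  rw [pullback_eq]
  refine On.coe_ext ((rep_pbA φ.analyticAt φ.map_zero _).trans (EventuallyEq.trans ?_ (rep_coordG _).symm))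
  filter_upwards [φ.left_inv] with x hx
  exact congrFun hx i

/-- Conjugation of a derivation by an automorphism. -/
def conjD (σ : On n ≃ₐ[ℂ] On n) (D : Derivation ℂ (On n) (On n)) : Derivation ℂ (On n) (On n) :=
  Derivation.mk' (σ.toLinearMap ∘ₗ D.toLinearMap ∘ₗ σ.symm.toLinearMap) fun a b => by
    simp [Derivation.leibniz]

lemma conjD_apply (σ : On n ≃ₐ[ℂ] On n) (D : Derivation ℂ (On n) (On n)) (g : On n) :
    conjD σ D g = σ (D (σ.symm g)) := rfl

lemma conjD_apply' (σ : On n ≃ₐ[ℂ] On n) (D : Derivation ℂ (On n) (On n)) (g : On n) :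
    conjD σ D (σ g) = σ (D g) := by rw [conjD_apply, σ.symm_apply_apply]

lemma map_mId (σ : On n ≃ₐ[ℂ] On n) {g : On n} : σ g ∈ mId n ↔ g ∈ mId n := by
  rw [← maximalIdeal_eq, IsLocalRing.mem_maximalIdeal, IsLocalRing.mem_maximalIdeal,
    mem_nonunits_iff, mem_nonunits_iff, not_iff_not]
  exact MulEquiv.isUnit_map σ

lemma map_mId_eq (σ : On n ≃ₐ[ℂ] On n) : Ideal.map σ (mId n) = mId n := by
  apply le_antisymm
  · rw [Ideal.map_le_iff_le_comap]
    intro g hg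
    exact (map_mId σ).2 hg
  · intro g hg
    have := Ideal.mem_map_of_mem σ ((map_mId σ.symm).2 hg)
    rwa [σ.apply_symm_apply] at this

lemma map_pow_mem (σ : On n ≃ₐ[ℂ] On n) {g : On n} {k : ℕ} (h : g ∈ mId n ^ k) :
    σ g ∈ mId n ^ k := by
  have := Ideal.mem_map_of_mem σ h
  rwa [Ideal.map_pow, map_mId_eq] at this

lemma map_pow_mem_iff (σ : On n ≃ₐ[ℂ] On n) {g : On n} {k : ℕ} :
    σ g ∈ mId n ^ k ↔ g ∈ mId n ^ k := by
  refine ⟨fun h => ?_, map_pow_mem σ⟩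
  have := map_pow_mem σ.symm h
  rwa [σ.symm_apply_apply] at this

lemma der_mem_Jac (D : Derivation ℂ (On n) (On n)) (f : On n) : D f ∈ Jac n f := by
  rw [der_eq_VD D, VD_apply]
  exact Ideal.sum_mem _ fun i _ => Ideal.mul_mem_left _ _ (Ideal.subset_span ⟨i, rfl⟩)

lemma map_Jac (σ : On n ≃ₐ[ℂ] On n) (f : On n) : Ideal.map σ (Jac n f) ≤ Jac n (σ f) := by
  rw [Jac, Ideal.map_span, Ideal.span_le]
  rintro _ ⟨_, ⟨i, rfl⟩, rfl⟩
  change σ (pd i f) ∈ Jac n (σ f)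
  have : σ (pd i f) = conjD σ (pdD i) (σ f) := by rw [conjD_apply', pdD_apply]
  rw [this]
  exact der_mem_Jac _ _

lemma pow_le_Jac_map (σ : On n ≃ₐ[ℂ] On n) {f : On n} {N : ℕ} (h : mId n ^ N ≤ Jac n f) :
    mId n ^ N ≤ Jac n (σ f) := by
  refine le_trans ?_ (map_Jac σ f)
  rw [← map_mId_eq σ, ← Ideal.map_pow]
  exact Ideal.map_mono h

/-- `D - μ` as an endomorphism. -/
def dl (D : Derivation ℂ (On n) (On n)) (μ : ℂ) : Module.End ℂ (On n) :=
  D.toLinearMap - μ • (1 : Module.End ℂ (On n))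

lemma dl_apply (D : Derivation ℂ (On n) (On n)) (μ : ℂ) (g : On n) : dl D μ g = D g - μ • g := rfl

/-- stable ideals -/
def Stb (D : Derivation ℂ (On n) (On n)) (I : Ideal (On n)) : Prop := ∀ g ∈ I, D g ∈ I

lemma csmul_mem (I : Ideal (On n)) {g : On n} (c : ℂ) (hg : g ∈ I) : c • g ∈ I := by
  rw [Algebra.smul_def]; exact Ideal.mul_mem_left _ _ hg

lemma Stb.dl_mem {D : Derivation ℂ (On n) (On n)} {I : Ideal (On n)} (h : Stb D I) (μ : ℂ) {g : On n}
    (hg : g ∈ I) : dl D μ g ∈ I := by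
  rw [dl_apply]; exact sub_mem (h g hg) (csmul_mem I μ hg)

lemma Stb.dl_pow_mem {D : Derivation ℂ (On n) (On n)} {I : Ideal (On n)} (h : Stb D I) (μ : ℂ) {g : On n}
    (hg : g ∈ I) (p : ℕ) : (dl D μ ^ p) g ∈ I := by
  induction p with
  | zero => simpa using hg
  | succ p ih => rw [pow_succ', Module.End.mul_apply]; exact h.dl_mem μ ih

/-- induced endomorphism of the quotient -/
def TQ {D : Derivation ℂ (On n) (On n)} {I : Ideal (On n)} (h : Stb D I) :
    Module.End ℂ (On n ⧸ I.restrictScalars ℂ) :=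
  (I.restrictScalars ℂ).mapQ (I.restrictScalars ℂ) D.toLinearMap h

lemma TQ_pow {D : Derivation ℂ (On n) (On n)} {I : Ideal (On n)} (h : Stb D I) (μ : ℂ) (p : ℕ) (g : On n) :
    ((TQ h - μ • (1 : Module.End ℂ (On n ⧸ I.restrictScalars ℂ)) : Module.End ℂ (On n ⧸ I.restrictScalars ℂ)) ^ p) ((I.restrictScalars ℂ).mkQ g) =
      (I.restrictScalars ℂ).mkQ ((dl D μ ^ p) g) := by
  induction p with
  | zero => rfl
  | succ p ih =>
    rw [pow_succ', pow_succ', Module.End.mul_apply, Module.End.mul_apply, ih, dl_apply, map_sub, map_smul]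
    rfl

/-- generalized eigenvectors modulo `I` -/
def GE {D : Derivation ℂ (On n) (On n)} {I : Ideal (On n)} (h : Stb D I) (μ : ℂ) :
    Submodule ℂ (On n) :=
  ((TQ h).maxGenEigenspace μ).comap (I.restrictScalars ℂ).mkQ

lemma mem_GE {D : Derivation ℂ (On n) (On n)} {I : Ideal (On n)} {h : Stb D I} {μ : ℂ} {g : On n} :
    g ∈ GE h μ ↔ ∃ p : ℕ, (dl D μ ^ p) g ∈ I := by
  rw [GE, Submodule.mem_comap, Module.End.mem_maxGenEigenspace]
  refine exists_congr fun p => ?_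
  rw [TQ_pow, Submodule.mkQ_apply, Submodule.Quotient.mk_eq_zero]
  rfl

lemma le_GE {D : Derivation ℂ (On n) (On n)} {I : Ideal (On n)} (h : Stb D I) (μ : ℂ) {g : On n}
    (hg : g ∈ I) : g ∈ GE h μ := mem_GE.2 ⟨0, by simpa using hg⟩

lemma GE_of_dl {D : Derivation ℂ (On n) (On n)} {I : Ideal (On n)} {h : Stb D I} {μ : ℂ} {g : On n}
    (hg : dl D μ g ∈ GE h μ) : g ∈ GE h μ := by
  obtain ⟨p, hp⟩ := mem_GE.1 hg
  exact mem_GE.2 ⟨p + 1, by rwa [pow_succ, Module.End.mul_apply]⟩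

lemma GE_mul {D : Derivation ℂ (On n) (On n)} {I : Ideal (On n)} {h : Stb D I} {μ ν : ℂ} {a b : On n}
    (ha : a ∈ GE h μ) (hb : b ∈ GE h ν) : a * b ∈ GE h (μ + ν) := by
  obtain ⟨p, hp⟩ := mem_GE.1 ha
  obtain ⟨q, hq⟩ := mem_GE.1 hb
  have key : ∀ k p q : ℕ, p + q ≤ k → ∀ a b : On n, (dl D μ ^ p) a ∈ I → (dl D ν ^ q) b ∈ I →
      a * b ∈ GE h (μ + ν) := by
    intro k
    induction k with
    | zero =>
      intro p q hk a b ha hb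
      obtain rfl : p = 0 := by omega
      exact le_GE h _ (Ideal.mul_mem_right _ _ (by simpa using ha))
    | succ k ih =>
      intro p q hk a b ha hb
      rcases Nat.eq_zero_or_pos p with rfl | hp
      · exact le_GE h _ (Ideal.mul_mem_right _ _ (by simpa using ha))
      rcases Nat.eq_zero_or_pos q with rfl | hq
      · exact le_GE h _ (Ideal.mul_mem_left _ _ (by simpa using hb))
      obtain ⟨p, rfl⟩ := Nat.exists_eq_succ_of_ne_zero hp.ne'
      obtain ⟨q, rfl⟩ := Nat.exists_eq_succ_of_ne_zero hq.ne'
      apply GE_of_dl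
      have e : dl D (μ + ν) (a * b) = dl D μ a * b + a * dl D ν b := by
        simp only [dl_apply, Derivation.leibniz, smul_eq_mul, add_smul, sub_mul, mul_sub,
          smul_mul_assoc, mul_smul_comm]
        ring
      rw [e]
      refine add_mem (ih p (q+1) (by omega) _ _ ?_ hb) (ih (p+1) q (by omega) _ _ ha ?_)
      · rwa [Nat.succ_eq_add_one, pow_succ, Module.End.mul_apply] at ha
      · rwa [Nat.succ_eq_add_one, pow_succ, Module.End.mul_apply] at hb
  exact key _ p q le_rfl a b hp hq

lemma GE_one {D : Derivation ℂ (On n) (On n)} {I : Ideal (On n)} (h : Stb D I) : (1 : On n) ∈ GE h 0 :=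
  mem_GE.2 ⟨1, by simp [dl_apply]⟩

lemma GE_pow {D : Derivation ℂ (On n) (On n)} {I : Ideal (On n)} {h : Stb D I} {μ : ℂ} {a : On n}
    (ha : a ∈ GE h μ) (k : ℕ) : a ^ k ∈ GE h (k * μ) := by
  induction k with
  | zero => simpa using GE_one h
  | succ k ih =>
    rw [pow_succ]
    have := GE_mul ih ha
    convert this using 2
    push_cast; ring

/-- pairing of weights and exponents -/
def wt (l : Fin n → ℂ) (α : Fin n →₀ ℕ) : ℂ := ∑ i, (α i : ℂ) * l i

lemma GE_mon {D : Derivation ℂ (On n) (On n)} {I : Ideal (On n)} {h : Stb D I} {l : Fin n → ℂ}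
    (hx : ∀ i, coordG i ∈ GE h (l i)) (α : Fin n →₀ ℕ) : mon coordG α ∈ GE h (wt l α) := by
  classical
  have : ∀ s : Finset (Fin n), ∏ i ∈ s, coordG i ^ α i ∈ GE h (∑ i ∈ s, (α i : ℂ) * l i) := by
    intro s
    induction s using Finset.induction_on with
    | empty => simpa using GE_one h
    | insert a s ha ih =>
      rw [Finset.prod_insert ha, Finset.sum_insert ha]
      exact GE_mul (GE_pow (hx a) _) ih
  have := this Finset.univ
  unfold mon wt
  convert this using 1

lemma GE_indep {D : Derivation ℂ (On n) (On n)} {I : Ideal (On n)} {h : Stb D I} {μ : ℂ} {g : On n}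
    (h1 : g ∈ GE h μ) (h2 : g ∈ ⨆ (ν) (_ : ν ≠ μ), GE h ν) : g ∈ I := by
  have hd := (TQ h).independent_maxGenEigenspace μ
  have h3 : (I.restrictScalars ℂ).mkQ g ∈ ⨆ (ν) (_ : ν ≠ μ), (TQ h).maxGenEigenspace ν := by
    have := Submodule.mem_map_of_mem (f := (I.restrictScalars ℂ).mkQ) h2
    simp only [Submodule.map_iSup] at this
    have hm := iSup₂_mono (fun (ν : ℂ) (_ : ν ≠ μ) =>
      Submodule.map_comap_le (I.restrictScalars ℂ).mkQ ((TQ h).maxGenEigenspace ν))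
    exact hm this
  have h4 := Submodule.disjoint_def.1 hd _ h1 h3
  rwa [Submodule.mkQ_apply, Submodule.Quotient.mk_eq_zero] at h4

lemma Stb_pow {D : Derivation ℂ (On n) (On n)} (hD : ∀ g ∈ mId n, D g ∈ mId n) (k : ℕ) :
    Stb D (mId n ^ k) := fun _ hg => der_mem_pow' hD hg

lemma Stb_bot (D : Derivation ℂ (On n) (On n)) : Stb D ⊥ := by
  intro g hg
  rw [Ideal.mem_bot] at hg ⊢
  rw [hg, map_zero]

instance finQ (k : ℕ) : FiniteDimensional ℂ (On n ⧸ (mId n ^ k).restrictScalars ℂ) :=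
  Module.Finite.equiv (Submodule.Quotient.restrictScalarsEquiv ℂ (mId n ^ k)).symm

lemma GE_decomp {D : Derivation ℂ (On n) (On n)} {k : ℕ} (h : Stb D (mId n ^ k))
    (p : Submodule ℂ (On n)) (hp : ∀ g ∈ p, D g ∈ p) :
    p ≤ (⨆ μ, p ⊓ GE h μ) ⊔ (mId n ^ k).restrictScalars ℂ := by
  set I := (mId n ^ k).restrictScalars ℂ with hI
  have e := Submodule.eq_iSup_inf_genEigenspace (p := p.map I.mkQ) (f := TQ h) ⊤ (by
    rintro _ ⟨g, hg, rfl⟩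
    exact ⟨D g, hp g hg, rfl⟩) ((TQ h).iSup_maxGenEigenspace_eq_top)
  intro g hg
  have h1 : I.mkQ g ∈ p.map I.mkQ := Submodule.mem_map_of_mem hg
  rw [e] at h1
  have h2 : (⨆ μ, p.map I.mkQ ⊓ (TQ h).genEigenspace μ ⊤) ≤ (⨆ μ, p ⊓ GE h μ).map I.mkQ := by
    rw [Submodule.map_iSup]
    refine iSup_mono fun μ => ?_
    rintro _ ⟨⟨u, hu, rfl⟩, hu2⟩
    exact ⟨u, ⟨hu, hu2⟩, rfl⟩
  obtain ⟨u, hu, hu2⟩ := h2 h1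
  rw [← sub_eq_zero, ← map_sub, Submodule.mkQ_apply, Submodule.Quotient.mk_eq_zero] at hu2
  have : g = u + (g - u) := by abel
  rw [this]
  refine Submodule.add_mem_sup hu ?_
  rw [← neg_sub]
  exact neg_mem hu2

lemma GE_mono {D : Derivation ℂ (On n) (On n)} {I J : Ideal (On n)} (h : Stb D I) (h' : Stb D J)
    (hIJ : I ≤ J) (μ : ℂ) : GE h μ ≤ GE h' μ := by
  intro g hg
  obtain ⟨p, hp⟩ := mem_GE.1 hg
  exact mem_GE.2 ⟨p, hIJ hp⟩

/-- lifting generalized eigenvectors -/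
lemma GE_lift {D : Derivation ℂ (On n) (On n)} (hD : ∀ g ∈ mId n, D g ∈ mId n) {k j : ℕ} (hjk : j ≤ k)
    {μ : ℂ} {v : On n} (hv : v ∈ mId n) (hv2 : v ∈ GE (Stb_pow hD j) μ) :
    ∃ u ∈ mId n, u ∈ GE (Stb_pow hD k) μ ∧ v - u ∈ mId n ^ j := by
  have h1 := GE_decomp (Stb_pow hD k) ((mId n).restrictScalars ℂ) hD hv
  rw [iSup_split_single _ μ] at h1
  obtain ⟨a, ha, r, hr, rfl⟩ := Submodule.mem_sup.1 h1
  obtain ⟨u, hu, z, hz, rfl⟩ := Submodule.mem_sup.1 ha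
  refine ⟨u, hu.1, hu.2, GE_indep (h := Stb_pow hD j) (μ := μ) ?_ ?_⟩
  · exact sub_mem hv2 (GE_mono _ _ (Ideal.pow_le_pow_right hjk) μ hu.2)
  · have : u + z + r - u = z + r := by abel
    rw [this]
    refine add_mem ?_ ?_
    · have hm := iSup₂_mono (fun (ν : ℂ) (_ : ν ≠ μ) =>
        (inf_le_right (a := (mId n).restrictScalars ℂ) (b := GE (Stb_pow hD k) ν)).trans
          (GE_mono _ (Stb_pow hD j) (Ideal.pow_le_pow_right hjk) ν))
      exact hm hz
    · refine Submodule.mem_iSup_of_mem (μ + 1) (Submodule.mem_iSup_of_mem (by simp) (le_GE _ _ ?_))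
      exact Ideal.pow_le_pow_right hjk hr

lemma co_mon (α β : Fin n →₀ ℕ) : co α (mon coordG β) = if α = β then 1 else 0 := by
  classical
  rw [co_def, TT_mon, MvPowerSeries.coeff_monomial]

lemma trunc (g : On n) (k : ℕ) (s : Finset (Fin n →₀ ℕ)) (hs : ∀ α, α.degree < k → α ∈ s) :
    g - ∑ α ∈ s, co α g • mon coordG α ∈ mId n ^ k := by
  classical
  refine mem_pow_iff.2 fun α hα => ?_
  rw [map_sub, map_sum, Finset.sum_eq_single α]
  · rw [map_smul, co_mon, if_pos rfl]; simp
  · intro β _ hβ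
    rw [map_smul, co_mon, if_neg (Ne.symm hβ), smul_zero]
  · intro h; exact absurd (hs α hα) h

/-- Coefficients of generalized eigenvectors. -/
lemma GE_coef {D : Derivation ℂ (On n) (On n)} {k : ℕ} {h : Stb D (mId n ^ k)} {l : Fin n → ℂ}
    (hx : ∀ i, coordG i ∈ GE h (l i)) {μ : ℂ} {G : On n} (hG : G ∈ GE h μ) (α : Fin n →₀ ℕ)
    (hα : α.degree < k) (h0 : co α G ≠ 0) : wt l α = μ := by
  classical
  by_contra hne
  haveI := finite_degree_lt (n := n) k
  have hfin : {α : Fin n →₀ ℕ | α.degree < k}.Finite := finite_degree_lt k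
  set s := hfin.toFinset with hs
  have ht := trunc G k s (fun α hα => by rw [hs, Set.Finite.mem_toFinset]; exact hα)
  set E := ∑ β ∈ s.filter (fun β => wt l β = μ), co β G • mon coordG β with hE
  have hEG : E ∈ GE h μ := by
    refine sum_mem fun β hβ => Submodule.smul_mem _ _ ?_
    rw [← (Finset.mem_filter.1 hβ).2]
    exact GE_mon hx β
  have hmem : G - E ∈ mId n ^ k := by
    refine GE_indep (h := h) (μ := μ) (sub_mem hG hEG) ?_
    have e : G - E = (G - ∑ α ∈ s, co α G • mon coordG α) +
        ∑ β ∈ s.filter (fun β => ¬ wt l β = μ), co β G • mon coordG β := by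
      rw [hE, ← Finset.sum_filter_add_sum_filter_not s (fun β => wt l β = μ)]; abel
    rw [e]
    refine add_mem ?_ (sum_mem fun β hβ => Submodule.smul_mem _ _ ?_)
    · exact Submodule.mem_iSup_of_mem (μ + 1) (Submodule.mem_iSup_of_mem (by simp) (le_GE _ _ ht))
    · exact Submodule.mem_iSup_of_mem (wt l β) (Submodule.mem_iSup_of_mem (Finset.mem_filter.1 hβ).2
        (GE_mon hx β))
  have := mem_pow_iff.1 hmem α hα
  rw [map_sub, hE, map_sum, Finset.sum_eq_zero, sub_zero] at this
  · exact h0 this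
  · intro β hβ
    rw [map_smul, co_mon, if_neg, smul_zero]
    rintro rfl
    exact hne (Finset.mem_filter.1 hβ).2

lemma conj_dl_pow (σ : On n ≃ₐ[ℂ] On n) (D : Derivation ℂ (On n) (On n)) (μ : ℂ) (p : ℕ) (g : On n) :
    (dl (conjD σ D) μ ^ p) (σ g) = σ ((dl D μ ^ p) g) := by
  induction p with
  | zero => rfl
  | succ p ih =>
    rw [pow_succ', pow_succ', Module.End.mul_apply, Module.End.mul_apply, ih, dl_apply, dl_apply,
      conjD_apply', map_sub, map_smul]

lemma conj_stab (σ : On n ≃ₐ[ℂ] On n) {D : Derivation ℂ (On n) (On n)}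
    (hD : ∀ g ∈ mId n, D g ∈ mId n) : ∀ g ∈ mId n, conjD σ D g ∈ mId n := by
  intro g hg
  rw [conjD_apply, map_mId]
  exact hD _ ((map_mId σ.symm).2 hg)

lemma conj_GE (σ : On n ≃ₐ[ℂ] On n) {D : Derivation ℂ (On n) (On n)}
    (hD : ∀ g ∈ mId n, D g ∈ mId n) {k : ℕ} {μ : ℂ} {g : On n} (hg : g ∈ GE (Stb_pow hD k) μ) :
    σ g ∈ GE (Stb_pow (conj_stab σ hD) k) μ := by
  obtain ⟨p, hp⟩ := mem_GE.1 hg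
  exact mem_GE.2 ⟨p, by rw [conj_dl_pow]; exact map_pow_mem σ hp⟩

open Module in
lemma tri_basis : ∀ (d : ℕ) (V : Type) [AddCommGroup V] [Module ℂ V] [FiniteDimensional ℂ V]
    (T : Module.End ℂ V), finrank ℂ V = d → ∃ (b : Fin d → V) (μ : Fin d → ℂ),
      Submodule.span ℂ (Set.range b) = ⊤ ∧ (∀ i, b i ∈ T.maxGenEigenspace (μ i)) ∧
      ∀ i, T (b i) - μ i • b i ∈ Submodule.span ℂ (b '' {j | j < i}) := by
  intro d
  induction d with
  | zero =>
    intro V _ _ _ T h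
    haveI := finrank_zero_iff.1 h
    exact ⟨Fin.elim0, Fin.elim0, Subsingleton.elim _ _, fun i => i.elim0, fun i => i.elim0⟩
  | succ d ih =>
    intro V _ _ _ T h
    haveI : Nontrivial V := Module.nontrivial_of_finrank_pos (R := ℂ) (by omega)
    haveI : Nontrivial (Dual ℂ V) := Module.nontrivial_of_finrank_pos (R := ℂ) (by
      rw [Subspace.dual_finrank_eq]; omega)
    obtain ⟨ν, hν⟩ := Module.End.exists_eigenvalue (Module.Dual.transpose (R := ℂ) T)
    obtain ⟨φ, hφ⟩ := hν.exists_hasEigenvector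
    have hφT : ∀ v, φ (T v) = ν * φ v := by
      intro v
      have := LinearMap.congr_fun hφ.apply_eq_smul v
      exact this
    have hφ0 : φ ≠ 0 := hφ.2
    have hex : ∃ v ∈ T.maxGenEigenspace ν, φ v ≠ 0 := by
      by_contra hcon
      push Not at hcon
      apply hφ0
      have htop := T.iSup_maxGenEigenspace_eq_top
      have : (⊤ : Submodule ℂ V) ≤ LinearMap.ker φ := by
        rw [← htop]
        refine iSup_le fun μ v hv => ?_
        by_cases hμ : μ = ν
        · subst hμ; exact hcon v hv
        · rw [Module.End.mem_maxGenEigenspace] at hv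
          obtain ⟨p, hp⟩ := hv
          have key : ∀ p : ℕ, φ (((T - μ • (1 : Module.End ℂ V)) ^ p) v) = (ν - μ) ^ p * φ v := by
            intro p
            induction p with
            | zero => simp
            | succ p ih =>
              rw [pow_succ', Module.End.mul_apply, LinearMap.sub_apply, map_sub, hφT,
                LinearMap.smul_apply, Module.End.one_apply, map_smul, ih, smul_eq_mul]
              ring
          have h1 := key p
          rw [hp, map_zero] at h1
          rw [LinearMap.mem_ker]
          rcases mul_eq_zero.1 h1.symm with h2 | h2
          · exact absurd (sub_eq_zero.1 (eq_zero_of_pow_eq_zero h2)).symm hμ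
          · exact h2
      ext v
      exact this trivial
    obtain ⟨v, hv, hφv⟩ := hex
    have hW : ∀ x ∈ LinearMap.ker φ, T x ∈ LinearMap.ker φ := by
      intro x hx
      rw [LinearMap.mem_ker] at hx ⊢
      rw [hφT, hx, mul_zero]
    have hdim : finrank ℂ (LinearMap.ker φ) = d := by
      have h1 := Module.Dual.finrank_ker_add_one_of_ne_zero hφ0
      omega
    obtain ⟨b, μ, hb1, hb2, hb3⟩ := ih (LinearMap.ker φ) (T.restrict hW) hdim
    have hres : ∀ (μ : ℂ) (p : ℕ) (x : LinearMap.ker φ),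
        ((((T.restrict hW) - μ • (1 : Module.End ℂ (LinearMap.ker φ)) : Module.End ℂ (LinearMap.ker φ)) ^ p) x : V) =
        ((T - μ • (1 : Module.End ℂ V)) ^ p) (x : V) := by
      intro μ p x
      induction p with
      | zero => rfl
      | succ p ih =>
        rw [pow_succ', pow_succ', Module.End.mul_apply, Module.End.mul_apply, ← ih]
        rfl
    have hspan : ∀ x ∈ LinearMap.ker φ, x ∈ Submodule.span ℂ (Set.range fun i => (b i : V)) := by
      intro x hx
      have h1 : (⟨x, hx⟩ : LinearMap.ker φ) ∈ Submodule.span ℂ (Set.range b) := by rw [hb1]; trivial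
      have h2 := Submodule.mem_map_of_mem (f := (LinearMap.ker φ).subtype) h1
      rw [Submodule.map_span, ← Set.range_comp] at h2
      exact h2
    refine ⟨Fin.snoc (fun i => (b i : V)) v, Fin.snoc μ ν, ?_, ?_, ?_⟩
    · rw [eq_top_iff]
      intro x _
      have hx : x - (φ x / φ v) • v ∈ LinearMap.ker φ := by
        rw [LinearMap.mem_ker, map_sub, map_smul, smul_eq_mul, div_mul_cancel₀ _ hφv, sub_self]
      have : x = (x - (φ x / φ v) • v) + (φ x / φ v) • v := by abel
      rw [this]
      refine add_mem (Submodule.span_mono ?_ (hspan _ hx)) (Submodule.smul_mem _ _ (Submodule.subset_span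
        ⟨Fin.last d, by simp⟩))
      rintro _ ⟨i, rfl⟩
      exact ⟨i.castSucc, by simp⟩
    · intro i
      refine Fin.lastCases ?_ (fun i => ?_) i
      · simpa using hv
      · have := hb2 i
        rw [Module.End.mem_maxGenEigenspace] at this
        simp only [Fin.snoc_castSucc]
        rw [Module.End.mem_maxGenEigenspace]
        obtain ⟨p, hp⟩ := this
        exact ⟨p, by rw [← hres, hp]; rfl⟩
    · intro i
      refine Fin.lastCases ?_ (fun i => ?_) i
      · simp only [Fin.snoc_last]
        have hx : T v - ν • v ∈ LinearMap.ker φ := by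
          rw [LinearMap.mem_ker, map_sub, map_smul, hφT, smul_eq_mul, sub_self]
        refine Submodule.span_mono ?_ (hspan _ hx)
        rintro _ ⟨i, rfl⟩
        exact ⟨i.castSucc, Fin.castSucc_lt_last i, by simp⟩
      · simp only [Fin.snoc_castSucc]
        have h2 := Submodule.mem_map_of_mem (f := (LinearMap.ker φ).subtype) (hb3 i)
        rw [Submodule.map_span] at h2
        refine Submodule.span_mono ?_ h2
        rintro _ ⟨_, ⟨j, hj, rfl⟩, rfl⟩
        exact ⟨j.castSucc, by simpa using hj, by simp⟩

/-- linear part -/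
def linp : On n →ₗ[ℂ] (Fin n → ℂ) := LinearMap.pi fun j => co (Finsupp.single j 1)

/-- linear section -/
def ls : (Fin n → ℂ) →ₗ[ℂ] On n := Fintype.linearCombination ℂ coordG

lemma ls_apply (v : Fin n → ℂ) : ls v = ∑ j, v j • coordG j := by
  simp [ls, Fintype.linearCombination_apply]

lemma co_coordG (i : Fin n) (α : Fin n →₀ ℕ) :
    co α (coordG i) = if α = Finsupp.single i 1 then 1 else 0 := by
  classical
  rw [co_def, TT_coordG, MvPowerSeries.coeff_X]

lemma lp_ls (v : Fin n → ℂ) : linp (ls v) = v := by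
  classical
  ext j
  rw [ls_apply]
  simp only [linp, LinearMap.pi_apply, map_sum, map_smul, co_coordG]
  rw [Finset.sum_eq_single j]
  · simp
  · intro i _ hij
    rw [if_neg, smul_zero]
    intro h
    exact hij ((Finsupp.single_left_injective (one_ne_zero)) h).symm
  · simp

lemma ls_mem (v : Fin n → ℂ) : ls v ∈ mId n := by
  rw [ls_apply]; exact sum_mem fun j _ => csmul_mem _ _ (coordG_mem j)

lemma mem_sq_iff {g : On n} (hg : g ∈ mId n) : g ∈ mId n ^ 2 ↔ linp g = 0 := by
  rw [mem_pow_iff]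
  constructor
  · intro h; ext j
    exact h _ (by rw [Finsupp.degree_single]; norm_num)
  · intro h α hα
    by_cases h0 : α.degree = 0
    · rw [Finsupp.degree_eq_zero_iff] at h0
      rw [h0]; exact mem_mId_iff.1 hg
    · have h1 : α.degree = 1 := by omega
      have hne : α ≠ 0 := by rintro rfl; simp at h0
      obtain ⟨j, hj⟩ := Finsupp.ne_iff.1 hne
      have e : α - Finsupp.single j 1 + Finsupp.single j 1 = α :=
        tsub_add_cancel_of_le (by rw [Finsupp.single_le_iff]; simp at hj; omega)
      have h2 := congrArg Finsupp.degree e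
      rw [map_add, Finsupp.degree_single] at h2
      have h3 : (α - Finsupp.single j 1).degree = 0 := by omega
      rw [Finsupp.degree_eq_zero_iff] at h3
      rw [h3, zero_add] at e
      rw [← e]
      exact congrFun h j

lemma sub_ls_mem {g : On n} (hg : g ∈ mId n) : g - ls (linp g) ∈ mId n ^ 2 := by
  rw [mem_sq_iff (sub_mem hg (ls_mem _)), map_sub, lp_ls, sub_self]

theorem exists_eig_coords {D : Derivation ℂ (On n) (On n)} (hD : ∀ g ∈ mId n, D g ∈ mId n)
    {k : ℕ} (hk : 2 ≤ k) : ∃ (u : Fin n → On n) (l : Fin n → ℂ), (∀ i, u i ∈ mId n) ∧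
      mId n ≤ Ideal.span (Set.range u) ⊔ mId n ^ 2 ∧ (∀ i, u i ∈ GE (Stb_pow hD k) (l i)) ∧
      ∀ i, D (u i) - l i • u i ∈
        Submodule.span ℂ (u '' {j | j < i}) ⊔ (mId n ^ 2).restrictScalars ℂ := by
  let T : Module.End ℂ (Fin n → ℂ) := linp ∘ₗ D.toLinearMap ∘ₗ ls
  have hT : ∀ g ∈ mId n, linp (D g) = T (linp g) := by
    intro g hg
    have h1 := Stb_pow hD 2 _ (sub_ls_mem hg)
    have h2 := (mem_sq_iff (hD _ (sub_mem hg (ls_mem _)))).1 h1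
    rw [map_sub, map_sub, sub_eq_zero] at h2
    exact h2
  obtain ⟨b, l, hb1, hb2, hb3⟩ := tri_basis n (Fin n → ℂ) T (by simp)
  have hls : ∀ (μ : ℂ) (p : ℕ) (g : On n), g ∈ mId n →
      linp ((dl D μ ^ p) g) = ((T - μ • (1 : Module.End ℂ (Fin n → ℂ))) ^ p) (linp g) ∧
      (dl D μ ^ p) g ∈ mId n := by
    intro μ p g hg
    induction p with
    | zero => exact ⟨rfl, hg⟩
    | succ p ih =>
      rw [pow_succ', pow_succ', Module.End.mul_apply, Module.End.mul_apply, ← ih.1]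
      refine ⟨?_, Stb.dl_mem hD μ ih.2⟩
      rw [dl_apply, map_sub, map_smul, hT _ ih.2]; rfl
  have hGE : ∀ i, ls (b i) ∈ GE (Stb_pow hD 2) (l i) := by
    intro i
    have := hb2 i
    rw [Module.End.mem_maxGenEigenspace] at this
    obtain ⟨p, hp⟩ := this
    have h1 := hls (l i) p (ls (b i)) (ls_mem _)
    refine mem_GE.2 ⟨p, (mem_sq_iff h1.2).2 ?_⟩
    rw [h1.1, lp_ls, hp]
  choose u hu1 hu2 hu3 using fun i => GE_lift hD hk (ls_mem (b i)) (hGE i)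
  have hsp : ∀ (s : Set (Fin n)) (v : Fin n → ℂ), v ∈ Submodule.span ℂ (b '' s) →
      ls v ∈ Submodule.span ℂ (u '' s) ⊔ (mId n ^ 2).restrictScalars ℂ := by
    intro s v hv
    induction hv using Submodule.span_induction with
    | mem x hx =>
      obtain ⟨i, hi, rfl⟩ := hx
      have : ls (b i) = u i + (ls (b i) - u i) := by abel
      rw [this]
      exact Submodule.add_mem_sup (Submodule.subset_span ⟨i, hi, rfl⟩) (hu3 i)
    | zero => rw [map_zero]; exact zero_mem _
    | add x y _ _ hx hy => rw [map_add]; exact add_mem hx hy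
    | smul c x _ hx => rw [map_smul]; exact Submodule.smul_mem _ _ hx
  have hlpu : ∀ i, linp (u i) = b i := by
    intro i
    have := (mem_sq_iff (sub_mem (ls_mem (b i)) (hu1 i))).1 (hu3 i)
    rw [map_sub, lp_ls, sub_eq_zero] at this
    exact this.symm
  refine ⟨u, l, hu1, ?_, hu2, fun i => ?_⟩
  · intro g hg
    have h1 := hsp Set.univ (linp g) (by rw [Set.image_univ, hb1]; trivial)
    obtain ⟨a, ha, r, hr, har⟩ := Submodule.mem_sup.1 h1
    have : g = a + (r + (g - ls (linp g))) := by rw [← har]; abel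
    rw [this]
    refine Submodule.add_mem_sup ?_ (add_mem hr (sub_ls_mem hg))
    rw [Set.image_univ] at ha
    exact Submodule.span_le_restrictScalars ℂ (On n) _ ha
  · have hm : D (u i) - l i • u i ∈ mId n := sub_mem (hD _ (hu1 i)) (csmul_mem _ _ (hu1 i))
    have h1 := hsp {j | j < i} (linp (D (u i) - l i • u i)) (by
      rw [map_sub, map_smul, hT _ (hu1 i), hlpu]
      exact hb3 i)
    have : D (u i) - l i • u i = ls (linp (D (u i) - l i • u i)) + ((D (u i) - l i • u i) -
      ls (linp (D (u i) - l i • u i))) := by abel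
    rw [this]
    refine add_mem h1 ?_
    exact Submodule.mem_sup_right (sub_ls_mem hm)

lemma mon_mem {I : Ideal (On n)} {i : Fin n} (hi : coordG i ∈ I) {β : Fin n →₀ ℕ} (hβ : β i ≠ 0) :
    mon coordG β ∈ I := by
  have h1 : coordG i ^ β i ∣ mon coordG β := by
    unfold mon
    exact Finset.dvd_prod_of_mem (fun i => (coordG i : On n) ^ β i) (Finset.mem_univ i)
  exact Ideal.mem_of_dvd _ ((dvd_pow_self _ hβ).trans h1) hi

/-- combinatorial set -/
def BB (S : Set (Fin n →₀ ℕ)) (A : Finset (Fin n)) : Set (Fin n) :=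
  {j | ∃ α ∈ S, 1 ≤ α j ∧ ∀ i ∉ A, (α - Finsupp.single j 1 : Fin n →₀ ℕ) i = 0}

lemma card_le_BB {f : On n} (hf : f ∈ mId n ^ 3) {N k : ℕ} (hN : mId n ^ N ≤ Jac n f)
    (hk : N + 2 ≤ k) (A : Finset (Fin n)) :
    A.card ≤ (BB {α | α.degree < k ∧ co α f ≠ 0} A).ncard := by
  classical
  set S := {α : Fin n →₀ ℕ | α.degree < k ∧ co α f ≠ 0} with hS
  set s : Set (On n) := (coordG '' {i | i ∉ A}) ∪ ((fun j => pd j f) '' BB S A) with hs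
  have hsfin : s.Finite := (Set.toFinite _).union (Set.toFinite _)
  have h1 : Ideal.span s ≤ mId n := by
    rw [Ideal.span_le]
    rintro _ (⟨i, _, rfl⟩ | ⟨j, _, rfl⟩)
    · exact coordG_mem i
    · have := der_mem_pow (pdD j) (k := 2) hf
      have h2 := Ideal.pow_le_pow_right (show 1 ≤ 2 by norm_num) this
      rwa [pow_one] at h2
  have hJ : Jac n f ≤ Ideal.span s ⊔ mId n ^ (k - 1) := by
    rw [Jac, Ideal.span_le]
    rintro _ ⟨j, rfl⟩
    by_cases hj : j ∈ BB S A
    · exact Ideal.mem_sup_left (Ideal.subset_span (Or.inr ⟨j, hj, rfl⟩))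
    · have hfin : {α : Fin n →₀ ℕ | α.degree < k - 1}.Finite := finite_degree_lt (k - 1)
      have ht := trunc (pd j f) (k - 1) hfin.toFinset (fun α hα => by
        rw [Set.Finite.mem_toFinset]; exact hα)
      have e : pd j f = (∑ α ∈ hfin.toFinset, co α (pd j f) • mon coordG α) +
        (pd j f - ∑ α ∈ hfin.toFinset, co α (pd j f) • mon coordG α) := by abel
      change pd j f ∈ _
      rw [e]
      refine Submodule.add_mem_sup (sum_mem fun β hβ => ?_) ht
      rw [Set.Finite.mem_toFinset] at hβ
      by_cases h0 : co β (pd j f) = 0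
      · rw [h0, zero_smul]; exact zero_mem _
      · apply csmul_mem
        rw [co_pd] at h0
        have h2 : β + Finsupp.single j 1 ∈ S := by
          refine ⟨?_, left_ne_zero_of_mul h0⟩
          rw [map_add, Finsupp.degree_single]
          change β.degree < k - 1 at hβ
          omega
        have h3 : ∃ i, i ∉ A ∧ β i ≠ 0 := by
          by_contra hcon
          push Not at hcon
          refine hj ⟨_, h2, by simp, fun i hi => ?_⟩
          rw [add_tsub_cancel_right]
          exact hcon i hi
        obtain ⟨i, hi, hβi⟩ := h3
        exact mon_mem (Ideal.subset_span (Or.inl ⟨i, hi, rfl⟩)) hβi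
  have h2 : mId n ^ N ≤ Ideal.span s := by
    refine Submodule.le_of_le_smul_of_le_jacobson_bot (I := mId n) (IsNoetherian.noetherian _) ?_ ?_
    · rw [IsLocalRing.jacobson_eq_maximalIdeal _ bot_ne_top, maximalIdeal_eq]
    · refine (hN.trans hJ).trans (sup_le_sup_left ?_ _)
      rw [smul_eq_mul, ← pow_succ']
      exact Ideal.pow_le_pow_right (by omega)
  have h3 := card_ge hsfin h1 h2
  have h4 : s.ncard ≤ (n - A.card) + (BB S A).ncard := by
    refine (Set.ncard_union_le _ _).trans (add_le_add ((Set.ncard_image_le (Set.toFinite _)).trans ?_)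
      (Set.ncard_image_le (Set.toFinite _)))
    have : {i | i ∉ A} = (↑(Aᶜ) : Set (Fin n)) := by ext; simp
    rw [this, Set.ncard_coe_finset, Finset.card_compl, Fintype.card_fin]
  have h5 : A.card ≤ n := by simpa using Finset.card_le_univ A
  omega

lemma comb {S : Set (Fin n →₀ ℕ)} {w : Fin n → ℚ} (h3 : ∀ α ∈ S, 3 ≤ α.degree)
    (hw : ∀ α ∈ S, ∑ i, (α i : ℚ) * w i = 1)
    (hB : ∀ A : Finset (Fin n), A.card ≤ (BB S A).ncard) : ∀ i, 0 < w i ∧ w i < 1/2 := by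
  classical
  have hne : ∀ A : Finset (Fin n), A.Nonempty → ∃ j β, (∀ i ∉ A, (β : Fin n →₀ ℕ) i = 0) ∧
      2 ≤ β.degree ∧ w j + ∑ i, (β i : ℚ) * w i = 1 := by
    intro A hA
    have h1 : 0 < (BB S A).ncard := lt_of_lt_of_le (Finset.card_pos.2 hA) (hB A)
    obtain ⟨j, α, hα, hj, hi⟩ := Set.nonempty_of_ncard_ne_zero h1.ne'
    have e : α - Finsupp.single j 1 + Finsupp.single j 1 = α :=
      tsub_add_cancel_of_le (by rw [Finsupp.single_le_iff]; omega)
    refine ⟨j, α - Finsupp.single j 1, hi, ?_, ?_⟩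
    · have h2 := congrArg Finsupp.degree e
      rw [map_add, Finsupp.degree_single] at h2
      have := h3 α hα
      omega
    · have h2 := hw α hα
      rw [← e] at h2
      rw [← h2]
      simp only [Finsupp.add_apply, Nat.cast_add, add_mul, Finset.sum_add_distrib]
      rw [add_comm]
      congr 1
      rw [Finset.sum_eq_single j]
      · simp
      · intro i _ hij; simp [Finsupp.single_apply, Ne.symm hij]
      · simp
  have hge : ∀ (A : Finset (Fin n)) (β : Fin n →₀ ℕ) (c : ℚ), (∀ i ∉ A, β i = 0) →
      (∀ i ∈ A, c ≤ w i) → (β.degree : ℚ) * c ≤ ∑ i, (β i : ℚ) * w i := by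
    intro A β c h1 h2
    rw [Finsupp.degree_eq_sum, Nat.cast_sum, Finset.sum_mul]
    refine Finset.sum_le_sum fun i _ => ?_
    by_cases hi : i ∈ A
    · exact mul_le_mul_of_nonneg_left (h2 i hi) (Nat.cast_nonneg _)
    · rw [h1 i hi]; simp
  have hle : ∀ (A : Finset (Fin n)) (β : Fin n →₀ ℕ) (c : ℚ), (∀ i ∉ A, β i = 0) →
      (∀ i ∈ A, w i ≤ c) → ∑ i, (β i : ℚ) * w i ≤ (β.degree : ℚ) * c := by
    intro A β c h1 h2
    rw [Finsupp.degree_eq_sum, Nat.cast_sum, Finset.sum_mul]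
    refine Finset.sum_le_sum fun i _ => ?_
    by_cases hi : i ∈ A
    · exact mul_le_mul_of_nonneg_left (h2 i hi) (Nat.cast_nonneg _)
    · rw [h1 i hi]; simp
  intro i0
  haveI : Nonempty (Fin n) := ⟨i0⟩
  have hpos : ∀ i, 0 < w i := by
    obtain ⟨m, hm⟩ := Finite.exists_min w
    suffices 0 < w m from fun i => this.trans_le (hm i)
    by_contra hcon
    push Not at hcon
    obtain ⟨j, β, hβ1, hβ2, hβ3⟩ := hne (Finset.univ.filter fun i => w i ≤ w m) ⟨m, by simp⟩
    have h1 := hle _ β (w m) hβ1 (fun i hi => (Finset.mem_filter.1 hi).2)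
    have hd : (2:ℚ) ≤ β.degree := by exact_mod_cast hβ2
    have h2 : (β.degree : ℚ) * w m ≤ 2 * w m := by nlinarith
    obtain ⟨j', β', hβ1', hβ2', hβ3'⟩ := hne (Finset.univ.filter fun i => 1 - 2 * w m ≤ w i)
      ⟨j, by simp; linarith⟩
    have h1' := hge _ β' (1 - 2 * w m) hβ1' (fun i hi => (Finset.mem_filter.1 hi).2)
    have hd' : (2:ℚ) ≤ β'.degree := by exact_mod_cast hβ2'
    have h2' : 2 * (1 - 2 * w m) ≤ (β'.degree : ℚ) * (1 - 2 * w m) := by nlinarith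
    have := hm j'
    linarith
  refine ⟨hpos i0, ?_⟩
  obtain ⟨m, hm⟩ := Finite.exists_max w
  refine (hm i0).trans_lt ?_
  by_contra hcon
  push Not at hcon
  obtain ⟨j, β, hβ1, hβ2, hβ3⟩ := hne (Finset.univ.filter fun i => w m ≤ w i) ⟨m, by simp⟩
  have h1 := hge _ β (w m) hβ1 (fun i hi => (Finset.mem_filter.1 hi).2)
  have hd : (2:ℚ) ≤ β.degree := by exact_mod_cast hβ2
  have h2 : 2 * w m ≤ (β.degree : ℚ) * w m := by nlinarith
  have := hpos j
  linarith

lemma exists_functional {z : ℂ} (hz : ∀ q : ℚ, z ≠ (q : ℂ)) : ∃ ρ : ℂ →ₗ[ℚ] ℚ, ρ 1 = 1 ∧ ρ z = 5 := by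
  have h0 : (1 : ℂ) ∉ (⊥ : Submodule ℚ ℂ) := by simp
  obtain ⟨a, ha, -⟩ := Submodule.exists_le_ker_of_notMem h0
  have h1 : z ∉ Submodule.span ℚ {(1:ℂ)} := by
    rw [Submodule.mem_span_singleton]
    rintro ⟨q, hq⟩
    refine hz q ?_
    rw [← hq, Rat.smul_one_eq_cast]
  obtain ⟨b, hb, hb2⟩ := Submodule.exists_le_ker_of_notMem h1
  have hb1 : b 1 = 0 := hb2 (Submodule.mem_span_singleton_self _)
  refine ⟨(a 1)⁻¹ • a + ((5 - (a 1)⁻¹ * a z) / b z) • b, ?_, ?_⟩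
  · simp [hb1, ha]
  · simp [hb]

theorem rational_weights {D : Derivation ℂ (On n) (On n)} {k : ℕ} (hD : ∀ g ∈ mId n, D g ∈ mId n)
    {l : Fin n → ℂ} (hx : ∀ i, coordG i ∈ GE (Stb_pow hD k) (l i)) {f : On n} (hf : f ∈ mId n ^ 3)
    (hDf : D f = f) {N : ℕ} (hN : mId n ^ N ≤ Jac n f) (hk : N + 2 ≤ k) :
    ∃ w : Fin n → ℚ, (∀ i, 0 < w i ∧ w i < 1/2) ∧ ∀ i, l i = (w i : ℂ) := by
  have hfG : f ∈ GE (Stb_pow hD k) 1 := mem_GE.2 ⟨1, by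
    rw [pow_one, dl_apply, hDf, one_smul, sub_self]; exact zero_mem _⟩
  have key : ∀ ρ : ℂ →ₗ[ℚ] ℚ, ρ 1 = 1 → ∀ i, 0 < ρ (l i) ∧ ρ (l i) < 1/2 := by
    intro ρ hρ
    refine comb (S := {α | α.degree < k ∧ co α f ≠ 0}) (w := fun i => ρ (l i)) ?_ ?_ (card_le_BB hf hN hk)
    · rintro α ⟨_, h0⟩
      by_contra hcon
      exact h0 (mem_pow_iff.1 hf α (by omega))
    · rintro α ⟨h1, h0⟩
      have := congrArg ρ (GE_coef hx hfG α h1 h0)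
      rw [hρ, wt, map_sum] at this
      rw [← this]
      refine Finset.sum_congr rfl fun i _ => ?_
      rw [← nsmul_eq_mul, ← nsmul_eq_mul, map_nsmul]
  have hq : ∀ i, ∃ q : ℚ, l i = (q : ℂ) := by
    intro i
    by_contra hcon
    push Not at hcon
    obtain ⟨ρ, h1, h2⟩ := exists_functional hcon
    have := key ρ h1 i
    rw [h2] at this
    norm_num at this
  choose w hw using hq
  have h0 : (1 : ℂ) ∉ (⊥ : Submodule ℚ ℂ) := by simp
  obtain ⟨a, ha, -⟩ := Submodule.exists_le_ker_of_notMem h0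
  refine ⟨w, fun i => ?_, hw⟩
  have := key ((a 1)⁻¹ • a) (by simp [ha]) i
  have e : ((a 1)⁻¹ • a) (l i) = w i := by
    rw [hw i, ← Rat.smul_one_eq_cast, map_smul]
    simp [ha]
  rwa [e] at this

lemma degree_one_eq {α : Fin n →₀ ℕ} (h : α.degree = 1) : ∃ j, α = Finsupp.single j 1 := by
  have h0 : α ≠ 0 := by
    rintro rfl; simp at h
  obtain ⟨j, hj⟩ := Finsupp.ne_iff.1 h0
  have hle : Finsupp.single j 1 ≤ α := by
    rw [Finsupp.single_le_iff]; exact Nat.one_le_iff_ne_zero.2 hj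
  refine ⟨j, ?_⟩
  have e := tsub_add_cancel_of_le hle
  have h2 : (α - Finsupp.single j 1).degree = 0 := by
    have := congrArg Finsupp.degree e
    rw [map_add, Finsupp.degree_single, h] at this
    omega
  rw [Finsupp.degree_eq_zero_iff] at h2
  rw [h2, zero_add] at e
  exact e.symm

lemma exists_common_t (p : Fin n → On n) (g : On n) :
    ∃ t > 0, (∀ i, SW (fun _ => t) (TT n (p i))) ∧ SW (fun _ => t) (TT n g) := by
  choose t ht hs using fun o : Option (Fin n) => TT_SW (o.elim g p)
  obtain ⟨o, ho⟩ := Finite.exists_min t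
  exact ⟨t o, ht o, fun i => (hs (some i)).mono (fun _ => (ht o).le) (fun _ => ho _),
    (hs none).mono (fun _ => (ht o).le) (fun _ => ho _)⟩

lemma exists_radius (p : Fin n → On n) (hp0 : ∀ i, co 0 (p i) = 0)
    (hp1 : ∀ i j, i ≤ j → co (Finsupp.single j 1) (p i) = 0) {η : ℝ} (hη : 0 < η) (g : On n) :
    ∃ r : Fin n → ℝ, (∀ i, 0 < r i) ∧ (∀ i, SW r (TT n (p i))) ∧ (∀ i, nrm r (TT n (p i)) ≤ η * r i) ∧
      SW r (TT n g) := by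
  obtain ⟨t0, ht0, hsp, hsg⟩ := exists_common_t p g
  set M := ∑ i, nrm (fun _ => t0) (TT n (p i)) with hM
  have hn0 : ∀ i, 0 ≤ nrm (fun _ => t0) (TT n (p i)) := fun i => nrm_nonneg (fun _ => ht0.le) _
  have hM0 : 0 ≤ M := Finset.sum_nonneg fun i _ => hn0 i
  have hMi : ∀ i, nrm (fun _ => t0) (TT n (p i)) ≤ M := fun i =>
    Finset.single_le_sum (f := fun i => nrm (fun _ => t0) (TT n (p i))) (fun i _ => hn0 i) (Finset.mem_univ i)
  set κ := η / (M + 1) with hκ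
  have hκ0 : 0 < κ := by positivity
  set ε := min 1 (κ * t0) with hε
  have hε0 : 0 < ε := lt_min one_pos (by positivity)
  have hε1 : ε ≤ 1 := min_le_left _ _
  have hε2 : ε ≤ κ * t0 := min_le_right _ _
  set t := min t0 (κ * ε ^ n * t0 ^ 2) with ht
  have htp : 0 < t := lt_min ht0 (by positivity)
  have ht1 : t ≤ t0 := min_le_left _ _
  have ht2 : t ≤ κ * ε ^ n * t0 ^ 2 := min_le_right _ _
  set r : Fin n → ℝ := fun i => t * ε ^ (n - i : ℕ) with hr
  have hr0 : ∀ i, 0 < r i := fun i => by positivity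
  have hrt : ∀ i, r i ≤ t := fun i => mul_le_of_le_one_right htp.le (pow_le_one₀ hε0.le hε1)
  have hrn : ∀ i, t * ε ^ n ≤ r i := fun i =>
    mul_le_mul_of_nonneg_left (pow_le_pow_of_le_one hε0.le hε1 (by omega)) htp.le
  have hrt0 : ∀ i, r i ≤ t0 := fun i => (hrt i).trans ht1
  have hS : ∀ {a}, SW (fun _ => t0) a → SW r a := fun h => SW.mono h (fun i => (hr0 i).le) hrt0
  have hterm : ∀ i α, ‖MvPowerSeries.coeff α (TT n (p i))‖ * mon r α ≤
      (κ * r i) * (‖MvPowerSeries.coeff α (TT n (p i))‖ * mon (fun _ => t0) α) := by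
    intro i α
    by_cases hc : co α (p i) = 0
    · rw [co_def] at hc; rw [hc]; simp
    suffices h : mon r α ≤ κ * r i * mon (fun _ => t0) α by
      calc _ ≤ ‖MvPowerSeries.coeff α (TT n (p i))‖ * (κ * r i * mon (fun _ => t0) α) :=
            mul_le_mul_of_nonneg_left h (norm_nonneg _)
        _ = _ := by ring
    rcases lt_trichotomy α.degree 1 with h | h | h
    · have : α = 0 := by rw [← Finsupp.degree_eq_zero_iff]; omega
      subst this; exact absurd (hp0 i) hc
    · obtain ⟨j, rfl⟩ := degree_one_eq h
      have hji : j < i := by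
        by_contra hh; exact hc (hp1 i j (not_lt.1 hh))
      rw [mon_single, mon_single, pow_one, pow_one]
      have h1 : r j ≤ ε * r i := by
        have hji' : (j : ℕ) < i := hji
        have hi := i.2
        have : ε ^ (n - j : ℕ) ≤ ε ^ (n - i + 1 : ℕ) := pow_le_pow_of_le_one hε0.le hε1 (by omega)
        calc r j = t * ε ^ (n - j : ℕ) := rfl
          _ ≤ t * ε ^ (n - i + 1 : ℕ) := mul_le_mul_of_nonneg_left this htp.le
          _ = ε * (t * ε ^ (n - i : ℕ)) := by ring
      calc r j ≤ ε * r i := h1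
        _ ≤ (κ * t0) * r i := mul_le_mul_of_nonneg_right hε2 (hr0 i).le
        _ = _ := by ring
    · have h1 : mon r α ≤ mon (fun _ => t) α := mon_mono (fun i => (hr0 i).le) hrt α
      rw [mon_const] at h1 ⊢
      obtain ⟨k, hk⟩ : ∃ k, α.degree = k + 2 := ⟨α.degree - 2, by omega⟩
      rw [hk] at h1 ⊢
      have h2 : t ^ 2 ≤ κ * r i * t0 ^ 2 := by
        calc t ^ 2 = t * t := by ring
          _ ≤ t * (κ * ε ^ n * t0 ^ 2) := mul_le_mul_of_nonneg_left ht2 htp.le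
          _ = κ * (t * ε ^ n) * t0 ^ 2 := by ring
          _ ≤ κ * r i * t0 ^ 2 := by
            have := hrn i
            gcongr
      calc mon r α ≤ t ^ (k + 2) := h1
        _ = t ^ k * t ^ 2 := by ring
        _ ≤ t0 ^ k * (κ * r i * t0 ^ 2) := by gcongr
        _ = _ := by ring
  refine ⟨r, hr0, fun i => hS (hsp i), fun i => ?_, hS hsg⟩
  have h3 : nrm r (TT n (p i)) ≤ κ * r i * nrm (fun _ => t0) (TT n (p i)) := by
    rw [nrm, nrm, ← tsum_mul_left]
    exact Summable.tsum_le_tsum (hterm i) (hS (hsp i)) (Summable.mul_left _ (hsp i))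
  have h4 : κ * M ≤ η := by
    rw [hκ, div_mul_eq_mul_div, div_le_iff₀ (by positivity)]
    nlinarith
  calc _ ≤ κ * r i * nrm (fun _ => t0) (TT n (p i)) := h3
    _ ≤ κ * r i * M := mul_le_mul_of_nonneg_left (hMi i) (by have := hr0 i; positivity)
    _ = (κ * M) * r i := by ring
    _ ≤ η * r i := mul_le_mul_of_nonneg_right h4 (hr0 i).le

lemma pd_mon (i : Fin n) (β : Fin n →₀ ℕ) :
    pd i (mon coordG β) = (β i : ℂ) • mon coordG (β - Finsupp.single i 1) := by
  apply co_ext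
  intro α
  rw [co_pd, co_mon, map_smul, co_mon, smul_eq_mul]
  by_cases hi : β i = 0
  · have : α + Finsupp.single i 1 ≠ β := by
      rintro rfl; simp at hi
    rw [if_neg this, hi]; simp
  · have hle : Finsupp.single i 1 ≤ β := by
      rw [Finsupp.single_le_iff]; omega
    have e := tsub_add_cancel_of_le hle
    by_cases h : α + Finsupp.single i 1 = β
    · subst h
      simp
    · have h' : α ≠ β - Finsupp.single i 1 := by
        rintro rfl; exact h e
      rw [if_neg h, if_neg h']; simp

lemma der_mon (D : Derivation ℂ (On n) (On n)) (β : Fin n →₀ ℕ) :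
    D (mon coordG β) = ∑ i, (β i : ℂ) • (D (coordG i) * mon coordG (β - Finsupp.single i 1)) := by
  conv_lhs => rw [der_eq_VD D]
  rw [VD_apply]
  unfold applyVF
  refine Finset.sum_congr rfl fun i _ => ?_
  rw [pd_mon, mul_smul_comm]

/-- The perturbation part of a derivation applied to a monomial. -/
lemma dl_mon (D : Derivation ℂ (On n) (On n)) (l : Fin n → ℂ) (β : Fin n →₀ ℕ) (μ : ℂ) :
    dl D μ (mon coordG β) = (wt l β - μ) • mon coordG β +
      ∑ i, (β i : ℂ) • ((D (coordG i) - l i • coordG i) * mon coordG (β - Finsupp.single i 1)) := by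
  rw [dl_apply, der_mon, sub_smul, wt, Finset.sum_smul]
  have : ∀ i, (β i : ℂ) • ((D (coordG i) - l i • coordG i) * mon coordG (β - Finsupp.single i 1)) =
      (β i : ℂ) • (D (coordG i) * mon coordG (β - Finsupp.single i 1)) - ((β i : ℂ) * l i) • mon coordG β := by
    intro i
    by_cases hi : β i = 0
    · rw [hi]; simp
    have hle : Finsupp.single i 1 ≤ β := by
      rw [Finsupp.single_le_iff]; omega
    have e := tsub_add_cancel_of_le hle
    have e2 : mon coordG β = coordG i * mon (coordG (n := n)) (β - Finsupp.single i 1) := by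
      conv_lhs => rw [← e, mon_add, mon_single, pow_one, mul_comm]
    rw [sub_mul, smul_sub, smul_mul_assoc, ← e2, mul_smul]
  rw [Finset.sum_congr rfl fun i _ => this i, Finset.sum_sub_distrib]
  abel

lemma mon_mem_pow (β : Fin n →₀ ℕ) : mon coordG β ∈ mId n ^ β.degree := by
  refine mem_pow_iff.2 fun α hα => ?_
  rw [co_mon, if_neg]
  rintro rfl
  exact lt_irrefl _ hα

lemma exists_lower (w : Fin n → ℝ) (hw : ∀ i, 0 < w i) : ∃ ω > 0, ∀ i, ω ≤ w i := by
  obtain ⟨o, ho⟩ := Finite.exists_min (fun o : Option (Fin n) => o.elim 1 w)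
  refine ⟨_, ?_, fun i => ho (some i)⟩
  cases o with
  | none => exact one_pos
  | some i => exact hw i

lemma wt_lower {w : Fin n → ℝ} {ω : ℝ} (hω : 0 < ω) (hw : ∀ i, ω ≤ w i) (lam : ℂ) {β : Fin n →₀ ℕ}
    (hβ : 2 * ‖lam‖ / ω ≤ β.degree) : ω / 2 * β.degree ≤ ‖wt (fun i => (w i : ℂ)) β - lam‖ := by
  have h1 : wt (fun i => (w i : ℂ)) β = ((∑ i, (β i : ℝ) * w i : ℝ) : ℂ) := by
    rw [wt]; push_cast; rfl
  have h2 : ω * β.degree ≤ ∑ i, (β i : ℝ) * w i := by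
    rw [Finsupp.degree_eq_sum]
    push_cast
    rw [Finset.mul_sum]
    refine Finset.sum_le_sum fun i _ => ?_
    rw [mul_comm]
    exact mul_le_mul_of_nonneg_left (hw i) (Nat.cast_nonneg _)
  have h3 : ω * β.degree ≤ ‖wt (fun i => (w i : ℂ)) β‖ := by
    rw [h1, Complex.norm_real]
    exact h2.trans (le_abs_self _)
  have h4 := norm_sub_norm_le (wt (fun i => (w i : ℂ)) β) lam
  have h5 : ‖lam‖ ≤ ω / 2 * β.degree := by
    rw [div_le_iff₀ hω] at hβ
    linarith
  linarith

theorem dl_surj (D : Derivation ℂ (On n) (On n)) (w : Fin n → ℝ) (hw : ∀ i, 0 < w i)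
    (hp0 : ∀ i, co 0 (D (coordG i) - (w i : ℂ) • coordG i) = 0)
    (hp1 : ∀ i j, i ≤ j → co (Finsupp.single j 1) (D (coordG i) - (w i : ℂ) • coordG i) = 0)
    (hD : ∀ g ∈ mId n, D g ∈ mId n) (lam : ℂ) :
    ∃ K0, ∀ K ≥ K0, ∀ g ∈ mId n ^ K, ∃ v ∈ mId n ^ K, dl D lam v = g := by
  classical
  obtain ⟨ω, hω, hωw⟩ := exists_lower w hw
  refine ⟨⌈2 * ‖lam‖ / ω⌉₊ + 1, fun K hK g hg => ?_⟩
  set p : Fin n → On n := fun i => D (coordG i) - (w i : ℂ) • coordG i with hp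
  obtain ⟨r, hr0, hrS, hrn, hrg⟩ := exists_radius p hp0 hp1 (η := ω / 4) (by positivity) g
  have hr0' : ∀ i, 0 ≤ r i := fun i => (hr0 i).le
  set l : Fin n → ℂ := fun i => (w i : ℂ) with hl
  set d : (Fin n →₀ ℕ) → ℂ := fun β => wt l β - lam with hd
  have hdl : ∀ β : Fin n →₀ ℕ, K ≤ β.degree → ω / 2 * β.degree ≤ ‖d β‖ := by
    intro β hβ
    refine wt_lower hω hωw lam ?_
    have h1 := Nat.le_ceil (2 * ‖lam‖ / ω)
    have h2 : (⌈2 * ‖lam‖ / ω⌉₊ : ℝ) ≤ β.degree := by exact_mod_cast (by omega : ⌈2 * ‖lam‖ / ω⌉₊ ≤ β.degree)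
    exact h1.trans h2
  have hdeg : ∀ β : Fin n →₀ ℕ, K ≤ β.degree → (1 : ℝ) ≤ β.degree := by
    intro β hβ
    exact_mod_cast (by omega : 1 ≤ β.degree)
  have hd2 : ∀ β : Fin n →₀ ℕ, K ≤ β.degree → ω / 2 ≤ ‖d β‖ := by
    intro β hβ
    have h1 := hdl β hβ
    have h2 := hdeg β hβ
    nlinarith
  have hd0 : ∀ β : Fin n →₀ ℕ, K ≤ β.degree → d β ≠ 0 := by
    intro β hβ h
    have h1 := hd2 β hβ
    rw [h, norm_zero] at h1
    linarith
  have hpm : ∀ i, p i ∈ mId n := fun i => mem_mId_iff.2 (hp0 i)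
  set Pel : (Fin n →₀ ℕ) → On n := fun β => if K ≤ β.degree then
    ∑ i, p i * (((β i : ℂ) / d β) • mon coordG (β - Finsupp.single i 1)) else 0 with hPel
  have hPel1 : ∀ β : Fin n →₀ ℕ, K ≤ β.degree → dl D lam (mon coordG β) = d β • (mon coordG β + Pel β) := by
    intro β hβ
    rw [dl_mon D l, smul_add]
    congr 1
    simp only [hPel, if_pos hβ]
    rw [Finset.smul_sum]
    refine Finset.sum_congr rfl fun i _ => ?_
    rw [mul_smul_comm, smul_smul, mul_div_cancel₀ _ (hd0 β hβ)]
  have hPelmem : ∀ β : Fin n →₀ ℕ, Pel β ∈ mId n ^ β.degree := by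
    intro β
    simp only [hPel]
    split_ifs with h
    · refine sum_mem fun i _ => ?_
      by_cases hi : β i = 0
      · rw [hi]; simp
      have hle : Finsupp.single i 1 ≤ β := by
        rw [Finsupp.single_le_iff]; omega
      have e := congrArg Finsupp.degree (tsub_add_cancel_of_le hle)
      rw [map_add, Finsupp.degree_single] at e
      rw [← e, pow_succ']
      exact Ideal.mul_mem_mul (hpm i) (csmul_mem _ _ (mon_mem_pow _))
    · exact zero_mem _
  have hPelS : ∀ β, SW r (TT n (Pel β)) ∧ nrm r (TT n (Pel β)) ≤ 1 / 2 * mon r β := by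
    intro β
    simp only [hPel]
    split_ifs with h
    · have hTT : ∀ i, TT n (p i * (((β i : ℂ) / d β) • mon coordG (β - Finsupp.single i 1))) =
          TT n (p i) * MvPowerSeries.monomial (β - Finsupp.single i 1) ((β i : ℂ) / d β) := by
        intro i
        rw [map_mul, map_smul, TT_mon, ← map_smul, smul_eq_mul, mul_one]
      rw [map_sum]
      have hS : ∀ i ∈ Finset.univ, SW r (TT n (p i * (((β i : ℂ) / d β) • mon coordG (β - Finsupp.single i 1)))) := by
        intro i _
        rw [hTT]
        exact SW.mul hr0' (hrS i) (SW_monomial _ _ _)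
      refine ⟨SW_sum hr0' _ _ hS, (nrm_sum_le hr0' _ _ hS).trans ?_⟩
      have hb : ∀ i, nrm r (TT n (p i * (((β i : ℂ) / d β) • mon coordG (β - Finsupp.single i 1)))) ≤
          (β i : ℝ) * (ω / 4 / ‖d β‖ * mon r β) := by
        intro i
        rw [hTT]
        refine (nrm_mul_le hr0' (hrS i) (SW_monomial _ _ _)).trans ?_
        rw [nrm_monomial, norm_div, Complex.norm_natCast]
        by_cases hi : β i = 0
        · rw [hi]; simp
        have hle : Finsupp.single i 1 ≤ β := by
          rw [Finsupp.single_le_iff]; omega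
        have e := tsub_add_cancel_of_le hle
        have e2 : mon r β = mon r (β - Finsupp.single i 1) * r i := by
          conv_lhs => rw [← e, mon_add, mon_single, pow_one]
        have hmp := mon_nonneg hr0' (β - Finsupp.single i 1)
        calc _ ≤ (ω / 4 * r i) * ((β i : ℝ) / ‖d β‖ * mon r (β - Finsupp.single i 1)) :=
              mul_le_mul_of_nonneg_right (hrn i) (by positivity)
          _ = _ := by rw [e2]; ring
      refine (Finset.sum_le_sum fun i _ => hb i).trans ?_
      rw [← Finset.sum_mul, ← mul_assoc]
      refine mul_le_mul_of_nonneg_right ?_ (mon_nonneg hr0' β)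
      have h1 := hdl β h
      have h2 : (0 : ℝ) < ‖d β‖ := norm_pos_iff.2 (hd0 β h)
      rw [Finsupp.degree_eq_sum] at h1
      push_cast at h1
      rw [← mul_div_assoc, div_le_iff₀ h2]
      linarith
    · rw [map_zero]
      exact ⟨SW_zero r, by rw [nrm_zero]; have := mon_nonneg hr0' β; positivity⟩
  obtain ⟨v, hvS, hv⟩ := pertK (mon r) (mon_pos hr0) (fun β γ => co γ (Pel β))
    (fun β => (hPelS β).1) (fun β => (hPelS β).2) (fun γ => co γ g) hrg
  have hP0 : ∀ β γ : Fin n →₀ ℕ, γ.degree < β.degree → co γ (Pel β) = 0 := fun β γ h =>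
    mem_pow_iff.1 (hPelmem β) γ h
  have hv0 : ∀ γ : Fin n →₀ ℕ, γ.degree < K → v γ = 0 := by
    intro γ hγ
    have h1 := hv γ
    have h2 : (fun β => v β * co γ (Pel β)) = fun _ => 0 := by
      funext β
      by_cases h : K ≤ β.degree
      · rw [hP0 β γ (by omega), mul_zero]
      · simp only [hPel, if_neg h, map_zero, mul_zero]
    rw [h2] at h1
    have h3 := h1.unique hasSum_zero
    rw [mem_pow_iff.1 hg γ hγ, zero_sub, neg_eq_zero] at h3
    exact h3
  set a : MvPowerSeries (Fin n) ℂ := fun γ => v γ / d γ with ha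
  have hac : ∀ γ, MvPowerSeries.coeff γ a = v γ / d γ := fun γ => rfl
  have haS : SW r a := by
    refine SW.of_le hr0' (hvS.mul_left (2 / ω)) fun γ => ?_
    rw [hac]
    by_cases h : K ≤ γ.degree
    · rw [norm_div, ← mul_assoc]
      refine mul_le_mul_of_nonneg_right ?_ (mon_nonneg hr0' γ)
      have h1 := hd2 γ h
      rw [div_le_iff₀ (lt_of_lt_of_le (by positivity) h1)]
      have : 2 / ω * ‖v γ‖ * (ω / 2) = ‖v γ‖ := by field_simp
      calc ‖v γ‖ = 2 / ω * ‖v γ‖ * (ω / 2) := this.symm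
        _ ≤ _ := mul_le_mul_of_nonneg_left h1 (by positivity)
    · rw [hv0 γ (by omega)]; simp
  obtain ⟨V, hV⟩ := exists_TT_of_SW' hr0 haS
  have hcV : ∀ γ, co γ V = v γ / d γ := fun γ => by rw [co_def, hV, hac]
  refine ⟨V, mem_pow_iff.2 fun γ hγ => by rw [hcV, hv0 γ hγ, zero_div], ?_⟩
  apply co_ext
  intro γ
  have hfin : {α : Fin n →₀ ℕ | α.degree < γ.degree + 1}.Finite := finite_degree_lt _
  have hs : ∀ α : Fin n →₀ ℕ, α ∈ hfin.toFinset ↔ α.degree < γ.degree + 1 := fun α => by simp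
  have ht := trunc V (γ.degree + 1) hfin.toFinset (fun α hα => (hs α).2 hα)
  have ht2 := (Stb_pow hD (γ.degree + 1)).dl_mem lam ht
  have ht3 := mem_pow_iff.1 ht2 γ (by omega)
  rw [map_sub, map_sub, sub_eq_zero, map_sum, map_sum] at ht3
  rw [ht3]
  have hterm : ∀ α, co γ (dl D lam (co α V • mon coordG α)) = v α * (if γ = α then 1 else 0) + v α * co γ (Pel α) := by
    intro α
    rw [map_smul, map_smul, smul_eq_mul, hcV]
    by_cases h : K ≤ α.degree
    · rw [hPel1 α h, map_smul, map_add, co_mon, smul_eq_mul]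
      have := hd0 α h
      field_simp
    · rw [hv0 α (by omega)]; simp
  rw [Finset.sum_congr rfl fun α _ => hterm α, Finset.sum_add_distrib]
  have hA : ∑ α ∈ hfin.toFinset, v α * (if γ = α then 1 else 0) = v γ := by
    rw [Finset.sum_eq_single γ]
    · simp
    · intro b _ hb; rw [if_neg (Ne.symm hb), mul_zero]
    · intro h; exact absurd ((hs γ).2 (by omega)) h
  have hB : ∑ α ∈ hfin.toFinset, v α * co γ (Pel α) = co γ g - v γ := by
    refine HasSum.unique (hasSum_sum_of_ne_finset_zero fun β hβ => ?_) (hv γ)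
    rw [hs] at hβ
    rw [hP0 β γ (by omega), mul_zero]
  rw [hA, hB]; ring

/-- exact generalized eigenvectors -/
lemma exactify {D : Derivation ℂ (On n) (On n)} {lam : ℂ} {K : ℕ} {hk : Stb D (mId n ^ K)}
    (hs : ∀ g ∈ mId n ^ K, ∃ v ∈ mId n ^ K, dl D lam v = g) {u : On n} (hu : u ∈ GE hk lam) :
    ∃ y, y ∈ GE (Stb_bot D) lam ∧ u - y ∈ mId n ^ K := by
  have hs2 : ∀ p : ℕ, ∀ g ∈ mId n ^ K, ∃ v ∈ mId n ^ K, (dl D lam ^ p) v = g := by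
    intro p
    induction p with
    | zero => intro g hg; exact ⟨g, hg, by simp⟩
    | succ p ih =>
      intro g hg
      obtain ⟨v, hv, rfl⟩ := ih g hg
      obtain ⟨v', hv', rfl⟩ := hs v hv
      exact ⟨v', hv', by rw [pow_succ, Module.End.mul_apply]⟩
  obtain ⟨p, hp⟩ := mem_GE.1 hu
  obtain ⟨v, hv, hvp⟩ := hs2 p _ hp
  refine ⟨u - v, mem_GE.2 ⟨p, ?_⟩, by simpa using hv⟩
  rw [map_sub, hvp, sub_self]; exact zero_mem _

lemma BR_le_mId {X : Set (Fin n → ℂ)} {f : On n} (hf : f ∈ mId n ^ 2) : BRIdeal n X f ≤ mId n := by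
  rintro g ⟨η, hη, rfl⟩
  change applyVF η f ∈ _
  rw [← VD_apply]
  simpa using der_mem_pow (VD η) (k := 1) hf

lemma BR_le_Jac {X : Set (Fin n → ℂ)} {f : On n} : BRIdeal n X f ≤ Jac n f := by
  rintro g ⟨η, hη, rfl⟩
  change applyVF η f ∈ _
  rw [← VD_apply]
  exact der_mem_Jac (VD η) f

lemma artin_nilp (A : Type*) [CommRing A] [IsLocalRing A] [IsArtinianRing A] :
    ∃ N, IsLocalRing.maximalIdeal A ^ N = ⊥ := by
  obtain ⟨N, hN⟩ := IsArtinianRing.isNilpotent_jacobson_bot (R := A)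
  rw [IsLocalRing.jacobson_eq_maximalIdeal _ bot_ne_top] at hN
  exact ⟨N, hN⟩

lemma pow_le_gen {R : Type*} [CommRing R] [IsLocalRing R] [Algebra ℂ R] {J : Ideal R} (hJ : J ≠ ⊤)
    [FiniteDimensional ℂ (R ⧸ J)] : ∃ N, IsLocalRing.maximalIdeal R ^ N ≤ J := by
  haveI : IsArtinianRing (R ⧸ J) := IsArtinianRing.of_finite ℂ _
  haveI : Nontrivial (R ⧸ J) := Ideal.Quotient.nontrivial_iff.2 hJ
  haveI : IsLocalRing (R ⧸ J) := IsLocalRing.of_surjective' (Ideal.Quotient.mk J) Ideal.Quotient.mk_surjective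
  obtain ⟨N, hN⟩ := artin_nilp (R ⧸ J)
  have h1 : (IsLocalRing.maximalIdeal R).map (Ideal.Quotient.mk J) ≤ IsLocalRing.maximalIdeal (R ⧸ J) := by
    rw [Ideal.map_le_iff_le_comap]
    intro x hx
    rw [Ideal.mem_comap, IsLocalRing.mem_maximalIdeal, mem_nonunits_iff]
    intro hu
    obtain ⟨b, hb⟩ := hu.exists_right_inv
    obtain ⟨y, rfl⟩ := Ideal.Quotient.mk_surjective b
    rw [← map_mul, ← map_one (Ideal.Quotient.mk J), Ideal.Quotient.eq] at hb
    have h2 : x * y ∈ IsLocalRing.maximalIdeal R := Ideal.mul_mem_right _ _ hx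
    have h3 := sub_mem h2 (IsLocalRing.le_maximalIdeal hJ hb)
    rw [sub_sub_cancel] at h3
    exact (IsLocalRing.maximalIdeal.isMaximal R).ne_top ((Ideal.eq_top_iff_one _).2 h3)
  refine ⟨N, ?_⟩
  have h2 : (IsLocalRing.maximalIdeal R ^ N).map (Ideal.Quotient.mk J) ≤ ⊥ := by
    rw [Ideal.map_pow]
    exact (Ideal.pow_right_mono h1 N).trans hN.le
  intro x hx
  have h3 := h2 (Ideal.mem_map_of_mem _ hx)
  rw [Ideal.mem_bot] at h3
  exact Ideal.Quotient.eq_zero_iff_mem.1 h3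

lemma pow_le_of_finite {J : Ideal (On n)} (hJ : J ≤ mId n) [FiniteDimensional ℂ (On n ⧸ J)] :
    ∃ N, mId n ^ N ≤ J := by
  have hJ1 : J ≠ ⊤ := fun h => (inferInstance : (mId n).IsMaximal).ne_top (top_le_iff.1 (h ▸ hJ))
  rw [← maximalIdeal_eq]
  exact pow_le_gen hJ1

theorem log_field (X : Set (Fin n → ℂ)) (f : On n) (hf : f ∈ mId n ^ 3)
    (hfin : FiniteDimensional ℂ (On n ⧸ BRIdeal n X f)) (heq : muX n X f = tauX n X f) :
    ∃ (D : Derivation ℂ (On n) (On n)) (N : ℕ), (∀ g ∈ mId n, D g ∈ mId n) ∧ D f = f ∧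
      (∀ g ∈ IX n X, D g ∈ IX n X) ∧ mId n ^ N ≤ Jac n f := by
  set J := BRIdeal n X f with hJ
  have hJm : J ≤ mId n := BR_le_mId (Ideal.pow_le_pow_right (by norm_num) hf)
  have hfJ : f ∈ J := by
    have hle : J ≤ J + Ideal.span {f} := le_sup_left
    let q : (On n ⧸ J) →ₐ[ℂ] (On n ⧸ (J + Ideal.span {f})) := Ideal.Quotient.factorₐ ℂ hle
    have hq : Function.Surjective q := Ideal.Quotient.factor_surjective hle
    haveI : FiniteDimensional ℂ (On n ⧸ (J + Ideal.span {f})) :=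
      Module.Finite.of_surjective q.toLinearMap hq
    have hi : Function.Injective q.toLinearMap :=
      (LinearMap.injective_iff_surjective_of_finrank_eq_finrank heq).2 hq
    rw [← Ideal.Quotient.eq_zero_iff_mem]
    apply hi
    rw [map_zero]
    change Ideal.Quotient.mk (J + Ideal.span {f}) f = 0
    rw [Ideal.Quotient.eq_zero_iff_mem]
    exact Ideal.mem_sup_right (Ideal.mem_span_singleton_self f)
  obtain ⟨N, hN⟩ := pow_le_of_finite hJm
  obtain ⟨δ, hδ, hδf⟩ := hfJ
  have hDf : VD δ f = f := by rw [VD_apply]; exact hδf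
  have hDI : ∀ g ∈ IX n X, VD δ g ∈ IX n X := by
    intro g hg; rw [VD_apply]; exact hδ g hg
  have hDJ : ∀ g ∈ J, VD δ g ∈ J := by
    rintro g ⟨η, hη, rfl⟩
    have e : (gradMap n f) η = VD η f := by rw [VD_apply]; rfl
    have hηI : ∀ g ∈ IX n X, VD η g ∈ IX n X := by
      intro g hg; rw [VD_apply]; exact hη g hg
    rw [e]
    have e2 : VD δ (VD η f) = ⁅VD δ, VD η⁆ f + VD η f := by
      rw [Derivation.commutator_apply, hDf]; ring
    rw [e2]
    have e3 : ∀ E : Derivation ℂ (On n) (On n), (∀ g ∈ IX n X, E g ∈ IX n X) → E f ∈ J := by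
      intro E hE
      refine ⟨fun j => E (coordG j), ?_, ?_⟩
      · intro g hg
        rw [← VD_apply, ← der_eq_VD]; exact hE g hg
      · change applyVF _ f = _
        rw [← VD_apply, ← der_eq_VD]
    refine add_mem (e3 _ ?_) (e3 _ hηI)
    intro g hg
    rw [Derivation.commutator_apply]
    exact sub_mem (hDI _ (hηI _ hg)) (hηI _ (hDI _ hg))
  refine ⟨VD δ, N, ?_, hDf, hDI, hN.trans BR_le_Jac⟩
  intro x hx
  by_contra hux
  have hu : IsUnit (VD δ x) := by
    by_contra h
    apply hux
    rw [← maximalIdeal_eq]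
    exact h
  have hdesc : ∀ p : ℕ, x ^ p ∈ J → (1 : On n) ∈ J := by
    intro p
    induction p with
    | zero => intro h; simpa using h
    | succ p ih =>
      intro h
      apply ih
      have h1 := hDJ _ h
      rw [Derivation.leibniz_pow, Nat.add_sub_cancel, smul_eq_mul] at h1
      have h2 := csmul_mem J ((p + 1 : ℂ)⁻¹) h1
      have hc : (p + 1 : ℂ) ≠ 0 := by exact_mod_cast Nat.succ_ne_zero p
      have h3 : ((p + 1 : ℂ)⁻¹) • ((p + 1) • (x ^ p * VD δ x)) = x ^ p * VD δ x := by
        rw [← Nat.cast_smul_eq_nsmul ℂ, smul_smul]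
        push_cast
        rw [inv_mul_cancel₀ hc, one_smul]
      rw [h3] at h2
      obtain ⟨b, hb⟩ := hu.exists_right_inv
      have h4 := Ideal.mul_mem_right b J h2
      rwa [mul_assoc, hb, mul_one] at h4
  have h1 := hJm (hdesc N (hN (Ideal.pow_mem_pow hx N)))
  exact (inferInstance : (mId n).IsMaximal).ne_top ((Ideal.eq_top_iff_one _).2 h1)

theorem exact_coords {D : Derivation ℂ (On n) (On n)} (hD : ∀ g ∈ mId n, D g ∈ mId n) {f : On n}
    (hf : f ∈ mId n ^ 3) (hDf : D f = f) {N : ℕ} (hN : mId n ^ N ≤ Jac n f) :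
    ∃ w : Fin n → ℚ, (∀ i, 0 < w i ∧ w i < 1/2) ∧ ∃ φ : CoordChange n,
      ∀ k i, coordG i ∈ GE (Stb_pow (conj_stab (pbE φ) hD) k) (w i : ℂ) := by
  obtain ⟨u, l, hu, huspan, huG, htri⟩ := exists_eig_coords hD (k := N + 2) (by omega)
  obtain ⟨φ0, hφ0⟩ := exists_coord u hu huspan
  set σ := pbE φ0 with hσ
  have hσu : ∀ i, σ (u i) = coordG i := fun i => by rw [hσ, pbE_apply]; exact hφ0 i
  set D' := conjD σ D with hD'
  have hD'm := conj_stab σ hD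
  have hx : ∀ i, coordG i ∈ GE (Stb_pow hD'm (N + 2)) (l i) := fun i => by
    rw [← hσu i]; exact conj_GE σ hD (huG i)
  obtain ⟨w, hw, hl⟩ := rational_weights hD'm hx (map_pow_mem σ hf)
    (by rw [conjD_apply', hDf]) (pow_le_Jac_map σ hN) le_rfl
  refine ⟨w, hw, ?_⟩
  have hpe : ∀ i, D' (coordG i) - ((w i : ℝ) : ℂ) • coordG i = σ (D (u i) - l i • u i) := by
    intro i
    rw [map_sub, map_smul, hσu, ← conjD_apply' σ D, hσu, hl i, Complex.ofReal_ratCast]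
  have hker : ∀ i (α : Fin n →₀ ℕ), α.degree < 2 → (∀ j, j < i → co α (coordG j) = 0) →
      co α (D' (coordG i) - ((w i : ℝ) : ℂ) • coordG i) = 0 := by
    intro i α hα hj
    rw [hpe]
    have hle : Submodule.span ℂ (u '' {j | j < i}) ⊔ (mId n ^ 2).restrictScalars ℂ ≤
        LinearMap.ker (co α ∘ₗ σ.toLinearMap) := by
      refine sup_le ?_ ?_
      · rw [Submodule.span_le]
        rintro _ ⟨j, hji, rfl⟩
        change co α (σ (u j)) = 0
        rw [hσu]; exact hj j hji
      · intro g hg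
        change co α (σ g) = 0
        exact mem_pow_iff.1 (map_pow_mem σ hg) α hα
    exact hle (htri i)
  have hco : ∀ (α : Fin n →₀ ℕ) (j : Fin n), α ≠ Finsupp.single j 1 → co α (coordG j) = 0 := by
    intro α j h
    have := co_mon α (Finsupp.single j 1)
    rwa [mon_single, pow_one, if_neg h] at this
  have hy : ∀ i, ∃ y, y ∈ GE (Stb_bot D) (w i : ℂ) ∧ u i - y ∈ mId n ^ 2 := by
    intro i
    obtain ⟨K0, hK0⟩ := dl_surj D' (fun i => (w i : ℝ)) (fun i => by exact_mod_cast (hw i).1)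
      (fun i => hker i 0 (by simp) fun j _ => hco _ _ (by
        intro h
        have := congrArg Finsupp.degree h
        simp at this))
      (fun i j hij => hker i _ (by rw [Finsupp.degree_single]; norm_num) fun j' hj' => hco _ _ (by
        intro h
        rw [Finsupp.single_left_inj one_ne_zero] at h
        subst h
        exact absurd hj' (not_lt.2 hij))) hD'm (w i : ℂ)
    have hxi := hx i
    rw [hl i] at hxi
    obtain ⟨u', hu'm, hu'G, hu'⟩ := GE_lift hD'm (le_max_left (N + 2) K0) (coordG_mem i) hxi
    obtain ⟨y', hy'G, hy'⟩ := exactify (hK0 (max (N + 2) K0) (le_max_right _ _)) hu'G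
    refine ⟨σ.symm y', ?_, ?_⟩
    · obtain ⟨p, hp⟩ := mem_GE.1 hy'G
      refine mem_GE.2 ⟨p, ?_⟩
      rw [Ideal.mem_bot] at hp ⊢
      apply σ.injective
      rw [← conj_dl_pow, σ.apply_symm_apply, map_zero]
      exact hp
    · rw [← map_pow_mem_iff σ, map_sub, σ.apply_symm_apply, hσu]
      have h1 : coordG i - u' ∈ mId n ^ 2 := Ideal.pow_le_pow_right (by omega) hu'
      have h2 : u' - y' ∈ mId n ^ 2 := Ideal.pow_le_pow_right (le_max_of_le_left (by omega)) hy'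
      have := add_mem h1 h2
      rwa [sub_add_sub_cancel] at this
  choose y hyG hyu using hy
  have hym : ∀ i, y i ∈ mId n := by
    intro i
    have h1 : u i - y i ∈ mId n := Ideal.pow_le_self (by norm_num) (hyu i)
    have := sub_mem (hu i) h1
    rwa [sub_sub_cancel] at this
  have hyspan : mId n ≤ Ideal.span (Set.range y) ⊔ mId n ^ 2 := by
    refine huspan.trans (sup_le ?_ le_sup_right)
    rw [Ideal.span_le]
    rintro _ ⟨i, rfl⟩
    have e : u i = y i + (u i - y i) := by ring
    rw [e]
    exact add_mem (Ideal.mem_sup_left (Ideal.subset_span ⟨i, rfl⟩)) (Ideal.mem_sup_right (hyu i))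
  obtain ⟨φ, hφ⟩ := exists_coord y hym hyspan
  refine ⟨φ, fun k i => ?_⟩
  rw [← hφ i, ← pbE_apply]
  exact conj_GE (pbE φ) hD (GE_mono (Stb_bot D) (Stb_pow hD k) bot_le _ (hyG i))

lemma co_euler (i : Fin n) (g : On n) (α : Fin n →₀ ℕ) :
    co α (coordG i * pd i g) = (α i : ℂ) * co α g := by
  classical
  by_cases hi : α i = 0
  · rw [hi, co_def, map_mul, TT_coordG, coeff_X_mul', if_pos hi]; simp
  · have hle : Finsupp.single i 1 ≤ α := by
      rw [Finsupp.single_le_iff]; omega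
    have e := tsub_add_cancel_of_le hle
    rw [co_def, map_mul, TT_coordG, coeff_X_mul', if_neg hi, ← co_def, co_pd, e]
    have e2 : ((α - Finsupp.single i 1 : Fin n →₀ ℕ) i : ℂ) + 1 = α i := by
      have : (α - Finsupp.single i 1 : Fin n →₀ ℕ) i + 1 = α i := by
        simp; omega
      exact_mod_cast this
    rw [e2, mul_comm]

lemma isQH_of {w : Fin n → ℚ} {d : ℚ} {g : On n}
    (h : ∀ α, co α g ≠ 0 → wt (fun i => (w i : ℂ)) α = (d : ℂ)) : IsQH n w d g := by
  unfold IsQH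
  apply co_ext
  intro α
  rw [map_sum, map_smul, smul_eq_mul]
  have h1 : ∀ i, co α ((w i : ℂ) • (coordG i * pd i g)) = ((α i : ℂ) * w i) * co α g := by
    intro i
    rw [map_smul, co_euler, smul_eq_mul]; ring
  rw [Finset.sum_congr rfl fun i _ => h1 i, ← Finset.sum_mul]
  by_cases h0 : co α g = 0
  · rw [h0]; simp
  · rw [← h α h0]; rfl

lemma krull_closed {R : Type*} [CommRing R] [IsLocalRing R] [IsNoetherianRing R] (I : Ideal R) {g : R}
    (h : ∀ k : ℕ, g ∈ I ⊔ IsLocalRing.maximalIdeal R ^ k) : g ∈ I := by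
  have h1 := Ideal.iInf_pow_smul_eq_bot_of_isLocalRing (M := R ⧸ I) (IsLocalRing.maximalIdeal R)
    (IsLocalRing.maximalIdeal.isMaximal R).ne_top
  have h2 : Ideal.Quotient.mk I g ∈ (⨅ i : ℕ, IsLocalRing.maximalIdeal R ^ i • ⊤ : Submodule R (R ⧸ I)) := by
    rw [Submodule.mem_iInf]
    intro k
    obtain ⟨a, ha, b, hb, rfl⟩ := Submodule.mem_sup.1 (h k)
    rw [map_add, Ideal.Quotient.eq_zero_iff_mem.2 ha, zero_add]
    have : Ideal.Quotient.mk I b = b • (1 : R ⧸ I) := by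
      rw [Algebra.smul_def, mul_one]; rfl
    rw [this]
    exact Submodule.smul_mem_smul hb trivial
  rw [h1, Submodule.mem_bot] at h2
  exact Ideal.Quotient.eq_zero_iff_mem.1 h2

lemma krull_closed' (I : Ideal (On n)) {g : On n} (h : ∀ k : ℕ, g ∈ I ⊔ mId n ^ k) : g ∈ I := by
  rw [← maximalIdeal_eq] at h
  exact krull_closed I h

lemma finite_wt {w : Fin n → ℚ} (hw : ∀ i, 0 < w i) (lam : ℂ) :
    {α : Fin n →₀ ℕ | wt (fun i => (w i : ℂ)) α = lam}.Finite := by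
  obtain ⟨ω, hω, hωw⟩ := exists_lower (fun i => (w i : ℝ)) (fun i => by exact_mod_cast hw i)
  have hfin : {α : Fin n →₀ ℕ | α.degree < ⌈2 * ‖lam‖ / ω⌉₊ + 1}.Finite := finite_degree_lt _
  refine hfin.subset fun α hα => ?_
  by_contra hc
  have hc' : ⌈2 * ‖lam‖ / ω⌉₊ + 1 ≤ α.degree := by simpa using hc
  have h1 : 2 * ‖lam‖ / ω ≤ α.degree :=
    (Nat.le_ceil _).trans (by exact_mod_cast (by omega : ⌈2 * ‖lam‖ / ω⌉₊ ≤ α.degree))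
  have h2 := wt_lower hω hωw lam h1
  have h3 : wt (fun i => (((w i : ℝ)) : ℂ)) α = lam := by
    simpa using hα
  rw [h3, sub_self, norm_zero] at h2
  have h4 : (1 : ℝ) ≤ α.degree := by exact_mod_cast (by omega : 1 ≤ α.degree)
  nlinarith

lemma exists_comp {w : Fin n → ℚ} (hw : ∀ i, 0 < w i) (lam : ℂ) (g : On n) : ∃ c : On n, ∀ α,
    co α c = if wt (fun i => (w i : ℂ)) α = lam then co α g else 0 := by
  classical
  refine ⟨∑ α ∈ (finite_wt hw lam).toFinset, co α g • mon coordG α, fun α => ?_⟩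
  rw [map_sum]
  have : ∀ β, co α (co β g • mon coordG β) = if α = β then co β g else 0 := by
    intro β
    rw [map_smul, co_mon, smul_eq_mul]; split_ifs <;> simp
  rw [Finset.sum_congr rfl fun β _ => this β, Finset.sum_ite_eq]
  simp

lemma comp_mem {E : Derivation ℂ (On n) (On n)} (hE : ∀ g ∈ mId n, E g ∈ mId n) {l : Fin n → ℂ}
    (hx : ∀ k i, coordG i ∈ GE (Stb_pow hE k) (l i)) (I : Ideal (On n)) (hI : ∀ g ∈ I, E g ∈ I)
    {g c : On n} (hg : g ∈ I) {lam : ℂ} (hc : ∀ α, co α c = if wt l α = lam then co α g else 0) : c ∈ I := by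
  refine krull_closed' I fun k => ?_
  have h1 := GE_decomp (Stb_pow hE k) (I.restrictScalars ℂ) hI hg
  obtain ⟨a, ha, b, hb, hab⟩ := Submodule.mem_sup.1 h1
  obtain ⟨F, hF, hFs⟩ := (Submodule.mem_iSup_iff_exists_finsupp _ _).1 ha
  have hFc : ∀ μ (α : Fin n →₀ ℕ), α.degree < k → co α (F μ) ≠ 0 → wt l α = μ := fun μ α hα h =>
    GE_coef (hx k) (hF μ).2 α hα h
  have hga : ∀ α : Fin n →₀ ℕ, α.degree < k → co α g = co α (F (wt l α)) := by
    intro α hα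
    rw [← hab, map_add, mem_pow_iff.1 hb α hα, add_zero, ← hFs, Finsupp.sum, map_sum]
    refine Finset.sum_eq_single _ ?_ ?_
    · intro μ _ hμ
      by_contra h
      exact hμ (hFc μ α hα h).symm
    · intro h
      rw [Finsupp.notMem_support_iff.1 h, map_zero]
  have e : c = F lam + (c - F lam) := by ring
  rw [e]
  refine add_mem (Ideal.mem_sup_left (hF lam).1) (Ideal.mem_sup_right (mem_pow_iff.2 fun α hα => ?_))
  rw [map_sub, hc]
  split_ifs with h
  · rw [hga α hα, h, sub_self]
  · have : co α (F lam) = 0 := by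
      by_contra h'
      exact h (hFc lam α hα h')
    rw [this, sub_zero]

theorem relQH_of {D : Derivation ℂ (On n) (On n)} (hD : ∀ g ∈ mId n, D g ∈ mId n) {X : Set (Fin n → ℂ)}
    (hX : (0 : Fin n → ℂ) ∈ X) {f : On n} (hDf : D f = f) (hDI : ∀ g ∈ IX n X, D g ∈ IX n X)
    {w : Fin n → ℚ} (hw : ∀ i, 0 < w i) (φ : CoordChange n)
    (hx : ∀ k i, coordG i ∈ GE (Stb_pow (conj_stab (pbE φ) hD) k) (w i : ℂ)) : RelQH n X f w := by
  classical
  set τ := pbE φ with hτ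
  set S : Set (On n) := {c | c ∈ IX n X ∧ ∃ d : ℚ, 0 < d ∧ IsQH n w d (τ c)} with hS
  have hspan : Ideal.span S = IX n X := by
    apply le_antisymm
    · rw [Ideal.span_le]; exact fun c hc => hc.1
    · intro g hg
      refine krull_closed' _ fun k => ?_
      choose cmp hcmp using fun lam : ℂ => exists_comp hw lam (τ g)
      set I' : Ideal (On n) := (IX n X).comap (τ.symm : On n ≃ₐ[ℂ] On n) with hI'
      have hI'm : ∀ c, c ∈ I' ↔ τ.symm c ∈ IX n X := fun c => Iff.rfl
      have hcI : ∀ lam, τ.symm (cmp lam) ∈ IX n X := by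
        intro lam
        rw [← hI'm]
        refine comp_mem (conj_stab τ hD) hx I' ?_ ?_ (hcmp lam)
        · intro c hc
          rw [hI'm] at hc ⊢
          rw [conjD_apply, τ.symm_apply_apply]
          exact hDI _ hc
        · rw [hI'm, τ.symm_apply_apply]; exact hg
      have hcS : ∀ lam, τ.symm (cmp lam) ∈ Ideal.span S := by
        intro lam
        by_cases h0 : cmp lam = 0
        · rw [h0, map_zero]; exact zero_mem _
        obtain ⟨α, hα⟩ : ∃ α, co α (cmp lam) ≠ 0 := by
          by_contra hh
          push Not at hh
          exact h0 (co_ext fun α => by rw [hh α, map_zero])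
        have hwt : ∀ β, co β (cmp lam) ≠ 0 → wt (fun i => (w i : ℂ)) β = lam := by
          intro β hβ
          by_contra h
          rw [hcmp, if_neg h] at hβ
          exact hβ rfl
        have hα0 : α ≠ 0 := by
          rintro rfl
          apply hα
          have h1 : cmp lam ∈ mId n := (map_mId τ.symm).1 (IX_le_mId hX (hcI lam))
          exact mem_mId_iff.1 h1
        refine Ideal.subset_span ⟨hcI lam, ∑ i, (α i : ℚ) * w i, ?_, ?_⟩
        · obtain ⟨i, hi⟩ := Finsupp.ne_iff.1 hα0
          refine Finset.sum_pos' (fun j _ => mul_nonneg (Nat.cast_nonneg _) (hw j).le) ⟨i, Finset.mem_univ i, ?_⟩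
          exact mul_pos (by exact_mod_cast Nat.pos_of_ne_zero hi) (hw i)
        · rw [τ.apply_symm_apply]
          refine isQH_of fun β hβ => ?_
          rw [hwt β hβ, ← hwt α hα, wt]
          push_cast
          rfl
      have hfin : {α : Fin n →₀ ℕ | α.degree < k}.Finite := finite_degree_lt _
      set T : Finset ℂ := hfin.toFinset.image (wt fun i => (w i : ℂ)) with hT
      have e : g = ∑ lam ∈ T, τ.symm (cmp lam) + (g - ∑ lam ∈ T, τ.symm (cmp lam)) := by ring
      rw [e]
      refine add_mem (Ideal.mem_sup_left (sum_mem fun lam _ => hcS lam)) (Ideal.mem_sup_right ?_)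
      rw [← map_pow_mem_iff τ, map_sub, map_sum]
      refine mem_pow_iff.2 fun α hα => ?_
      rw [map_sub, map_sum]
      have h1 : ∀ lam, co α (τ (τ.symm (cmp lam))) = if wt (fun i => (w i : ℂ)) α = lam then co α (τ g) else 0 := by
        intro lam
        rw [τ.apply_symm_apply, hcmp]
      rw [Finset.sum_congr rfl fun lam _ => h1 lam, Finset.sum_ite_eq, if_pos, sub_self]
      exact Finset.mem_image_of_mem _ (by simpa using hα)
  refine ⟨φ, ?_, ?_⟩
  · rw [← pbE_apply]
    refine isQH_of fun α hα => ?_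
    have hG : τ f ∈ GE (Stb_pow (conj_stab τ hD) (α.degree + 1)) 1 := mem_GE.2 ⟨1, by
      rw [pow_one, dl_apply, conjD_apply', hDf, one_smul, sub_self]; exact zero_mem _⟩
    rw [GE_coef (hx (α.degree + 1)) hG α (by omega) hα]
    simp
  · have hfg : (Ideal.span S).FG := IsNoetherian.noetherian _
    obtain ⟨s, hs, hss⟩ := (Submodule.fg_span_iff_fg_span_finset_subset S).1 hfg
    have hsd : ∀ j : Fin s.card, ∃ d : ℚ, 0 < d ∧ IsQH n w d (τ (s.equivFin.symm j)) :=
      fun j => (hs (s.equivFin.symm j).2).2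
    choose d hd hq using hsd
    refine ⟨s.card, fun j => (s.equivFin.symm j : On n), d, ?_, hd, fun j => by rw [← pbE_apply]; exact hq j⟩
    rw [← hspan]
    have hr : (Set.range fun j => (s.equivFin.symm j : On n)) = (s : Set (On n)) := by
      ext x
      constructor
      · rintro ⟨j, rfl⟩; exact (s.equivFin.symm j).2
      · intro hx
        exact ⟨s.equivFin ⟨x, hx⟩, by simp⟩
    rw [hr]
    exact hss.symm

/-- **Theorem 4.1** (part (a) of Theorem 1.3): if `f ∈ 𝔪³`, `μ_X(f) < ∞` and
`μ_X(f) = τ_X(f)`, then the pair `(f, X)` is relatively quasihomogeneous with respect to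
a system of weights `w ∈ ((0, 1/2) ∩ ℚ)ⁿ`. -/
theorem relative_saito_of_mem_m3 (n : ℕ) (X : Set (Fin n → ℂ))
    (hX : IsAnalyticGermAt0 n X) (f : On n) (hf : f ∈ (mId n) ^ 3)
    (hfin : FiniteDimensional ℂ (On n ⧸ BRIdeal n X f))
    (heq : muX n X f = tauX n X f) :
    ∃ w : Fin n → ℚ, (∀ i, 0 < w i ∧ w i < 1 / 2) ∧ RelQH n X f w := by
  obtain ⟨D, N, hD, hDf, hDI, hN⟩ := log_field X f hf hfin heq
  obtain ⟨w, hw, φ, hx⟩ := exact_coords hD hf hDf hN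
  exact ⟨w, hw, relQH_of hD hX.1 hDf hDI (fun i => (hw i).1) φ hx⟩

end
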